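/- arXiv:1311.5163 — 4 statements merged into one kernel-verified Lean document; each statement's English description precedes it below -/
import Mathlib

section
/- Let p be an odd prime, r > 1 an integer, and K an abelian number field of conductor p^r, of degree n over ℚ and with D_K the absolute value of the discriminant of K. Then M(K) ≤ 2^{-n} · √(D_K). -/
open NumberField

/-- The Euclidean minimum of a number field `K`:
`M(K) = sup_{x ∈ K} inf_{c ∈ O_K} |N_{K/ℚ}(x − c)|`. -/
noncomputable def euclideanMinimum (K : Type*) [Field K] [NumberField K] : ℝ :=
  ⨆ x : K, ⨅ c : 𝓞 K, |((Algebra.norm ℚ (x - (c : K)) : ℚ) : ℝ)|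

/-- A number field `K` has conductor `f` if `f` is the smallest positive integer such that
`K` embeds into the `f`-th cyclotomic field `ℚ(ζ_f)`.  (Such a `K` is automatically an
abelian extension of `ℚ`.) -/
def HasConductor (K : Type*) [Field K] [NumberField K] (f : ℕ+) : Prop :=
  Nonempty (K →ₐ[ℚ] CyclotomicField f ℚ) ∧
    ∀ m : ℕ+, Nonempty (K →ₐ[ℚ] CyclotomicField m ℚ) → f ≤ m

/-!
Let `L = ℚ(ζ)` be the cyclotomic field of conductor `m = p ^ r`, containing `K`, and put
`q = p ^ (r - 1)`. Write `z ∈ K` as `∑ i, x i * ζ ^ i` with `i` in `ZMod m` and with rational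
coordinates invariant under `Gal(L/K)`, and round each `x i` to `round (x i - t)`: the rounded
element is again `Gal(L/K)`-invariant, so it lies in `𝓞 K`. Applying an embedding of `L` to the
error evaluates the Fourier transform of the remainders at a character of `ZMod m` that does not
factor through `ZMod q`. Parseval's identity thus bounds the sum over all embeddings by `m` times
the square norm of the remainders minus the contribution of the characters of `ZMod q`, whose mean
over `t` can be computed because a sum of `p` fractional parts has mean square at least `1 / 12`.
The inequality of arithmetic and geometric means turns this into
`M(K) ^ 2 ≤ (p ^ (r - 1) * (p + 1) / 12) ^ n`.

Finally, `[L : K]` is prime to `p` because the conductor of `K` is not a divisor of `q` and `L / ℚ`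
is cyclic, so that `L / K` is tame at `p`. The relative different then divides a product of
`[L : K] - 1` elements of norm `p`, and the discriminant of `L` gives
`(p ^ (r - 1) * (p + 1) / 3) ^ n ≤ |D_K|`.
-/

section Rounding

open MeasureTheory

theorem norm_coe_unitAddCircle_le_abs (x : ℝ) : ‖(x : UnitAddCircle)‖ ≤ |x| := by
  simpa [UnitAddCircle.norm_eq] using round_le x 0

theorem integral_norm_sq_unitAddCircle : ∫ t : UnitAddCircle, ‖t‖ ^ 2 = 1 / 12 := by
  rw [← UnitAddCircle.intervalIntegral_preimage (-(1 / 2))]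
  have norm_eq_abs : Set.EqOn (fun t : ℝ ↦ ‖(t : UnitAddCircle)‖ ^ 2) (fun t ↦ t ^ 2)
      (Set.uIcc (-(1 / 2)) (-(1 / 2) + 1)) := by
    intro t ht
    rw [Set.uIcc_of_le (by norm_num), Set.mem_Icc] at ht
    have : |t| ≤ |(1 : ℝ)| / 2 := by rw [abs_one, abs_le]; constructor <;> linarith
    simp only [(AddCircle.norm_coe_eq_abs_iff 1 one_ne_zero).2 this, sq_abs]
  rw [intervalIntegral.integral_congr norm_eq_abs, integral_pow]
  norm_num

theorem integral_norm_sub_nsmul_sq (a : UnitAddCircle) {n : ℕ} (hn : n ≠ 0) :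
    ∫ t : UnitAddCircle, ‖a - n • t‖ ^ 2 = 1 / 12 := by
  have hmap : MeasurePreserving (fun t : UnitAddCircle ↦ (n : ℤ) • t) :=
    Measure.measurePreserving_zsmul volume (by exact_mod_cast hn)
  have hcont : Continuous fun t : UnitAddCircle ↦ ‖a - t‖ ^ 2 := by fun_prop
  calc ∫ t : UnitAddCircle, ‖a - n • t‖ ^ 2
      = ∫ t, ‖a - t‖ ^ 2 ∂volume.map fun t : UnitAddCircle ↦ (n : ℤ) • t := by
        rw [integral_map hmap.aemeasurable hcont.aestronglyMeasurable]
        simp only [natCast_zsmul]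
    _ = ∫ t : UnitAddCircle, ‖t‖ ^ 2 := by
        rw [hmap.map_eq]
        exact integral_sub_left_eq_self (fun t : UnitAddCircle ↦ ‖t‖ ^ 2) volume a
    _ = 1 / 12 := integral_norm_sq_unitAddCircle

theorem norm_sum_sub_card_nsmul_le {ι : Type*} (s : Finset ι) (x : ι → ℝ) (t : ℝ) :
    ‖((∑ i ∈ s, x i : ℝ) : UnitAddCircle) - s.card • (t : UnitAddCircle)‖ ≤
      |∑ i ∈ s, (x i - t - round (x i - t))| := by
  have hcoe : ((∑ i ∈ s, (x i - t - round (x i - t)) : ℝ) : UnitAddCircle) =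
      ((∑ i ∈ s, x i : ℝ) : UnitAddCircle) - s.card • (t : UnitAddCircle) := by
    rw [← AddCircle.coe_nsmul, ← AddCircle.coe_sub, ← sub_eq_zero, ← AddCircle.coe_sub,
      AddCircle.coe_eq_zero_iff]
    exact ⟨-∑ i ∈ s, round (x i - t), by simp⟩
  simpa only [hcoe] using norm_coe_unitAddCircle_le_abs (∑ i ∈ s, (x i - t - round (x i - t)))

theorem exists_sum_norm_sub_sq_sub_sum_norm_sub_nsmul_sq_le {ι κ : Type*} [Fintype ι] [Fintype κ]
    (c : ℝ) (a : ι → UnitAddCircle) (b : κ → UnitAddCircle) {n : κ → ℕ} (hn : ∀ k, n k ≠ 0) :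
    ∃ t : UnitAddCircle, c * ∑ i, ‖a i - t‖ ^ 2 - ∑ k, ‖b k - n k • t‖ ^ 2 ≤
      (c * Fintype.card ι - Fintype.card κ) / 12 := by
  have hint {u : UnitAddCircle → ℝ} (hu : Continuous u) : Integrable u :=
    hu.integrable_of_hasCompactSupport (HasCompactSupport.of_compactSpace u)
  have hmean : ∫ t : UnitAddCircle, (c * ∑ i, ‖a i - t‖ ^ 2 - ∑ k, ‖b k - n k • t‖ ^ 2) =
      (c * Fintype.card ι - Fintype.card κ) / 12 := by
    have hone (i : ι) : ∫ t : UnitAddCircle, ‖a i - t‖ ^ 2 = 1 / 12 := by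
      simpa using integral_norm_sub_nsmul_sq (a i) one_ne_zero
    rw [integral_sub (hint (by fun_prop)) (hint (by fun_prop)), integral_const_mul,
      integral_finsetSum _ fun i _ ↦ hint (by fun_prop),
      integral_finsetSum _ fun k _ ↦ hint (by fun_prop)]
    simp only [hone, integral_norm_sub_nsmul_sq _ (hn _), Finset.sum_const, Finset.card_univ,
      nsmul_eq_mul]
    ring
  have : IsProbabilityMeasure (volume : Measure UnitAddCircle) := ⟨UnitAddCircle.measure_univ⟩
  rw [← hmean]
  exact exists_le_integral (hint (by fun_prop))

theorem exists_sum_sub_round_sq_sub_sum_fiber_sq_le {ι κ : Type*} [Fintype ι] [Fintype κ]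
    [DecidableEq κ] {f : ι → κ} (hf : Function.Surjective f) (c : ℝ) (x : ι → ℝ) :
    ∃ t : ℝ, c * ∑ i, (x i - t - round (x i - t)) ^ 2 -
      ∑ k, (∑ i with f i = k, (x i - t - round (x i - t))) ^ 2 ≤
        (c * Fintype.card ι - Fintype.card κ) / 12 := by
  have card_fiber_ne_zero (k : κ) : Finset.card {i | f i = k} ≠ 0 := by
    obtain ⟨i, hi⟩ := hf k
    exact Finset.card_ne_zero.2 ⟨i, by simpa using hi⟩
  obtain ⟨t, ht⟩ := exists_sum_norm_sub_sq_sub_sum_norm_sub_nsmul_sq_le c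
    (fun i ↦ (x i : UnitAddCircle)) (fun k ↦ ((∑ i with f i = k, x i : ℝ) : UnitAddCircle))
    card_fiber_ne_zero
  obtain ⟨t, rfl⟩ := QuotientAddGroup.mk_surjective t
  refine ⟨t, le_trans ?_ ht⟩
  have hdist (i : ι) : (x i - t - round (x i - t)) ^ 2 =
      ‖(x i : UnitAddCircle) - (t : UnitAddCircle)‖ ^ 2 := by
    rw [← AddCircle.coe_sub, UnitAddCircle.norm_eq, sq_abs]
  simp only [hdist]
  refine sub_le_sub_left (Finset.sum_le_sum fun k _ ↦ sq_le_sq.2 ?_) _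
  exact (abs_norm _).trans_le (norm_sum_sub_card_nsmul_le _ x t)

end Rounding

section Parseval

variable {G H : Type*} [AddCommGroup G] [Fintype G] [AddCommGroup H] [Fintype H]

theorem sum_norm_sum_mul_addChar_sq (y : G → ℂ) :
    ∑ ψ : AddChar G ℂ, ‖∑ g, y g * ψ g‖ ^ 2 = Fintype.card G * ∑ g, ‖y g‖ ^ 2 := by
  classical
  have hterm (ψ : AddChar G ℂ) (g h : G) :
      y g * ψ g * (starRingEnd ℂ (y h) * ψ (-h)) = y g * starRingEnd ℂ (y h) * ψ (g - h) := by
    rw [sub_eq_add_neg, AddChar.map_add_eq_mul]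
    ring
  apply Complex.ofReal_injective
  calc ((∑ ψ : AddChar G ℂ, ‖∑ g, y g * ψ g‖ ^ 2 : ℝ) : ℂ)
      = ∑ ψ : AddChar G ℂ, ∑ g, ∑ h, y g * starRingEnd ℂ (y h) * ψ (g - h) := by
        push_cast
        simp_rw [← Complex.mul_conj', map_sum, map_mul, ← AddChar.map_neg_eq_conj,
          Finset.sum_mul_sum, hterm]
    _ = ∑ g, ∑ h, y g * starRingEnd ℂ (y h) * ∑ ψ : AddChar G ℂ, ψ (g - h) := by
        rw [Finset.sum_comm]
        refine Finset.sum_congr rfl fun g _ ↦ ?_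
        rw [Finset.sum_comm]
        simp_rw [Finset.mul_sum]
    _ = ((Fintype.card G * ∑ g, ‖y g‖ ^ 2 : ℝ) : ℂ) := by
        simp [AddChar.sum_apply_eq_ite, sub_eq_zero, Complex.mul_conj', Finset.mul_sum, mul_comm]

theorem sum_norm_sum_mul_compAddMonoidHom_sq [DecidableEq H] (π : G →+ H) (y : G → ℂ) :
    ∑ χ : AddChar H ℂ, ‖∑ g, y g * χ.compAddMonoidHom π g‖ ^ 2 =
      Fintype.card H * ∑ h, ‖∑ g with π g = h, y g‖ ^ 2 := by
  rw [← sum_norm_sum_mul_addChar_sq]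
  refine Finset.sum_congr rfl fun χ _ ↦ ?_
  congr 2
  rw [← Finset.sum_fiberwise Finset.univ π]
  refine Finset.sum_congr rfl fun h _ ↦ ?_
  rw [Finset.sum_mul]
  refine Finset.sum_congr rfl fun g hg ↦ ?_
  rw [AddChar.compAddMonoidHom_apply, (Finset.mem_filter.1 hg).2]

theorem sum_norm_sum_mul_addChar_sq_le [DecidableEq H] {π : G →+ H}
    (hπ : Function.Surjective π) {A : Finset (AddChar G ℂ)}
    (hA : ∀ χ : AddChar H ℂ, χ.compAddMonoidHom π ∉ A) (y : G → ℂ) :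
    ∑ ψ ∈ A, ‖∑ g, y g * ψ g‖ ^ 2 ≤
      Fintype.card G * ∑ g, ‖y g‖ ^ 2 - Fintype.card H * ∑ h, ‖∑ g with π g = h, y g‖ ^ 2 := by
  classical
  let B : Finset (AddChar G ℂ) := Finset.univ.image fun χ : AddChar H ℂ ↦ χ.compAddMonoidHom π
  have hB : ∑ ψ ∈ B, ‖∑ g, y g * ψ g‖ ^ 2 =
      Fintype.card H * ∑ h, ‖∑ g with π g = h, y g‖ ^ 2 := by
    rw [← sum_norm_sum_mul_compAddMonoidHom_sq,
      Finset.sum_image (AddChar.compAddMonoidHom_injective_left π hπ).injOn]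
  have hAB : Disjoint A B := Finset.disjoint_right.2 fun ψ hψ ↦ by
    obtain ⟨χ, -, rfl⟩ := Finset.mem_image.1 hψ
    exact hA χ
  rw [← hB, ← sum_norm_sum_mul_addChar_sq, le_sub_iff_add_le, ← Finset.sum_union hAB]
  exact Finset.sum_le_sum_of_subset_of_nonneg (Finset.subset_univ _) fun _ _ _ ↦ by positivity

theorem sum_sub_mul_addChar {ψ : AddChar G ℂ} (hψ : ψ ≠ 0) (y : G → ℂ) (c : ℂ) :
    ∑ g, (y g - c) * ψ g = ∑ g, y g * ψ g := by
  simp [sub_mul, Finset.sum_sub_distrib, ← Finset.mul_sum, AddChar.sum_eq_zero_iff_ne_zero.2 hψ]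

theorem exists_sum_norm_sum_sub_round_mul_addChar_sq_le {π : G →+ H}
    (hπ : Function.Surjective π) {A : Finset (AddChar G ℂ)}
    (hA : ∀ χ : AddChar H ℂ, χ.compAddMonoidHom π ∉ A) (x : G → ℝ) :
    ∃ t : ℝ, ∑ ψ ∈ A, ‖∑ g, ((x g - round (x g - t) : ℝ) : ℂ) * ψ g‖ ^ 2 ≤
      ((Fintype.card G : ℝ) ^ 2 - (Fintype.card H : ℝ) ^ 2) / 12 := by
  classical
  have card_pos : (0 : ℝ) < Fintype.card H := by exact_mod_cast Fintype.card_pos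
  obtain ⟨t, ht⟩ := exists_sum_sub_round_sq_sub_sum_fiber_sq_le hπ
    (Fintype.card G / Fintype.card H) x
  have hne {ψ : AddChar G ℂ} (hψ : ψ ∈ A) : ψ ≠ 0 := by
    rintro rfl
    exact hA 0 hψ
  refine ⟨t, ?_⟩
  calc ∑ ψ ∈ A, ‖∑ g, ((x g - round (x g - t) : ℝ) : ℂ) * ψ g‖ ^ 2
      = ∑ ψ ∈ A, ‖∑ g, ((x g - t - round (x g - t) : ℝ) : ℂ) * ψ g‖ ^ 2 := by
        refine Finset.sum_congr rfl fun ψ hψ ↦ ?_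
        rw [← sum_sub_mul_addChar (hne hψ) _ (t : ℂ)]
        push_cast
        simp only [sub_right_comm]
    _ ≤ Fintype.card G * ∑ g, (x g - t - round (x g - t)) ^ 2 -
          Fintype.card H * ∑ h, (∑ g with π g = h, (x g - t - round (x g - t))) ^ 2 := by
        refine (sum_norm_sum_mul_addChar_sq_le hπ hA _).trans_eq ?_
        simp only [← Complex.ofReal_sum, Complex.norm_real, Real.norm_eq_abs, sq_abs]
    _ ≤ ((Fintype.card G : ℝ) ^ 2 - (Fintype.card H : ℝ) ^ 2) / 12 := by
        have h := mul_le_mul_of_nonneg_left ht card_pos.le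
        field_simp at h ⊢
        linarith

end Parseval

section CyclotomicSum

variable {m : ℕ} [NeZero m] {L : Type*} [Field L] [CharZero L]

/-- The combination `∑ i, x i • ζ ^ i` of the powers of an `m`-th root of unity `ζ`, indexed
by `ZMod m` so that Galois automorphisms permute the coordinates linearly. The powers are linearly
dependent, so the coordinates `x` of a number are far from unique. -/
noncomputable def cyclotomicSum (m : ℕ) [NeZero m] (ζ : L) : (ZMod m → ℚ) →ₗ[ℚ] L :=
  Fintype.linearCombination ℚ fun i ↦ ζ ^ i.val

theorem cyclotomicSum_apply (ζ : L) (x : ZMod m → ℚ) :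
    cyclotomicSum m ζ x = ∑ i, (x i : L) * ζ ^ i.val := by
  simp [cyclotomicSum, Fintype.linearCombination_apply, Algebra.smul_def]

theorem isIntegral_cyclotomicSum {ζ : L} (hζ : IsPrimitiveRoot ζ m) (c : ZMod m → ℤ) :
    IsIntegral ℤ (cyclotomicSum m ζ fun i ↦ c i) := by
  rw [cyclotomicSum_apply]
  refine IsIntegral.sum _ fun i _ ↦ .mul ?_ ((hζ.isIntegral (NeZero.pos m)).pow _)
  simpa using isIntegral_algebraMap (R := ℤ) (A := L) (x := c i)

theorem cyclotomicSum_surjective [IsCyclotomicExtension {m} ℚ L] {ζ : L}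
    (hζ : IsPrimitiveRoot ζ m) : Function.Surjective (cyclotomicSum m ζ) := by
  have hpow (k : ℕ) : ζ ^ k ∈ LinearMap.range (cyclotomicSum m ζ) := by
    refine ⟨Pi.single (k : ZMod m) 1, ?_⟩
    rw [cyclotomicSum, Fintype.linearCombination_apply_single, one_smul, ZMod.val_natCast,
      hζ.eq_orderOf, pow_mod_orderOf]
  intro z
  have hz : z ∈ Algebra.adjoin ℚ {ζ} := by
    simp [IsCyclotomicExtension.adjoin_primitive_root_eq_top hζ]
  obtain ⟨f, rfl⟩ := Algebra.adjoin_singleton_eq_range_aeval ℚ ζ ▸ hz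
  rw [← LinearMap.mem_range, AlgHom.toRingHom_eq_coe, RingHom.coe_coe,
    Polynomial.aeval_eq_sum_range]
  exact Submodule.sum_mem _ fun k _ ↦ Submodule.smul_mem _ _ (hpow k)

end CyclotomicSum

section Embeddings

variable {m : ℕ} [NeZero m] {L : Type*} [Field L] [CharZero L] {ζ : L}

/-- The additive character `i ↦ σ ζ ^ i` of `ZMod m` by which an embedding `σ` acts on the powers
of an `m`-th root of unity `ζ`. -/
noncomputable def embeddingChar (hζ : IsPrimitiveRoot ζ m) (σ : L →ₐ[ℚ] ℂ) :
    AddChar (ZMod m) ℂ :=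
  AddChar.zmodChar m (hζ.map_of_injective σ.injective).pow_eq_one

theorem embeddingChar_natCast (hζ : IsPrimitiveRoot ζ m) (σ : L →ₐ[ℚ] ℂ) (k : ℕ) :
    embeddingChar hζ σ k = σ ζ ^ k :=
  AddChar.zmodChar_apply' _ k

theorem map_cyclotomicSum_eq_sum_embeddingChar (hζ : IsPrimitiveRoot ζ m) (σ : L →ₐ[ℚ] ℂ)
    (x : ZMod m → ℚ) : σ (cyclotomicSum m ζ x) = ∑ i, (x i : ℂ) * embeddingChar hζ σ i := by
  simp [cyclotomicSum_apply, embeddingChar, AddChar.zmodChar_apply]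

theorem embeddingChar_injective [IsCyclotomicExtension {m} ℚ L] (hζ : IsPrimitiveRoot ζ m) :
    Function.Injective (embeddingChar hζ) := by
  intro σ τ h
  have : σ ζ = τ ζ := by
    simpa only [embeddingChar_natCast, pow_one] using DFunLike.congr_fun h ((1 : ℕ) : ZMod m)
  exact (hζ.powerBasis ℚ).algHom_ext (by simpa using this)

theorem compAddMonoidHom_castHom_ne_embeddingChar {q : ℕ} (hqm : q ∣ m) (hne : q ≠ m)
    (hζ : IsPrimitiveRoot ζ m) (σ : L →ₐ[ℚ] ℂ) (χ : AddChar (ZMod q) ℂ) :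
    χ.compAddMonoidHom (ZMod.castHom hqm (ZMod q)).toAddMonoidHom ≠ embeddingChar hζ σ := by
  intro h
  have pow_eq_one : σ ζ ^ q = 1 := by
    have := DFunLike.congr_fun h (q : ZMod m)
    rw [embeddingChar_natCast] at this
    rw [← this]
    simp
  exact hne <| Nat.dvd_antisymm hqm <|
    (hζ.map_of_injective σ.injective).dvd_of_pow_eq_one q pow_eq_one

end Embeddings

section Norm

theorem prod_le_sum_div_card_pow_card {ι : Type*} [Fintype ι] [Nonempty ι] {F : ι → ℝ}
    (hF : ∀ i, 0 ≤ F i) : ∏ i, F i ≤ ((∑ i, F i) / Fintype.card ι) ^ Fintype.card ι := by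
  have hcard : (0 : ℝ) < Fintype.card ι := by exact_mod_cast Fintype.card_pos
  have h := Real.geom_mean_le_arith_mean Finset.univ (fun _ ↦ 1) F (by simp)
    (by simpa using hcard) fun i _ ↦ hF i
  simp only [Real.rpow_one, Finset.sum_const, Finset.card_univ, nsmul_eq_mul, mul_one, one_mul] at h
  have hprod : 0 ≤ ∏ i, F i := Finset.prod_nonneg fun i _ ↦ hF i
  rw [← Real.rpow_inv_natCast_pow hprod (Fintype.card_ne_zero (α := ι))]
  gcongr

variable {L : Type*} [Field L] [NumberField L]

theorem abs_norm_sq_le (z : L) :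
    |((Algebra.norm ℚ z : ℚ) : ℝ)| ^ 2 ≤
      ((∑ σ : L →ₐ[ℚ] ℂ, ‖σ z‖ ^ 2) / Module.finrank ℚ L) ^ Module.finrank ℚ L := by
  have hcard : Fintype.card (L →ₐ[ℚ] ℂ) = Module.finrank ℚ L := AlgHom.card ℚ L ℂ
  have : Nonempty (L →ₐ[ℚ] ℂ) := Fintype.card_pos_iff.1 (hcard ▸ Module.finrank_pos)
  calc |((Algebra.norm ℚ z : ℚ) : ℝ)| ^ 2 = ∏ σ : L →ₐ[ℚ] ℂ, ‖σ z‖ ^ 2 := by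
        rw [Finset.prod_pow, ← norm_prod, ← Algebra.norm_eq_prod_embeddings ℚ ℂ z]
        simp
    _ ≤ _ := hcard ▸ prod_le_sum_div_card_pow_card fun σ ↦ by positivity

variable {m q : ℕ} [NeZero m] [IsCyclotomicExtension {m} ℚ L] {ζ : L}

theorem exists_sum_norm_embedding_cyclotomicSum_sub_round_sq_le (hqm : q ∣ m) (hne : q ≠ m)
    (hζ : IsPrimitiveRoot ζ m) (x : ZMod m → ℚ) :
    ∃ t : ℝ, ∑ σ : L →ₐ[ℚ] ℂ,
        ‖σ (cyclotomicSum m ζ fun i ↦ x i - round ((x i : ℝ) - t))‖ ^ 2 ≤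
      ((m : ℝ) ^ 2 - (q : ℝ) ^ 2) / 12 := by
  classical
  have : NeZero q := ⟨ne_zero_of_dvd_ne_zero (NeZero.ne m) hqm⟩
  obtain ⟨t, ht⟩ := exists_sum_norm_sum_sub_round_mul_addChar_sq_le
    (π := (ZMod.castHom hqm (ZMod q)).toAddMonoidHom) (ZMod.castHom_surjective hqm)
    (A := Finset.univ.image (embeddingChar hζ))
    (fun χ h ↦ by
      obtain ⟨σ, -, hσ⟩ := Finset.mem_image.1 h
      exact compAddMonoidHom_castHom_ne_embeddingChar hqm hne hζ σ χ hσ.symm)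
    (fun i ↦ (x i : ℝ))
  rw [Finset.sum_image (embeddingChar_injective hζ).injOn, ZMod.card, ZMod.card] at ht
  refine ⟨t, le_of_eq_of_le (Finset.sum_congr rfl fun σ _ ↦ ?_) ht⟩
  rw [map_cyclotomicSum_eq_sum_embeddingChar hζ]
  push_cast
  rfl

theorem exists_norm_cyclotomicSum_sub_round_sq_le (hqm : q ∣ m) (hne : q ≠ m)
    (hζ : IsPrimitiveRoot ζ m) (x : ZMod m → ℚ) :
    ∃ t : ℝ,
      |((Algebra.norm ℚ (cyclotomicSum m ζ fun i ↦ x i - round ((x i : ℝ) - t)) : ℚ) : ℝ)| ^ 2 ≤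
        (((m : ℝ) ^ 2 - (q : ℝ) ^ 2) / (12 * Module.finrank ℚ L)) ^ Module.finrank ℚ L := by
  obtain ⟨t, ht⟩ := exists_sum_norm_embedding_cyclotomicSum_sub_round_sq_le hqm hne hζ x
  refine ⟨t, (abs_norm_sq_le _).trans ?_⟩
  rw [← div_div]
  gcongr

end Norm

section InvariantCoordinates

variable {m : ℕ} [NeZero m] {K L : Type*} [Field K] [Field L] [CharZero L] [Algebra K L] {ζ : L}

theorem map_cyclotomicSum_autToPow_mul (hζ : IsPrimitiveRoot ζ m) (σ : L ≃ₐ[K] L) (x : ZMod m → ℚ) :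
    σ (cyclotomicSum m ζ fun i ↦ x (hζ.autToPow K σ * i)) = cyclotomicSum m ζ x := by
  let ψ : AddChar (ZMod m) L := AddChar.zmodChar m hζ.pow_eq_one
  have hσ (i : ZMod m) : σ (ψ i) = ψ (hζ.autToPow K σ * i) := by
    have : hζ.autToPow K σ * i = i.val • (hζ.autToPow K σ : ZMod m) := by simp [mul_comm]
    rw [this, AddChar.map_nsmul_eq_pow, AddChar.zmodChar_apply, AddChar.zmodChar_apply,
      hζ.autToPow_spec K σ, map_pow]
  have hsum (y : ZMod m → ℚ) : cyclotomicSum m ζ y = ∑ i, (y i : L) * ψ i :=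
    cyclotomicSum_apply ζ y
  simp only [hsum, map_sum, map_mul, map_ratCast, hσ]
  exact Equiv.sum_comp (Units.mulLeft (hζ.autToPow K σ)) fun i ↦ (x i : L) * ψ i

theorem exists_invariant_coordinates [IsCyclotomicExtension {m} ℚ L] [FiniteDimensional K L]
    (hζ : IsPrimitiveRoot ζ m) (z : K) :
    ∃ x : ZMod m → ℚ, cyclotomicSum m ζ x = algebraMap K L z ∧
      ∀ (σ : L ≃ₐ[K] L) (i : ZMod m), x (hζ.autToPow K σ * i) = x i := by
  obtain ⟨y, hy⟩ := cyclotomicSum_surjective hζ (algebraMap K L z)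
  have hy_aut (σ : L ≃ₐ[K] L) :
      cyclotomicSum m ζ (fun i ↦ y (hζ.autToPow K σ * i)) = algebraMap K L z :=
    σ.injective <| by rw [map_cyclotomicSum_autToPow_mul, hy, σ.commutes]
  let average : ZMod m → ℚ := (Fintype.card (L ≃ₐ[K] L) : ℚ)⁻¹ •
    ∑ σ : L ≃ₐ[K] L, fun i ↦ y (hζ.autToPow K σ * i)
  refine ⟨average, ?_, fun τ i ↦ ?_⟩
  · simp only [average, map_smul, map_sum, hy_aut, Finset.sum_const, Finset.card_univ]
    rw [← Nat.cast_smul_eq_nsmul ℚ, inv_smul_smul₀ (by exact_mod_cast Fintype.card_ne_zero)]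
  · simp only [average, Pi.smul_apply, Finset.sum_apply]
    rw [← Equiv.sum_comp (Equiv.mulRight τ) fun σ ↦ y (hζ.autToPow K σ * i)]
    simp [mul_assoc]

theorem exists_ringOfIntegers_eq_cyclotomicSum [FiniteDimensional K L] [IsGalois K L]
    (hζ : IsPrimitiveRoot ζ m) {c : ZMod m → ℤ}
    (hc : ∀ (σ : L ≃ₐ[K] L) (i : ZMod m), c (hζ.autToPow K σ * i) = c i) :
    ∃ a : 𝓞 K, algebraMap K L a = cyclotomicSum m ζ fun i ↦ c i := by
  have hfixed (σ : L ≃ₐ[K] L) :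
      σ (cyclotomicSum m ζ fun i ↦ c i) = cyclotomicSum m ζ fun i ↦ c i := by
    simpa only [hc] using map_cyclotomicSum_autToPow_mul hζ σ fun i ↦ c i
  obtain ⟨a, ha⟩ := (IsGalois.mem_range_algebraMap_iff_fixed (F := K) _).2 hfixed
  have hint : IsIntegral ℤ a := by
    rw [← isIntegral_algebraMap_iff (algebraMap K L).injective, ha]
    exact isIntegral_cyclotomicSum hζ c
  exact ⟨⟨a, hint⟩, ha⟩

end InvariantCoordinates

section EuclideanMinimum

variable {m q : ℕ} [NeZero m] {K L : Type*} [Field K] [NumberField K] [Field L] [NumberField L]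
  [Algebra K L] [IsGalois K L] [IsCyclotomicExtension {m} ℚ L]

variable (L) in
theorem exists_norm_sub_sq_le (hqm : q ∣ m) (hne : q ≠ m) (z : K) :
    ∃ c : 𝓞 K, |((Algebra.norm ℚ (z - (c : K)) : ℚ) : ℝ)| ^ 2 ≤
      (((m : ℝ) ^ 2 - (q : ℝ) ^ 2) / (12 * Module.finrank ℚ L)) ^ Module.finrank ℚ K := by
  have hζ := IsCyclotomicExtension.zeta_spec m ℚ L
  obtain ⟨x, hxz, hx⟩ := exists_invariant_coordinates hζ z
  obtain ⟨t, ht⟩ := exists_norm_cyclotomicSum_sub_round_sq_le hqm hne hζ x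
  obtain ⟨c, hc⟩ := exists_ringOfIntegers_eq_cyclotomicSum (c := fun i ↦ round ((x i : ℝ) - t)) hζ
    fun σ i ↦ by rw [hx]
  refine ⟨c, ?_⟩
  have hqm_le : q ≤ m := Nat.le_of_dvd (NeZero.pos m) hqm
  have hsq : (0 : ℝ) ≤ (m : ℝ) ^ 2 - (q : ℝ) ^ 2 := sub_nonneg.2 (by gcongr)
  have hsum : cyclotomicSum m (IsCyclotomicExtension.zeta m ℚ L)
      (fun i ↦ x i - round ((x i : ℝ) - t)) = algebraMap K L (z - c) := by
    rw [map_sub, hc, ← hxz, ← map_sub]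
    rfl
  rw [← Module.finrank_mul_finrank ℚ K L] at ht ⊢
  rw [hsum, ← Algebra.norm_norm (S := K), Algebra.norm_algebraMap, map_pow, pow_mul, Rat.cast_pow,
    abs_pow, pow_right_comm] at ht
  exact (pow_le_pow_iff_left₀ (by positivity) (by positivity) Module.finrank_pos.ne').1 ht

variable (L) in
theorem euclideanMinimum_le (hqm : q ∣ m) (hne : q ≠ m) :
    euclideanMinimum K ≤
      √((((m : ℝ) ^ 2 - (q : ℝ) ^ 2) / (12 * Module.finrank ℚ L)) ^ Module.finrank ℚ K) := by
  refine Real.iSup_le (fun z ↦ ?_) (Real.sqrt_nonneg _)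
  obtain ⟨c, hc⟩ := exists_norm_sub_sq_le L hqm hne z
  have hbdd : BddBelow (Set.range fun c : 𝓞 K ↦ |((Algebra.norm ℚ (z - (c : K)) : ℚ) : ℝ)|) :=
    ⟨0, Set.forall_mem_range.2 fun _ ↦ abs_nonneg _⟩
  exact (ciInf_le hbdd c).trans (Real.le_sqrt_of_sq_le hc)

end EuclideanMinimum

section Cyclic

theorem subgroup_le_of_natCard_dvd {G : Type*} [Group G] [IsCyclic G] [Finite G]
    {H₁ H₂ : Subgroup G} (h : Nat.card H₁ ∣ Nat.card H₂) : H₁ ≤ H₂ := by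
  have : Fintype G := Fintype.ofFinite G
  classical
  -- In a cyclic group, a subgroup of order `n` exhausts the solutions of `g ^ n = 1`.
  have solutions_eq : ({g | g ∈ H₂} : Finset G) =
      ({g | g ^ Nat.card H₂ = 1} : Finset G) := by
    refine Finset.eq_of_subset_of_card_le (fun g hg ↦ ?_) ?_
    · rw [Finset.mem_filter_univ] at hg ⊢
      exact orderOf_dvd_iff_pow_eq_one.1 (Subgroup.orderOf_dvd_natCard _ hg)
    · refine (IsCyclic.card_pow_eq_one_le Nat.card_pos).trans_eq ?_
      rw [Nat.card_eq_fintype_card, Fintype.card_subtype]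
  intro g hg
  rw [← Finset.mem_filter_univ (p := (· ∈ H₂)), solutions_eq, Finset.mem_filter_univ]
  exact orderOf_dvd_iff_pow_eq_one.1 ((Subgroup.orderOf_dvd_natCard _ hg).trans h)

theorem intermediateField_le_of_finrank_dvd {F L : Type*} [Field F] [Field L] [Algebra F L]
    [FiniteDimensional F L] [IsGalois F L] [IsCyclic (L ≃ₐ[F] L)] {E₁ E₂ : IntermediateField F L}
    (h : Module.finrank F E₁ ∣ Module.finrank F E₂) : E₁ ≤ E₂ := by
  rw [← IsGalois.fixedField_fixingSubgroup E₂, IntermediateField.le_iff_le]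
  apply subgroup_le_of_natCard_dvd
  rw [IsGalois.card_fixingSubgroup_eq_finrank, IsGalois.card_fixingSubgroup_eq_finrank]
  refine Nat.dvd_of_mul_dvd_mul_left (Module.finrank_pos (R := F) (M := E₁)) ?_
  rw [Module.finrank_mul_finrank F E₁ L, ← Module.finrank_mul_finrank F E₂ L]
  exact mul_dvd_mul_right h _

theorem nonempty_algHom_cyclotomicField_of_finrank_dvd {K L : Type*} [Field K] [CharZero K]
    [Field L] [NumberField L] [Algebra K L] [IsGalois ℚ L] [IsCyclic (L ≃ₐ[ℚ] L)] {n : ℕ}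
    [NeZero n] {ζ : L} (hζ : IsPrimitiveRoot ζ n) (h : Module.finrank ℚ K ∣ n.totient) :
    Nonempty (K →ₐ[ℚ] CyclotomicField n ℚ) := by
  let ι : K →ₐ[ℚ] L := IsScalarTower.toAlgHom ℚ K L
  let E : IntermediateField ℚ L := IntermediateField.adjoin ℚ {ζ}
  have : IsCyclotomicExtension {n} ℚ E := hζ.intermediateField_adjoin_isCyclotomicExtension ℚ
  have : NeZero (n : ℚ) := ⟨Nat.cast_ne_zero.2 (NeZero.ne n)⟩
  have : IsCyclotomicExtension {n} ℚ (CyclotomicField n ℚ) :=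
    CyclotomicField.isCyclotomicExtension n ℚ
  have hle : ι.fieldRange ≤ E := by
    apply intermediateField_le_of_finrank_dvd
    rwa [IsCyclotomicExtension.finrank (n := n) E
      (Polynomial.cyclotomic.irreducible_rat (NeZero.pos n)),
      ← ι.equivFieldRange.toLinearEquiv.finrank_eq]
  let e := IsCyclotomicExtension.algEquiv {n} ℚ E (CyclotomicField n ℚ)
  exact ⟨e.toAlgHom.comp ((IntermediateField.inclusion hle).comp ι.rangeRestrict)⟩

end Cyclic

section PrimePower

theorem isCyclic_gal_of_isCyclotomicExtension_prime_pow (p k : ℕ) [hp : Fact p.Prime]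
    (hp2 : p ≠ 2) (L : Type*) [Field L] [NumberField L] [IsCyclotomicExtension {p ^ k} ℚ L] :
    IsCyclic (L ≃ₐ[ℚ] L) := by
  have : IsCyclic (ZMod (p ^ k))ˣ := ZMod.isCyclic_units_of_prime_pow p hp.out hp2 k
  exact (IsCyclotomicExtension.Rat.galEquivZMod (p ^ k) L).isCyclic.2 this

theorem finrank_of_isCyclotomicExtension_prime_pow_succ (p s : ℕ) [hp : Fact p.Prime] (L : Type*)
    [Field L] [CharZero L] [IsCyclotomicExtension {p ^ (s + 1)} ℚ L] :
    Module.finrank ℚ L = p ^ s * (p - 1) := by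
  rw [IsCyclotomicExtension.finrank (n := p ^ (s + 1)) L
    (Polynomial.cyclotomic.irreducible_rat (NeZero.pos _)), Nat.totient_prime_pow_succ hp.out]

variable {p s : ℕ} [hp : Fact p.Prime] {K L : Type*} [Field K] [CharZero K] [Field L]
  [NumberField L] [Algebra K L]

variable (p s L) in
theorem not_dvd_finrank_of_isEmpty_algHom [IsCyclotomicExtension {p ^ (s + 1)} ℚ L]
    (hp2 : p ≠ 2) (hs : 1 ≤ s) (hK : IsEmpty (K →ₐ[ℚ] CyclotomicField (p ^ s) ℚ)) :
    ¬ p ∣ Module.finrank K L := by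
  intro ⟨d, hd⟩
  have : IsGalois ℚ L := IsCyclotomicExtension.isGalois {p ^ (s + 1)} ℚ L
  have : IsCyclic (L ≃ₐ[ℚ] L) := isCyclic_gal_of_isCyclotomicExtension_prime_pow p (s + 1) hp2 L
  have hζ := IsCyclotomicExtension.zeta_spec (p ^ (s + 1)) ℚ L
  have hdvd : Module.finrank ℚ K ∣ (p ^ s).totient := by
    refine ⟨d, Nat.eq_of_mul_eq_mul_right hp.out.pos ?_⟩
    obtain ⟨k, rfl⟩ := Nat.exists_eq_add_of_le' hs
    rw [mul_assoc, mul_comm d p, ← hd, Module.finrank_mul_finrank,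
      finrank_of_isCyclotomicExtension_prime_pow_succ p (k + 1) L,
      Nat.totient_prime_pow_succ hp.out]
    ring
  exact not_nonempty_iff.2 hK <| nonempty_algHom_cyclotomicField_of_finrank_dvd
    (hζ.pow (NeZero.pos _) (pow_succ' p s)) hdvd

variable (p s) in
theorem finrank_le_sub_one_of_not_dvd [IsCyclotomicExtension {p ^ (s + 1)} ℚ L]
    (h : ¬ p ∣ Module.finrank K L) : Module.finrank K L ≤ p - 1 := by
  have hdvd : Module.finrank K L ∣ p ^ s * (p - 1) := by
    rw [← finrank_of_isCyclotomicExtension_prime_pow_succ p s L,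
      ← Module.finrank_mul_finrank ℚ K L]
    exact dvd_mul_left _ _
  have hcoprime : (Module.finrank K L).Coprime (p ^ s) :=
    (((Nat.Prime.coprime_iff_not_dvd hp.out).2 h).pow_left s).symm
  exact Nat.le_of_dvd (Nat.sub_pos_of_lt hp.out.one_lt) (hcoprime.dvd_of_dvd_mul_left hdvd)

variable {ζ : L}

theorem finrank_adjoin_pow_prime_pow [IsCyclotomicExtension {p ^ (s + 1)} ℚ L]
    (hζ : IsPrimitiveRoot ζ (p ^ (s + 1))) :
    Module.finrank (IntermediateField.adjoin ℚ {ζ ^ p ^ s}) L = p ^ s := by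
  have hprim : IsPrimitiveRoot (ζ ^ p ^ s) p := hζ.pow (NeZero.pos _) (pow_succ p s)
  set E := IntermediateField.adjoin ℚ {ζ ^ p ^ s}
  have : IsCyclotomicExtension {p} ℚ E := hprim.intermediateField_adjoin_isCyclotomicExtension ℚ
  refine Nat.eq_of_mul_eq_mul_right (Nat.sub_pos_of_lt hp.out.one_lt) ?_
  rw [← finrank_of_isCyclotomicExtension_prime_pow_succ p s L, mul_comm,
    ← Module.finrank_mul_finrank ℚ E L, IsCyclotomicExtension.finrank (n := p) E
      (Polynomial.cyclotomic.irreducible_rat hp.out.pos), Nat.totient_prime hp.out]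

variable [FiniteDimensional K L] [IsGalois K L]

theorem algEquiv_eq_one_of_map_pow_eq [IsCyclotomicExtension {p ^ (s + 1)} ℚ L]
    (hζ : IsPrimitiveRoot ζ (p ^ (s + 1))) (h : ¬ p ∣ Module.finrank K L) {σ : L ≃ₐ[K] L}
    (hσ : σ (ζ ^ p ^ s) = ζ ^ p ^ s) : σ = 1 := by
  have : IsGalois ℚ L := IsCyclotomicExtension.isGalois {p ^ (s + 1)} ℚ L
  have hmem : AlgEquiv.restrictScalarsHom ℚ σ ∈
      (IntermediateField.adjoin ℚ {ζ ^ p ^ s}).fixingSubgroup := by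
    rw [IntermediateField.mem_fixingSubgroup_iff]
    refine (IntermediateField.forall_mem_adjoin_smul_eq_self_iff ℚ
      (AlgEquiv.restrictScalarsHom ℚ σ : L ≃ₐ[ℚ] L)).2 ?_
    simpa using hσ
  have hpow : σ ^ p ^ s = 1 := by
    apply AlgEquiv.restrictScalarsHom_injective ℚ
    rw [map_pow, map_one, ← finrank_adjoin_pow_prime_pow hζ,
      ← IsGalois.card_fixingSubgroup_eq_finrank]
    exact orderOf_dvd_iff_pow_eq_one.1 (Subgroup.orderOf_dvd_natCard _ hmem)
  have hcoprime : (p ^ s).Coprime (Nat.card (L ≃ₐ[K] L)) := by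
    rw [IsGalois.card_aut_eq_finrank]
    exact ((Nat.Prime.coprime_iff_not_dvd hp.out).2 h).pow_left s
  rw [← orderOf_eq_one_iff]
  exact Nat.eq_one_of_dvd_coprimes hcoprime (orderOf_dvd_of_pow_eq_one hpow) (orderOf_dvd_natCard σ)

theorem isPrimitiveRoot_map_mul_inv [IsCyclotomicExtension {p ^ (s + 1)} ℚ L]
    (hζ : IsPrimitiveRoot ζ (p ^ (s + 1))) (h : ¬ p ∣ Module.finrank K L) {σ : L ≃ₐ[K] L}
    (hσ : σ ≠ 1) : IsPrimitiveRoot (σ ζ * ζ⁻¹) (p ^ (s + 1)) := by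
  have hζ0 : ζ ≠ 0 := hζ.ne_zero (NeZero.ne _)
  have horder : orderOf (σ ζ * ζ⁻¹) = p ^ (s + 1) := by
    refine orderOf_eq_prime_pow (fun hpow ↦ hσ (algEquiv_eq_one_of_map_pow_eq hζ h ?_)) ?_
    · rwa [mul_pow, inv_pow, mul_inv_eq_one₀ (pow_ne_zero _ hζ0), ← map_pow] at hpow
    · rw [mul_pow, inv_pow, ← map_pow, hζ.pow_eq_one, map_one, inv_one, one_mul]
  exact horder ▸ IsPrimitiveRoot.orderOf _

end PrimePower

section Different

theorem aroots_minpoly_eq_map_algEquiv {K L : Type*} [Field K] [Field L] [Algebra K L]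
    [FiniteDimensional K L] [IsGalois K L] {α : L} (hα : IntermediateField.adjoin K {α} = ⊤) :
    (minpoly K α).aroots L = Finset.univ.val.map fun σ : L ≃ₐ[K] L ↦ σ α := by
  have hint : IsIntegral K α := Algebra.IsIntegral.isIntegral α
  have hinj : Function.Injective fun σ : L ≃ₐ[K] L ↦ σ α :=
    ((Field.primitive_element_iff_algHom_eq_of_eval' K L (IsGalois.splits K) α).1 hα).comp
      AlgEquiv.coe_toAlgHom_injective
  refine (Multiset.eq_of_le_of_card_le ?_ ?_).symm
  · refine (Multiset.le_iff_subset (Finset.univ.nodup.map hinj)).2 fun β hβ ↦ ?_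
    obtain ⟨σ, -, rfl⟩ := Multiset.mem_map.1 hβ
    rw [Polynomial.mem_aroots, Polynomial.aeval_algEquiv]
    simp [minpoly.ne_zero hint]
  · rw [Multiset.card_map, Finset.card_val, Finset.card_univ, ← Nat.card_eq_fintype_card,
      IsGalois.card_aut_eq_finrank,
      ← (Field.primitive_element_iff_minpoly_natDegree_eq K α).1 hα]
    exact (Polynomial.card_roots' _).trans_eq (Polynomial.natDegree_map _)

theorem aeval_derivative_minpoly_eq_prod {K L : Type*} [Field K] [Field L] [Algebra K L]
    [FiniteDimensional K L] [IsGalois K L] [DecidableEq (L ≃ₐ[K] L)] {α : L}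
    (hα : IntermediateField.adjoin K {α} = ⊤) :
    Polynomial.aeval α (Polynomial.derivative (minpoly K α)) =
      ∏ σ ∈ Finset.univ.erase (1 : L ≃ₐ[K] L), (α - σ α) := by
  classical
  have hroots := aroots_minpoly_eq_map_algEquiv hα
  rw [Polynomial.aroots] at hroots
  have hmem : α ∈ ((minpoly K α).map (algebraMap K L)).roots :=
    hroots ▸ Multiset.mem_map.2 ⟨1, Finset.mem_univ_val _, rfl⟩
  rw [← Polynomial.eval_map_algebraMap, ← Polynomial.derivative_map,
    (IsGalois.splits K α).eval_root_derivative
      ((minpoly.monic (Algebra.IsIntegral.isIntegral α)).map _) hmem, hroots]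
  change (((Finset.univ.val.map fun σ : L ≃ₐ[K] L ↦ σ α).erase ((1 : L ≃ₐ[K] L) α)).map _).prod = _
  rw [← Multiset.map_erase_of_mem _ _ (Finset.mem_univ_val _), Multiset.map_map,
    ← Finset.erase_val]
  rfl

theorem coe_aeval_derivative_minpoly {K L : Type*} [Field K] [NumberField K] [Field L] [Algebra K L]
    (α : 𝓞 L) : (Polynomial.aeval α (Polynomial.derivative (minpoly (𝓞 K) α)) : L) =
      Polynomial.aeval (α : L) (Polynomial.derivative (minpoly K (α : L))) := by
  rw [minpoly.isIntegrallyClosed_eq_field_fractions K L (IsIntegralClosure.isIntegral (𝓞 K) L α),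
    Polynomial.derivative_map, Polynomial.aeval_map_algebraMap, Polynomial.aeval_algebraMap_apply]

theorem abs_norm_eq_one_of_pow_eq_one {A : Type*} [Ring A] [Algebra ℚ A] {x : A} {k : ℕ}
    (hk : k ≠ 0) (hx : x ^ k = 1) : |Algebra.norm ℚ x| = 1 := by
  rw [← pow_eq_one_iff_of_nonneg (abs_nonneg _) hk, ← abs_pow, ← map_pow, hx, map_one, abs_one]

theorem abs_norm_sub_eq_prime {p s : ℕ} [Fact p.Prime] {L : Type*} [Field L] [CharZero L]
    [IsCyclotomicExtension {p ^ (s + 1)} ℚ L] (hp2 : p ≠ 2) {ζ β : L}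
    (hζ : IsPrimitiveRoot ζ (p ^ (s + 1)))
    (hβ : IsPrimitiveRoot (β * ζ⁻¹) (p ^ (s + 1))) : |Algebra.norm ℚ (ζ - β)| = p := by
  have hζ0 : ζ ≠ 0 := hζ.ne_zero (NeZero.ne _)
  have hfactor : ζ - β = -ζ * (β * ζ⁻¹ - 1) := by field_simp; ring
  have hunit : |Algebra.norm ℚ (-ζ)| = 1 := by
    refine abs_norm_eq_one_of_pow_eq_one (mul_ne_zero two_ne_zero (NeZero.ne (p ^ (s + 1)))) ?_
    rw [(even_two_mul _).neg_pow, pow_mul', hζ.pow_eq_one, one_pow]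
  rw [hfactor, map_mul, abs_mul, hunit, one_mul, hβ.norm_sub_one_of_prime_ne_two
    (Polynomial.cyclotomic.irreducible_rat (NeZero.pos _)) hp2, Nat.abs_cast]

variable {K L : Type*} [Field K] [NumberField K] [Field L] [NumberField L] [Algebra K L]

theorem natAbs_discr_dvd_of_adjoin_eq_top {α : 𝓞 L}
    (hα : Algebra.adjoin K {(α : L)} = ⊤) :
    (discr L).natAbs ∣
      (Algebra.norm ℤ (Polynomial.aeval α (Polynomial.derivative (minpoly (𝓞 K) α)))).natAbs *
        (discr K).natAbs ^ Module.finrank K L := by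
  rw [natAbs_discr_eq_absNorm_differentIdeal_mul_natAbs_discr_pow K (𝓞 K) L (𝓞 L),
    ← Ideal.absNorm_span_singleton]
  refine mul_dvd_mul_right (Ideal.absNorm_dvd_absNorm_of_le ?_) _
  exact (Ideal.span_singleton_le_iff_mem _).2 (aeval_derivative_mem_differentIdeal (𝓞 K) K L α hα)

theorem natAbs_discr_dvd_prime_pow_mul [IsGalois K L] {p s : ℕ} [Fact p.Prime]
    [IsCyclotomicExtension {p ^ (s + 1)} ℚ L] (hp2 : p ≠ 2) {ζ : L}
    (hζ : IsPrimitiveRoot ζ (p ^ (s + 1)))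
    (hσ : ∀ σ : L ≃ₐ[K] L, σ ≠ 1 → IsPrimitiveRoot (σ ζ * ζ⁻¹) (p ^ (s + 1))) :
    (discr L).natAbs ∣
      p ^ (Module.finrank K L - 1) * (discr K).natAbs ^ Module.finrank K L := by
  classical
  obtain ⟨ζ', rfl⟩ : ∃ ζ' : 𝓞 L, (ζ' : L) = ζ := ⟨hζ.toInteger, rfl⟩
  have htop : IntermediateField.adjoin K {(ζ' : L)} = ⊤ := by
    apply IntermediateField.adjoin_eq_top_of_adjoin_eq_top ℚ
    apply IntermediateField.adjoin_eq_top_of_algebra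
    exact IsCyclotomicExtension.adjoin_primitive_root_eq_top hζ
  have hnorm : (Algebra.norm ℤ (Polynomial.aeval ζ'
      (Polynomial.derivative (minpoly (𝓞 K) ζ')))).natAbs =
      p ^ (Module.finrank K L - 1) := by
    rw [← Nat.cast_inj (R := ℚ), Nat.cast_natAbs, Int.cast_abs, Algebra.coe_norm_int,
      coe_aeval_derivative_minpoly, aeval_derivative_minpoly_eq_prod htop, map_prod,
      Finset.abs_prod, Finset.prod_congr rfl fun σ h ↦
        abs_norm_sub_eq_prime hp2 hζ (hσ σ (Finset.ne_of_mem_erase h)),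
      Finset.prod_const, Finset.card_erase_of_mem (Finset.mem_univ _), Finset.card_univ,
      ← Nat.card_eq_fintype_card, IsGalois.card_aut_eq_finrank, Nat.cast_pow]
  rw [← hnorm]
  exact natAbs_discr_dvd_of_adjoin_eq_top
    (Algebra.adjoin_eq_top_of_primitive_element (Algebra.IsAlgebraic.isAlgebraic (ζ' : L)) htop)

end Different

section DiscriminantBound

theorem sq_le_three_pow_sub_one {p : ℕ} (hp : 3 ≤ p) : p ^ 2 ≤ 3 ^ (p - 1) := by
  induction p, hp using Nat.le_induction with
  | base => norm_num
  | succ n hn ih =>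
    obtain ⟨k, rfl⟩ := Nat.exists_eq_add_of_le' hn
    calc (k + 3 + 1) ^ 2 ≤ 3 * (k + 3) ^ 2 := by nlinarith
      _ ≤ 3 * 3 ^ (k + 3 - 1) := by gcongr
      _ = 3 ^ (k + 3 + 1 - 1) := (pow_succ' 3 (k + 2)).symm

theorem add_one_pow_le_three_mul_pow (n : ℕ) : ((n : ℝ) + 1) ^ n ≤ 3 * (n : ℝ) ^ n := by
  rcases n.eq_zero_or_pos with rfl | hn
  · norm_num
  have hn0 : (n : ℝ) ≠ 0 := Nat.cast_ne_zero.2 hn.ne'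
  calc ((n : ℝ) + 1) ^ n = (1 + (n : ℝ)⁻¹) ^ n * (n : ℝ) ^ n := by
        rw [← mul_pow, add_mul, inv_mul_cancel₀ hn0, one_mul]
    _ ≤ 3 * (n : ℝ) ^ n := by
        gcongr
        exact Real.one_add_inv_pow_le_exp.trans Real.exp_one_lt_three.le

theorem add_one_div_three_pow_le {p : ℕ} (hp : 3 ≤ p) :
    (((p : ℝ) + 1) / 3) ^ p ≤ (p : ℝ) ^ (p - 2) := by
  rw [div_pow, div_le_iff₀ (by positivity)]
  calc ((p : ℝ) + 1) ^ p ≤ 3 * (p : ℝ) ^ p := add_one_pow_le_three_mul_pow p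
    _ = (p : ℝ) ^ (p - 2) * ((p : ℝ) ^ 2 * 3) := by
        rw [← mul_assoc, ← pow_add, Nat.sub_add_cancel (by lia), mul_comm]
    _ ≤ (p : ℝ) ^ (p - 2) * (3 ^ (p - 1) * 3) := by
        gcongr
        exact_mod_cast sq_le_three_pow_sub_one hp
    _ = (p : ℝ) ^ (p - 2) * 3 ^ p := by rw [← pow_succ, Nat.sub_add_cancel (by lia)]

theorem pow_sub_two_mul_pow_le {p : ℕ} (hp : 3 ≤ p) (k : ℕ) :
    (p : ℝ) ^ (p - 2) * ((p : ℝ) ^ (k + 1) * (p + 1) / 3) ^ (p ^ (k + 1) * (p - 1)) ≤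
      (p : ℝ) ^ (p ^ (k + 1) * ((p - 1) * (k + 2) - 1)) := by
  obtain ⟨t, ht⟩ := Nat.exists_eq_add_of_le' (show 2 ≤ p by lia)
  have htm : t ≤ t * p ^ k := Nat.le_mul_of_pos_right t (by positivity)
  have hexp : (t + 1) * (k + 2) - 1 = (k + 1) * (t + 1) + t := by
    rw [show (t + 1) * (k + 2) = (k + 1) * (t + 1) + t + 1 by ring, Nat.add_sub_cancel]
  have hbase := add_one_div_three_pow_le hp
  rw [show p - 2 = t by lia] at hbase ⊢
  rw [show p - 1 = t + 1 by lia, hexp]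
  calc (p : ℝ) ^ t * ((p : ℝ) ^ (k + 1) * (p + 1) / 3) ^ (p ^ (k + 1) * (t + 1))
      = (p : ℝ) ^ t * ((p : ℝ) ^ ((k + 1) * (p ^ (k + 1) * (t + 1))) *
          ((((p : ℝ) + 1) / 3) ^ p) ^ (p ^ k * (t + 1))) := by
        rw [mul_div_assoc, mul_pow, ← pow_mul, ← pow_mul, ← mul_assoc p, ← pow_succ']
    _ ≤ (p : ℝ) ^ (t * p ^ k) * ((p : ℝ) ^ ((k + 1) * (p ^ (k + 1) * (t + 1))) *
          ((p : ℝ) ^ t) ^ (p ^ k * (t + 1))) := by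
        gcongr
        exact_mod_cast (by lia : 1 ≤ p)
    _ = (p : ℝ) ^ (p ^ (k + 1) * ((k + 1) * (t + 1) + t)) := by
        rw [← pow_mul, ← pow_add, ← pow_add]
        congr 1
        rw [pow_succ p k, ht]
        ring

variable {p s : ℕ} [hp : Fact p.Prime] {K : Type*} [Field K] [NumberField K]

variable (L : Type*) [Field L] [NumberField L] [Algebra K L] [IsGalois K L]
  [IsCyclotomicExtension {p ^ (s + 1)} ℚ L]

theorem prime_pow_le_prime_pow_mul_abs_discr_pow (hp2 : p ≠ 2) (h : ¬ p ∣ Module.finrank K L) :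
    (p : ℝ) ^ (p ^ s * ((p - 1) * (s + 1) - 1)) ≤
      (p : ℝ) ^ (Module.finrank K L - 1) * |(discr K : ℝ)| ^ Module.finrank K L := by
  have hζ := IsCyclotomicExtension.zeta_spec (p ^ (s + 1)) ℚ L
  have hdvd := natAbs_discr_dvd_prime_pow_mul hp2 hζ
    fun σ : L ≃ₐ[K] L ↦ isPrimitiveRoot_map_mul_inv hζ h
  have hpos : 0 < (discr K).natAbs := Int.natAbs_pos.2 (discr_ne_zero K)
  have hle := Nat.le_of_dvd (mul_pos (pow_pos hp.out.pos _) (pow_pos hpos _)) hdvd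
  rw [IsCyclotomicExtension.Rat.discr_prime_pow_succ p s L, Int.natAbs_mul, Int.natAbs_pow,
    Int.natAbs_pow, Int.natAbs_neg, Int.natAbs_one, one_pow, one_mul, Int.natAbs_natCast] at hle
  rw [← Int.cast_abs, ← Nat.cast_natAbs]
  exact_mod_cast hle

theorem prime_pow_mul_div_three_pow_le_abs_discr (hp2 : p ≠ 2) (hs : 1 ≤ s)
    (h : ¬ p ∣ Module.finrank K L) :
    ((p : ℝ) ^ s * (p + 1) / 3) ^ Module.finrank ℚ K ≤ |(discr K : ℝ)| := by
  obtain ⟨k, rfl⟩ := Nat.exists_eq_add_of_le' hs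
  have hp3 : 3 ≤ p := hp.out.two_le.lt_of_ne' hp2
  have hp0 : (0 : ℝ) < p := Nat.cast_pos.2 hp.out.pos
  set d := Module.finrank K L
  have hd : d - 1 ≤ p - 2 := Nat.sub_le_sub_right (finrank_le_sub_one_of_not_dvd p (k + 1) h) 1
  refine (pow_le_pow_iff_left₀ (by positivity) (abs_nonneg _) Module.finrank_pos.ne' (n := d)).1 ?_
  refine le_of_mul_le_mul_left ?_ (pow_pos hp0 (d - 1))
  rw [← pow_mul, Module.finrank_mul_finrank,
    finrank_of_isCyclotomicExtension_prime_pow_succ p (k + 1) L]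
  calc (p : ℝ) ^ (d - 1) * ((p : ℝ) ^ (k + 1) * (p + 1) / 3) ^ (p ^ (k + 1) * (p - 1))
      ≤ (p : ℝ) ^ (p - 2) * ((p : ℝ) ^ (k + 1) * (p + 1) / 3) ^ (p ^ (k + 1) * (p - 1)) := by
        gcongr
        exact_mod_cast hp.out.one_le
    _ ≤ (p : ℝ) ^ (p ^ (k + 1) * ((p - 1) * (k + 2) - 1)) := pow_sub_two_mul_pow_le hp3 k
    _ ≤ (p : ℝ) ^ (d - 1) * |(discr K : ℝ)| ^ d :=
        prime_pow_le_prime_pow_mul_abs_discr_pow (s := k + 1) L hp2 h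

end DiscriminantBound

section Conductor

theorem euclideanMinimum_le_of_not_dvd_finrank {p s : ℕ} [hp : Fact p.Prime] {K : Type*} [Field K]
    [NumberField K] (L : Type*) [Field L] [NumberField L] [Algebra K L] [IsGalois K L]
    [IsCyclotomicExtension {p ^ (s + 1)} ℚ L] (hp2 : p ≠ 2) (hs : 1 ≤ s)
    (h : ¬ p ∣ Module.finrank K L) :
    euclideanMinimum K ≤ (2 : ℝ)⁻¹ ^ Module.finrank ℚ K * √|(discr K : ℝ)| := by
  have hp1 : (0 : ℝ) < p - 1 := sub_pos.2 (Nat.one_lt_cast.2 hp.out.one_lt)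
  have hps : (0 : ℝ) < (p : ℝ) ^ s := pow_pos (Nat.cast_pos.2 hp.out.pos) s
  have hbase : (((p ^ (s + 1) : ℕ) : ℝ) ^ 2 - ((p ^ s : ℕ) : ℝ) ^ 2) /
      (12 * Module.finrank ℚ L) = 2⁻¹ ^ 2 * ((p : ℝ) ^ s * (p + 1) / 3) := by
    rw [finrank_of_isCyclotomicExtension_prime_pow_succ p s L]
    push_cast [hp.out.one_le]
    field_simp
    ring
  calc euclideanMinimum K
      ≤ √((2⁻¹ ^ 2 * ((p : ℝ) ^ s * (p + 1) / 3)) ^ Module.finrank ℚ K) :=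
        hbase ▸ euclideanMinimum_le L (pow_dvd_pow p s.le_succ)
          (Nat.pow_lt_pow_right hp.out.one_lt s.lt_succ_self).ne
    _ = 2⁻¹ ^ Module.finrank ℚ K *
          √(((p : ℝ) ^ s * (p + 1) / 3) ^ Module.finrank ℚ K) := by
        rw [mul_pow, pow_right_comm, Real.sqrt_mul (by positivity), Real.sqrt_sq (by positivity)]
    _ ≤ 2⁻¹ ^ Module.finrank ℚ K * √|(discr K : ℝ)| := by
        gcongr
        exact prime_pow_mul_div_three_pow_le_abs_discr L hp2 hs h

end Conductor

theorem minkowski_conjecture_of_oddPrimePower_conductor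
    (p r : ℕ) (hp : p.Prime) (hodd : Odd p) (hr : 1 < r)
    (K : Type*) [Field K] [NumberField K]
    (hcond : HasConductor K ⟨p ^ r, pow_pos hp.pos r⟩) :
    euclideanMinimum K ≤
      (2 : ℝ)⁻¹ ^ (Module.finrank ℚ K) * Real.sqrt |(NumberField.discr K : ℝ)| := by
  obtain ⟨s, rfl⟩ : ∃ s, r = s + 1 := ⟨r - 1, by lia⟩
  have hp2 : p ≠ 2 := hodd.ne_two_of_dvd_nat dvd_rfl
  have : Fact p.Prime := ⟨hp⟩
  obtain ⟨⟨ι : K →ₐ[ℚ] CyclotomicField (p ^ (s + 1)) ℚ⟩, hmin⟩ := hcond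
  have hK : IsEmpty (K →ₐ[ℚ] CyclotomicField (p ^ s) ℚ) := by
    rw [← not_nonempty_iff]
    intro h
    have hle : p ^ (s + 1) ≤ p ^ s := hmin ⟨p ^ s, pow_pos hp.pos s⟩ h
    exact hle.not_gt (Nat.pow_lt_pow_right hp.one_lt s.lt_succ_self)
  set L := CyclotomicField (p ^ (s + 1)) ℚ
  have : NeZero ((p ^ (s + 1) : ℕ) : ℚ) := ⟨Nat.cast_ne_zero.2 (NeZero.ne _)⟩
  have : IsCyclotomicExtension {p ^ (s + 1)} ℚ L := CyclotomicField.isCyclotomicExtension _ ℚ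
  let : Algebra K L := ι.toRingHom.toAlgebra
  have : IsGalois ℚ L := IsCyclotomicExtension.isGalois {p ^ (s + 1)} ℚ L
  have : IsGalois K L := IsGalois.tower_top_of_isGalois ℚ K L
  have hs : 1 ≤ s := Nat.le_of_lt_succ hr
  exact euclideanMinimum_le_of_not_dvd_finrank L hp2 hs
    (not_dvd_finrank_of_isEmpty_algHom p s L hp2 hs hK)
end

section
/- Let p be an odd prime, r ≥ 1, and K an abelian number field of conductor p^r of degree n over ℚ. Let ζ be a primitive p^r-th root of unity, e = [ℚ(ζ):K], and υ = r·n − (p^{r−1}−1)/e − 1. Let q(x,y) = Tr_{K/ℚ}(x·ȳ) on the ring of integers O_K, where ¯ is complex conjugation (the identity if K is totally real), and let det(O_K,q) denote the determinant of the Gram matrix of q in a ℤ-basis of O_K. Then sup_{x ∈ K⊗ℝ} inf_{c ∈ O_K} q(x−c, x−c) ≤ n · p^{r − υ/n} · (p^{r+1} + p^r + 1 − e²)/(12·p^{r+1}) · det(O_K,q)^{1/n}, where q is extended ℝ-bilinearly to K⊗ℝ. -/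
open NumberField
open scoped TensorProduct

/-- The determinant of the Gram matrix of a bilinear form `B` on `K` with respect to
a ℤ-basis of the ring of integers of `K`. -/
noncomputable def gramDet (K : Type*) [Field K] [NumberField K]
    (B : K →ₗ[ℚ] K →ₗ[ℚ] ℚ) : ℚ :=
  letI := Classical.decEq (Module.Free.ChooseBasisIndex ℤ (𝓞 K))
  (Matrix.of fun i j => B (RingOfIntegers.basis K i) (RingOfIntegers.basis K j)).det

/-
Let `L = ℚ(ζ)`. Since `e = [L : K]` is prime to `p`, the group `H = Gal(L/K) ⊆ (ℤ/p^r)ˣ` acts freely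
off zero on `ℤ/p^r` and on its ideal of multiples of `p`, so the surjection `i ↦ p i` of `ℤ/p^r`
onto that ideal has an `H`-equivariant section. The Gauss periods `Tr_{L/K} (ζ ^ i)`, one for each
`H`-orbit off the section, form an integral basis of `K`. By Ramanujan's formula for
`Tr_{L/ℚ} (ζ ^ i)`, their Gram matrix is `p^(r-1) • (p • 1 - F)`, where `F` is block diagonal with
constant blocks, of value `e` on the block over `0` and `1` on the others. Its determinant follows
from `det (1 - A B) = det (1 - B A)`, and the lattice is an orthogonal sum of the forms
`p ∑ zᵢ² - w (∑ zᵢ)²` in `m` variables with `p = w m + 1`.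

Each of these is covered by averaging: reduce a point modulo `ℤ^m` into the unit cube, sort its
coordinates, and write it as a convex combination of the vertices of a monotone path in the cube.
The mean of the form at the differences to these vertices is at most `m (p² + p + 1 - w²) / (12 p)`,
by completing the square, so some vertex is at least that close.
-/

section Covering

variable {ι : Type*}

/-- The quadratic form `∑_{i ∈ s} p zᵢ² - e (∑_{i ∈ s} zᵢ)²` of the matrix `p • 1 - e • J`, with
`J` the all-ones matrix. Up to scaling, the trace form on a Gauss period basis is an orthogonal sum
of such forms. -/
def blockForm (s : Finset ι) (p e : ℝ) (z : ι → ℝ) : ℝ :=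
  p * ∑ i ∈ s, z i ^ 2 - e * (∑ i ∈ s, z i) ^ 2

variable {s : Finset ι} {p e : ℝ}

lemma blockForm_congr {z z' : ι → ℝ} (h : ∀ i ∈ s, z i = z' i) :
    blockForm s p e z = blockForm s p e z' := by
  rw [blockForm, blockForm, Finset.sum_congr rfl h, Finset.sum_congr rfl fun i hi => by rw [h i hi]]

lemma blockForm_nonneg (he : 0 ≤ e) (hp : e * s.card ≤ p) (z : ι → ℝ) :
    0 ≤ blockForm s p e z := by
  have cauchy_schwarz : (∑ i ∈ s, z i) ^ 2 ≤ s.card * ∑ i ∈ s, z i ^ 2 :=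
    sq_sum_le_card_mul_sum_sq
  refine sub_nonneg.2 ?_
  calc e * (∑ i ∈ s, z i) ^ 2 ≤ e * (s.card * ∑ i ∈ s, z i ^ 2) := by gcongr
    _ = e * s.card * ∑ i ∈ s, z i ^ 2 := by ring
    _ ≤ p * ∑ i ∈ s, z i ^ 2 := by gcongr

lemma blockForm_sub (s : Finset ι) (p e : ℝ) (x u : ι → ℝ) :
    blockForm s p e (x - u) = blockForm s p e x + blockForm s p e u -
      2 * (p * ∑ i ∈ s, x i * u i - e * ((∑ i ∈ s, x i) * ∑ i ∈ s, u i)) := by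
  have hsq : ∑ i ∈ s, (x i - u i) ^ 2 =
      ∑ i ∈ s, x i ^ 2 + ∑ i ∈ s, u i ^ 2 - 2 * ∑ i ∈ s, x i * u i := by
    rw [Finset.mul_sum, ← Finset.sum_add_distrib, ← Finset.sum_sub_distrib]
    exact Finset.sum_congr rfl fun i _ => by ring
  simp only [blockForm, Pi.sub_apply, hsq, Finset.sum_sub_distrib]
  ring

lemma sum_mul_sub_sq_of_mean {κ : Type*} {t : Finset κ} {g y : κ → ℝ} {μ : ℝ}
    (hg : ∑ j ∈ t, g j = 1) (hμ : ∑ j ∈ t, g j * y j = μ) :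
    ∑ j ∈ t, g j * (μ - y j) ^ 2 = ∑ j ∈ t, g j * y j ^ 2 - μ ^ 2 := by
  calc ∑ j ∈ t, g j * (μ - y j) ^ 2
      = ∑ j ∈ t, (μ ^ 2 * g j - 2 * μ * (g j * y j) + g j * y j ^ 2) :=
        Finset.sum_congr rfl fun j _ => by ring
    _ = μ ^ 2 * 1 - 2 * μ * μ + ∑ j ∈ t, g j * y j ^ 2 := by
        rw [Finset.sum_add_distrib, Finset.sum_sub_distrib, ← Finset.mul_sum, ← Finset.mul_sum,
          hg, hμ]
    _ = _ := by ring

lemma sum_mul_blockForm_sub_of_mean {κ : Type*} {t : Finset κ} {g : κ → ℝ} {v : κ → ι → ℝ}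
    {x : ι → ℝ} (hg : ∑ j ∈ t, g j = 1) (hx : ∀ i ∈ s, ∑ j ∈ t, g j * v j i = x i) :
    ∑ j ∈ t, g j * blockForm s p e (x - v j) =
      ∑ j ∈ t, g j * blockForm s p e (v j) - blockForm s p e x := by
  have expand (w : κ → ι → ℝ) : ∑ j ∈ t, g j * blockForm s p e (w j) =
      p * ∑ i ∈ s, ∑ j ∈ t, g j * w j i ^ 2 - e * ∑ j ∈ t, g j * (∑ i ∈ s, w j i) ^ 2 := by
    rw [Finset.sum_comm, Finset.mul_sum, Finset.mul_sum, ← Finset.sum_sub_distrib]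
    refine Finset.sum_congr rfl fun j _ => ?_
    rw [← Finset.mul_sum, blockForm]
    ring
  have coordinates : ∑ i ∈ s, ∑ j ∈ t, g j * (x i - v j i) ^ 2 =
      ∑ i ∈ s, ∑ j ∈ t, g j * v j i ^ 2 - ∑ i ∈ s, x i ^ 2 := by
    rw [← Finset.sum_sub_distrib]
    exact Finset.sum_congr rfl fun i hi => sum_mul_sub_sq_of_mean hg (hx i hi)
  have mean_sum : ∑ j ∈ t, g j * ∑ i ∈ s, v j i = ∑ i ∈ s, x i := by
    simp only [Finset.mul_sum]
    rw [Finset.sum_comm]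
    exact Finset.sum_congr rfl hx
  rw [expand, expand]
  simp only [Pi.sub_apply, Finset.sum_sub_distrib]
  rw [coordinates, sum_mul_sub_sq_of_mean hg mean_sum, blockForm]
  ring

lemma exists_le_of_sum_mul_le {κ : Type*} {t : Finset κ} {g f : κ → ℝ} {M : ℝ}
    (hg : ∀ j ∈ t, 0 ≤ g j) (hg1 : ∑ j ∈ t, g j = 1) (h : ∑ j ∈ t, g j * f j ≤ M) :
    ∃ j ∈ t, f j ≤ M := by
  obtain ⟨j, hj, hle⟩ := (concaveOn_id convex_univ).exists_le_of_centerMass (t := t) (w := g)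
    (p := f) hg (by rw [hg1]; exact one_pos) fun _ _ => Set.mem_univ _
  refine ⟨j, hj, hle.trans ?_⟩
  simpa only [Finset.centerMass_eq_of_sum_1 t f hg1, smul_eq_mul, id_eq] using h

/-- The `j`-th vertex of the path `(1, …, 1), (0, 1, …, 1), …, (0, …, 0)` of the unit cube. The
simplex on these vertices consists of the points of the cube with monotone coordinates. -/
def staircase (j i : ℕ) : ℝ := if j ≤ i then 1 else 0

lemma blockForm_staircase (p e : ℝ) {j m : ℕ} (hj : j ≤ m) :
    blockForm (Finset.range m) p e (staircase j) = p * (m - j) - e * (m - j) ^ 2 := by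
  have hsum : ∑ i ∈ Finset.range m, staircase j i = m - j := by
    simp only [staircase]
    rw [← Finset.sum_filter, Finset.sum_const, nsmul_one,
      show (Finset.range m).filter (j ≤ ·) = Finset.Ico j m by ext i; simp [and_comm],
      Nat.card_Ico, Nat.cast_sub hj]
  have hsq (i : ℕ) : staircase j i ^ 2 = staircase j i := by simp [staircase]
  simp only [blockForm, hsq, hsum]

lemma sum_increments_mul_staircase {X : ℕ → ℝ} (h0 : X 0 = 0) {i m : ℕ} (hi : i < m) :
    ∑ j ∈ Finset.range (m + 1), (X (j + 1) - X j) * staircase j i = X (i + 1) := by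
  simp only [staircase, mul_ite, mul_one, mul_zero]
  rw [← Finset.sum_filter, show (Finset.range (m + 1)).filter (· ≤ i) = Finset.range (i + 1) by
    ext j; simp only [Finset.mem_filter, Finset.mem_range]; omega, Finset.sum_range_sub, h0,
    sub_zero]

lemma sum_increments_mul (X a : ℕ → ℝ) (m : ℕ) :
    ∑ j ∈ Finset.range (m + 1), (X (j + 1) - X j) * a j =
      X (m + 1) * a m - X 0 * a 0 + ∑ i ∈ Finset.range m, X (i + 1) * (a i - a (i + 1)) := by
  induction m with
  | zero => simp [sub_mul]
  | succ m ih => rw [Finset.sum_range_succ, ih, Finset.sum_range_succ _ m]; ring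

lemma sum_increments_mul_blockForm_staircase {m : ℕ} (hp : p = e * m + 1) {X : ℕ → ℝ}
    (h0 : X 0 = 0) :
    ∑ j ∈ Finset.range (m + 1),
        (X (j + 1) - X j) * blockForm (Finset.range m) p e (staircase j) =
      ∑ i ∈ Finset.range m, X (i + 1) * (1 + e * (2 * i + 1 - m)) := by
  rw [sum_increments_mul, blockForm_staircase p e le_rfl, h0]
  simp only [sub_self, ne_eq, OfNat.ofNat_ne_zero, not_false_eq_true, zero_pow, mul_zero, zero_mul,
    zero_add]
  refine Finset.sum_congr rfl fun i hi => ?_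
  have hi := Finset.mem_range.1 hi
  rw [blockForm_staircase p e hi.le, blockForm_staircase p e hi, hp]
  push_cast
  ring

lemma sum_range_affine (a b : ℝ) (m : ℕ) :
    ∑ i ∈ Finset.range m, (a + b * (2 * i + 1)) = a * m + b * m ^ 2 := by
  induction m with
  | zero => simp
  | succ m ih => rw [Finset.sum_range_succ, ih]; push_cast; ring

lemma sum_range_affine_sq (a b : ℝ) (m : ℕ) :
    ∑ i ∈ Finset.range m, (a + b * (2 * i + 1)) ^ 2 =
      a ^ 2 * m + 2 * a * b * m ^ 2 + b ^ 2 * m * (4 * m ^ 2 - 1) / 3 := by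
  induction m with
  | zero => simp
  | succ m ih => rw [Finset.sum_range_succ, ih]; push_cast; ring

-- Completing the square around the point `u` with coordinates `(1 + e (2i + 1)) / (2p)`.
lemma sum_mul_affine_sub_blockForm_le {m : ℕ} (he : 0 ≤ e) (hp : p = e * m + 1) (x : ℕ → ℝ) :
    ∑ i ∈ Finset.range m, x i * (1 + e * (2 * i + 1 - m)) - blockForm (Finset.range m) p e x ≤
      m * (p ^ 2 + p + 1 - e ^ 2) / (12 * p) := by
  have hp0 : 0 < p := by rw [hp]; positivity
  set u : ℕ → ℝ := fun i => 1 / (2 * p) + e / (2 * p) * (2 * i + 1) with hu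
  have hu_sum : ∑ i ∈ Finset.range m, u i = m / 2 := by
    rw [sum_range_affine, hp]
    field_simp
    ring
  have hu_form : blockForm (Finset.range m) p e u = m * (p ^ 2 + p + 1 - e ^ 2) / (12 * p) := by
    rw [blockForm, hu_sum, sum_range_affine_sq]
    field_simp
    rw [hp]
    ring
  have hxu : ∑ i ∈ Finset.range m, x i * (1 + e * (2 * i + 1 - m)) =
      2 * (p * ∑ i ∈ Finset.range m, x i * u i
        - e * ((∑ i ∈ Finset.range m, x i) * ∑ i ∈ Finset.range m, u i)) := by
    rw [hu_sum, Finset.mul_sum, Finset.sum_mul, Finset.mul_sum, ← Finset.sum_sub_distrib,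
      Finset.mul_sum]
    refine Finset.sum_congr rfl fun i _ => ?_
    simp only [hu]
    field_simp
    ring
  have hnonneg : 0 ≤ blockForm (Finset.range m) p e (x - u) :=
    blockForm_nonneg he (by rw [Finset.card_range, hp]; linarith) _
  rw [blockForm_sub, ← hxu, hu_form] at hnonneg
  linarith

lemma exists_blockForm_sub_staircase_le {m : ℕ} (he : 0 ≤ e) (hp : p = e * m + 1) {X : ℕ → ℝ}
    (hX : Monotone X) (h0 : X 0 = 0) (h1 : X (m + 1) = 1) :
    ∃ j, blockForm (Finset.range m) p e ((fun i => X (i + 1)) - staircase j) ≤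
      m * (p ^ 2 + p + 1 - e ^ 2) / (12 * p) := by
  have weights : ∑ j ∈ Finset.range (m + 1), (X (j + 1) - X j) = 1 := by
    rw [Finset.sum_range_sub, h1, h0, sub_zero]
  obtain ⟨j, -, hj⟩ := exists_le_of_sum_mul_le (fun j _ => sub_nonneg.2 (hX j.le_succ)) weights <|
    calc ∑ j ∈ Finset.range (m + 1), (X (j + 1) - X j) *
          blockForm (Finset.range m) p e ((fun i => X (i + 1)) - staircase j)
        = ∑ i ∈ Finset.range m, X (i + 1) * (1 + e * (2 * i + 1 - m)) -
            blockForm (Finset.range m) p e (fun i => X (i + 1)) := by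
          rw [sum_mul_blockForm_sub_of_mean weights fun i hi =>
              sum_increments_mul_staircase h0 (Finset.mem_range.1 hi),
            sum_increments_mul_blockForm_staircase hp h0]
      _ ≤ _ := sum_mul_affine_sub_blockForm_le he hp _
  exact ⟨j, hj⟩

lemma exists_equiv_fin_monotone (s : Finset ι) (f : ι → ℝ) :
    ∃ E : Fin s.card ≃ s, Monotone fun i => f (E i) :=
  ⟨(Tuple.sort fun i => f (s.equivFin.symm i)).trans s.equivFin.symm,
    Tuple.monotone_sort fun i => f (s.equivFin.symm i)⟩

lemma exists_int_blockForm_sub_le (he : 0 ≤ e) (hp : p = e * s.card + 1) (x : ι → ℝ) :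
    ∃ c : ι → ℤ, blockForm s p e (fun i => x i - c i) ≤
      s.card * (p ^ 2 + p + 1 - e ^ 2) / (12 * p) := by
  classical
  obtain ⟨E, hE⟩ := exists_equiv_fin_monotone s fun i => Int.fract (x i)
  let X : ℕ → ℝ := fun k => k.casesOn 0 fun i =>
    if h : i < s.card then Int.fract (x (E ⟨i, h⟩)) else 1
  have hX : Monotone X := by
    refine monotone_nat_of_le_succ fun k => ?_
    rcases k with - | i
    · simp only [X]
      split_ifs <;> simp [Int.fract_nonneg]
    · by_cases h : i + 1 < s.card
      · simpa [X, h, Nat.lt_of_succ_lt h] using hE (Fin.mk_le_mk.2 i.le_succ)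
      · simp only [X, h, dite_false]
        split_ifs <;> simp [(Int.fract_lt_one _).le]
  obtain ⟨j, hj⟩ := exists_blockForm_sub_staircase_le he hp hX rfl (by simp [X])
  let c : ι → ℤ := fun i =>
    ⌊x i⌋ + if h : i ∈ s then if j ≤ E.symm ⟨i, h⟩ then 1 else 0 else 0
  have sum_eq (g : ℝ → ℝ) : ∑ i ∈ s, g (x i - c i) =
      ∑ i ∈ Finset.range s.card, g (X (i + 1) - staircase j i) := by
    rw [← Finset.sum_coe_sort, Finset.sum_range, ← Equiv.sum_comp E]
    refine Finset.sum_congr rfl fun i _ => congrArg g ?_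
    simp only [c, X, staircase, Int.fract, (E i).2, i.2, dite_true, Subtype.coe_eta,
      Equiv.symm_apply_apply, Fin.eta]
    push_cast
    ring
  refine ⟨c, le_of_eq_of_le ?_ hj⟩
  simp only [blockForm, Pi.sub_apply]
  rw [sum_eq (· ^ 2), sum_eq fun z => z]

end Covering

section FiberMatrix

open Matrix

variable {R ι α : Type*} [CommRing R] [DecidableEq α]

/-- The incidence matrix of `cl : ι → α`, whose row `a` is the indicator function of the fiber
over `a`. -/
def fiberIncidence (R : Type*) [CommRing R] (cl : ι → α) : Matrix α ι R :=
  of fun a i => if cl i = a then 1 else 0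

lemma fiberIncidence_mulVec [Fintype ι] (cl : ι → α) (z : ι → R) (a : α) :
    (fiberIncidence R cl *ᵥ z) a = ∑ i with cl i = a, z i := by
  simp only [fiberIncidence, mulVec, dotProduct, of_apply, ite_mul, one_mul, zero_mul,
    Finset.sum_filter]

lemma fiberIncidence_mul_transpose [Fintype ι] (cl : ι → α) :
    fiberIncidence R cl * (fiberIncidence R cl)ᵀ =
      diagonal fun a => ((Finset.univ.filter (cl · = a)).card : R) := by
  ext a b
  simp only [fiberIncidence, mul_apply, transpose_apply, of_apply, diagonal_apply, mul_ite,
    mul_one, mul_zero]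
  split_ifs with hab
  · simp [hab, ← Finset.sum_filter, Finset.filter_filter]
  · exact Finset.sum_eq_zero fun i _ => by
      split_ifs with hb ha
      · exact absurd (ha.symm.trans hb) hab
      all_goals rfl

variable [Fintype α]

/-- The block matrix indexed by `ι` whose diagonal blocks are the fibers of `cl`, the block over `a`
being constant with value `w a`. -/
def fiberMatrix (cl : ι → α) (w : α → R) : Matrix ι ι R :=
  (fiberIncidence R cl)ᵀ * diagonal w * fiberIncidence R cl

lemma fiberMatrix_apply (cl : ι → α) (w : α → R) (i j : ι) :
    fiberMatrix cl w i j = if cl i = cl j then w (cl i) else 0 := by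
  rw [fiberMatrix, mul_apply]
  simp only [mul_diagonal, fiberIncidence, transpose_apply, of_apply, mul_ite, mul_one, mul_zero,
    ite_mul, one_mul, zero_mul, Finset.sum_ite_eq, Finset.mem_univ, if_true]
  split_ifs with h
  · rw [h]
  · rfl

variable [Fintype ι] {cl : ι → α} {w : α → R} {p : R}

lemma fiberIncidence_mul_transpose_mul_diagonal
    (hp : ∀ a, p = w a * (Finset.univ.filter (cl · = a)).card + 1) :
    fiberIncidence R cl * (fiberIncidence R cl)ᵀ * diagonal w = (p - 1) • 1 := by
  rw [fiberIncidence_mul_transpose, diagonal_mul_diagonal, smul_one_eq_diagonal]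
  congr 1
  funext a
  rw [hp a, add_sub_cancel_right, mul_comm]

variable [DecidableEq ι]

lemma smul_one_sub_fiberMatrix_mul (hp : ∀ a, p = w a * (Finset.univ.filter (cl · = a)).card + 1) :
    (p • 1 - fiberMatrix cl w) * (1 + fiberMatrix cl w) = p • 1 := by
  have hsq : fiberMatrix cl w * fiberMatrix cl w = (p - 1) • fiberMatrix cl w := by
    calc fiberMatrix cl w * fiberMatrix cl w
        = (fiberIncidence R cl)ᵀ * diagonal w * (fiberIncidence R cl * (fiberIncidence R cl)ᵀ *
            diagonal w) * fiberIncidence R cl := by simp only [fiberMatrix, Matrix.mul_assoc]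
      _ = (p - 1) • fiberMatrix cl w := by
        rw [fiberIncidence_mul_transpose_mul_diagonal hp, Matrix.mul_smul, Matrix.mul_one,
          smul_mul, fiberMatrix]
  rw [sub_mul, mul_add, mul_add, hsq]
  simp only [mul_one, smul_mul_assoc, one_mul, sub_smul, one_smul]
  abel

-- Up to powers of `X`, the matrices `A * B` and `B * A` have the same characteristic polynomial.
lemma pow_mul_det_smul_one_sub_fiberMatrix
    (hp : ∀ a, p = w a * (Finset.univ.filter (cl · = a)).card + 1) :
    p ^ Fintype.card α * (p • 1 - fiberMatrix cl w).det = p ^ Fintype.card ι := by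
  have h := congrArg (Polynomial.eval p)
    (charpoly_mul_comm' ((fiberIncidence R cl)ᵀ * diagonal w) (fiberIncidence R cl))
  rw [← Matrix.mul_assoc, fiberIncidence_mul_transpose_mul_diagonal hp, ← fiberMatrix] at h
  simpa only [Polynomial.eval_mul, Polynomial.eval_pow, Polynomial.eval_X, eval_charpoly,
    scalar_apply, ← smul_one_eq_diagonal, ← sub_smul, sub_sub_cancel, one_smul, det_one,
    mul_one] using h

lemma dotProduct_smul_one_sub_fiberMatrix_mulVec (p : ℝ) (cl : ι → α) (w : α → ℝ) (z : ι → ℝ) :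
    z ⬝ᵥ (p • 1 - fiberMatrix cl w) *ᵥ z =
      ∑ a, blockForm (Finset.univ.filter (cl · = a)) p (w a) z := by
  have hfiber : z ⬝ᵥ fiberMatrix cl w *ᵥ z = ∑ a, w a * (∑ i with cl i = a, z i) ^ 2 := by
    rw [fiberMatrix, ← mulVec_mulVec, ← mulVec_mulVec, dotProduct_mulVec, vecMul_transpose]
    refine Finset.sum_congr rfl fun a _ => ?_
    rw [mulVec_diagonal, fiberIncidence_mulVec]
    ring
  rw [sub_mulVec, smul_mulVec, one_mulVec, dotProduct_sub, dotProduct_smul, hfiber, smul_eq_mul]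
  simp only [blockForm, Finset.sum_sub_distrib, ← Finset.mul_sum, Finset.sum_fiberwise]
  simp only [dotProduct, sq]

end FiberMatrix

section FreeOffZero

open MulAction

variable {H M A : Type*} [Group H] [AddCommGroup M] [DistribMulAction H M] [AddCommGroup A]
  [DistribMulAction H A]

/-- The point of the orbit space `A / H` under `a`. -/
abbrev toOrbit (H : Type*) {A : Type*} [Group H] [MulAction H A] (a : A) : orbitRel.Quotient H A :=
  Quotient.mk (orbitRel H A) a

lemma toOrbit_eq_iff {a b : A} : toOrbit H a = toOrbit H b ↔ ∃ h : H, h • b = a := by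
  rw [Quotient.eq, orbitRel_apply, mem_orbit_iff]

lemma toOrbit_out (ω : orbitRel.Quotient H A) : toOrbit H ω.out = ω := Quotient.out_eq ω

lemma toOrbit_eq_zero_iff {a : A} : toOrbit H a = toOrbit H 0 ↔ a = 0 := by
  simp [toOrbit_eq_iff, eq_comm]

lemma exists_smul_out_eq (a : A) : ∃ h : H, h • (toOrbit H a).out = a :=
  toOrbit_eq_iff.1 (toOrbit_out (toOrbit H a)).symm

/-- The linear action of `H` on `A` is free away from the origin. -/
def IsFreeOffZero (H A : Type*) [Group H] [AddCommGroup A] [DistribMulAction H A] : Prop :=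
  ∀ (h : H) (a : A), a ≠ 0 → h • a = a → h = 1

lemma IsFreeOffZero.smul_left_injective (hfree : IsFreeOffZero H A) {a : A} (ha : a ≠ 0) :
    Function.Injective fun h : H => h • a := fun g h hgh =>
  (inv_mul_eq_one.1 (hfree (h⁻¹ * g) a ha (by rw [mul_smul, inv_smul_eq_iff]; exact hgh))).symm

/-- The common order of the stabilizers of the points in an orbit of an action that is free away
from the origin. -/
noncomputable def orbitWeight [DecidableEq (orbitRel.Quotient H A)] (ω : orbitRel.Quotient H A) :
    ℕ :=
  if ω = toOrbit H 0 then Nat.card H else 1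

lemma orbitWeight_ne_zero [Finite H] [DecidableEq (orbitRel.Quotient H A)]
    (ω : orbitRel.Quotient H A) : orbitWeight ω ≠ 0 := by
  rw [orbitWeight]
  split_ifs
  exacts [Nat.card_pos.ne', one_ne_zero]

lemma IsFreeOffZero.card_smul_eq [Fintype H] [DecidableEq A]
    [DecidableEq (orbitRel.Quotient H A)] (hfree : IsFreeOffZero H A) (a b : A) :
    (Finset.univ.filter fun h : H => a = h • b).card =
      if toOrbit H a = toOrbit H b then orbitWeight (toOrbit H a) else 0 := by
  split_ifs with hab
  · obtain ⟨g, rfl⟩ := toOrbit_eq_iff.1 hab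
    by_cases hb : b = 0
    · simp [hb, orbitWeight]
    · have : (Finset.univ.filter fun h : H => g • b = h • b) = {g} := by
        ext h
        simpa [eq_comm] using (hfree.smul_left_injective hb).eq_iff (a := h) (b := g)
      rw [this, Finset.card_singleton, orbitWeight,
        if_neg fun h => hb ((smul_eq_zero_iff_eq g).1 (toOrbit_eq_zero_iff.1 h))]
  · exact Finset.card_eq_zero.2 <| Finset.filter_eq_empty_iff.2 fun h _ hh =>
      hab (toOrbit_eq_iff.2 ⟨h, hh.symm⟩)

lemma IsFreeOffZero.card_add_card [Finite H] [Finite A] (hfree : IsFreeOffZero H A) :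
    Nat.card A + Nat.card H = Nat.card (orbitRel.Quotient H A) * Nat.card H + 1 := by
  classical
  have := Fintype.ofFinite H
  have := Fintype.ofFinite A
  have fixed_one : Fintype.card (fixedBy A (1 : H)) = Fintype.card A := by
    simp [fixedBy]
  have fixed_ne_one : ∀ h ∈ Finset.univ.erase (1 : H), Fintype.card (fixedBy A h) = 1 := by
    refine fun h hh => Fintype.card_eq_one_iff.2 ⟨⟨0, smul_zero h⟩, fun a => ?_⟩
    by_contra ha
    exact Finset.ne_of_mem_erase hh (hfree h a (fun h0 => ha (Subtype.ext h0)) a.2)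
  have burnside := sum_card_fixedBy_eq_card_orbits_mul_card_group H A
  rw [← Finset.add_sum_erase _ _ (Finset.mem_univ 1), fixed_one, Finset.sum_congr rfl fixed_ne_one,
    Finset.sum_const, smul_eq_mul, mul_one, Finset.card_erase_of_mem (Finset.mem_univ _),
    Finset.card_univ] at burnside
  simp only [Nat.card_eq_fintype_card, orbitRel.Quotient]
  have : 0 < Fintype.card H := Fintype.card_pos
  omega

lemma sum_orbitWeight_add [Fintype (orbitRel.Quotient H A)]
    [DecidableEq (orbitRel.Quotient H A)] {R : Type*} [Semiring R] (F : ℕ → R) :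
    ∑ ω : orbitRel.Quotient H A, F (orbitWeight ω) + F 1 =
      F (Nat.card H) + Nat.card (orbitRel.Quotient H A) * F 1 := by
  have h := Finset.sum_erase_add (f := fun ω => F (orbitWeight ω)) _
    (Finset.mem_univ (toOrbit H (0 : A)))
  rw [Finset.sum_congr rfl fun ω hω => by rw [orbitWeight, if_neg (Finset.ne_of_mem_erase hω)],
    Finset.sum_const, orbitWeight, if_pos rfl, nsmul_eq_mul] at h
  rw [← h, add_right_comm, ← add_one_mul, ← Nat.cast_add_one,
    Finset.card_erase_add_one (Finset.mem_univ _), Finset.card_univ,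
    ← Nat.card_eq_fintype_card (α := orbitRel.Quotient H A), add_comm]

lemma exists_equivariant_section (hfree : IsFreeOffZero H A) {f : M →+[H] A}
    (hf : Function.Surjective f) : ∃ s : A →[H] M, s 0 = 0 ∧ ∀ a, f (s a) = a := by
  obtain ⟨lift, hlift, hlift0⟩ : ∃ lift : A → M, (∀ a, f (lift a) = a) ∧ lift 0 = 0 := by
    classical
    refine ⟨Function.update (Function.surjInv hf) 0 0, fun a => ?_, Function.update_self ..⟩
    rcases eq_or_ne a 0 with rfl | ha
    · rw [Function.update_self, map_zero]
    · rw [Function.update_of_ne ha, Function.surjInv_eq hf]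
  choose γ hγ using exists_smul_out_eq (H := H) (A := A)
  have hs0 {a : A} (ha : a = 0) : γ a • lift (toOrbit H a).out = 0 := by
    have : (toOrbit H a).out = 0 := by rw [← smul_eq_zero_iff_eq (γ a), hγ, ha]
    rw [this, hlift0, smul_zero]
  refine ⟨⟨fun a => γ a • lift (toOrbit H a).out, fun h a => ?_⟩, hs0 rfl, fun a => ?_⟩
  · rcases eq_or_ne a 0 with ha | ha
    · rw [hs0 ha, hs0 (by rw [ha, smul_zero]), smul_zero]
    · have horbit : toOrbit H (h • a) = toOrbit H a := toOrbit_eq_iff.2 ⟨h, rfl⟩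
      have hγh : γ (h • a) = h * γ a := by
        refine hfree.smul_left_injective (a := (toOrbit H a).out) ?_ ?_
        · rwa [← smul_ne_zero_iff_ne (γ a), hγ]
        · simp only [mul_smul, hγ a]
          rw [← horbit, hγ]
      rw [hγh, horbit, mul_smul, id]
  · change f (γ a • lift _) = a
    rw [map_smul, hlift, hγ]

/-- The orbits of `H` on `M` that do not meet the image of `s : A →[H] M`. When `s` is a section of
`f : M → A`, these orbits index a Gauss period basis. -/
abbrev OrbitsOff (s : A →[H] M) : Type _ :=
  {x : orbitRel.Quotient H M // x.out ∉ Set.range s}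

/-- The orbit of `A` below a given orbit of `M`. -/
noncomputable def orbitImage (f : M →+[H] A) {s : A →[H] M} (x : OrbitsOff s) :
    orbitRel.Quotient H A :=
  toOrbit H (f x.1.out)

variable {f : M →+[H] A} {s : A →[H] M}

lemma OrbitsOff.out_ne_zero (hs0 : s 0 = 0) (x : OrbitsOff s) : x.1.out ≠ 0 :=
  fun h => x.2 ⟨0, hs0.trans h.symm⟩

lemma toOrbit_out_mem_range_iff {m : M} : (toOrbit H m).out ∈ Set.range s ↔ m ∈ Set.range s := by
  obtain ⟨h, hh⟩ := exists_smul_out_eq (H := H) m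
  constructor
  · rintro ⟨a, ha⟩
    exact ⟨h • a, by rw [map_smul, ha, hh]⟩
  · rintro ⟨a, ha⟩
    exact ⟨h⁻¹ • a, by rw [map_smul, ha, inv_smul_eq_iff, hh]⟩

lemma notMem_range_of_ne_section (hfs : ∀ a, f (s a) = a) {m : M} (hm : m ≠ s (f m)) :
    m ∉ Set.range s := by
  rintro ⟨a, rfl⟩
  exact hm (by rw [hfs])

lemma OrbitsOff.card_smul_eq [Fintype H] [DecidableEq M] [DecidableEq (OrbitsOff s)]
    (hfree : IsFreeOffZero H M) (hs0 : s 0 = 0) (x y : OrbitsOff s) :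
    (Finset.univ.filter fun h : H => x.1.out = h • y.1.out).card = if x = y then 1 else 0 := by
  classical
  rw [hfree.card_smul_eq, orbitWeight, if_neg (mt toOrbit_eq_zero_iff.1 (x.out_ne_zero hs0))]
  refine if_congr ?_ rfl rfl
  rw [toOrbit_out, toOrbit_out, Subtype.ext_iff]

lemma OrbitsOff.card_fiber_inter_orbit [Finite H] [Fintype M] [DecidableEq A]
    [DecidableEq (orbitRel.Quotient H M)] [DecidableEq (orbitRel.Quotient H A)]
    (hM : IsFreeOffZero H M) (hA : IsFreeOffZero H A) (hs0 : s 0 = 0) (x : OrbitsOff s) :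
    (Finset.univ.filter fun m : M => f m = (orbitImage f x).out ∧ toOrbit H m = x).card =
      orbitWeight (orbitImage f x) := by
  classical
  have := Fintype.ofFinite H
  have hcard := hA.card_smul_eq (orbitImage f x).out (f x.1.out)
  rw [toOrbit_out, ← orbitImage, if_pos rfl] at hcard
  rw [← hcard, ← Finset.card_image_of_injective _ (hM.smul_left_injective (x.out_ne_zero hs0))]
  congr 1
  ext m
  simp only [Finset.mem_filter, Finset.mem_univ, true_and, Finset.mem_image]
  constructor
  · rintro ⟨hm, hx⟩
    obtain ⟨h, rfl⟩ := toOrbit_eq_iff.1 (hx.trans (toOrbit_out _).symm)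
    exact ⟨h, by rw [← hm, map_smul], rfl⟩
  · rintro ⟨h, hh, rfl⟩
    exact ⟨by rw [map_smul, hh], (toOrbit_eq_iff.2 ⟨h, rfl⟩).trans (toOrbit_out _)⟩

lemma card_fiber_eq_orbitWeight_mul_add_one [Finite H] [Fintype M] [DecidableEq A]
    [Fintype (OrbitsOff s)] [DecidableEq (orbitRel.Quotient H A)]
    (hM : IsFreeOffZero H M) (hA : IsFreeOffZero H A) (hs0 : s 0 = 0) (hfs : ∀ a, f (s a) = a)
    (ω : orbitRel.Quotient H A) :
    (Finset.univ.filter fun m => f m = ω.out).card =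
      orbitWeight ω *
        (Finset.univ.filter fun x : OrbitsOff s => orbitImage f x = ω).card + 1 := by
  classical
  have hsω : s ω.out ∈ Finset.univ.filter fun m => f m = ω.out := by simp [hfs]
  rw [← Finset.card_erase_add_one hsω, add_left_inj]
  have maps_to : ∀ m ∈ (Finset.univ.filter fun m => f m = ω.out).erase (s ω.out), toOrbit H m ∈
      (Finset.univ.filter fun x : OrbitsOff s => orbitImage f x = ω).image Subtype.val := by
    intro m hm
    obtain ⟨hne, hm⟩ := Finset.mem_erase.1 hm
    have hm : f m = ω.out := (Finset.mem_filter.1 hm).2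
    have hoff := mt toOrbit_out_mem_range_iff.1 (notMem_range_of_ne_section hfs (by rwa [hm]))
    refine Finset.mem_image.2
      ⟨⟨toOrbit H m, hoff⟩, Finset.mem_filter.2 ⟨Finset.mem_univ _, ?_⟩, rfl⟩
    obtain ⟨h, hh⟩ := exists_smul_out_eq (H := H) m
    rw [← toOrbit_out ω, ← hm]
    exact (toOrbit_eq_iff.2 ⟨h, by rw [← map_smul, hh]⟩).symm
  rw [Finset.card_eq_sum_card_fiberwise maps_to, Finset.sum_image Subtype.val_injective.injOn,
    mul_comm]
  refine Finset.sum_const_nat fun x hx => ?_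
  obtain rfl : orbitImage f x = ω := (Finset.mem_filter.1 hx).2
  rw [← OrbitsOff.card_fiber_inter_orbit hM hA hs0]
  congr 1
  ext m
  simp only [Finset.mem_filter, Finset.mem_erase, Finset.mem_univ, true_and, and_assoc,
    and_iff_right_iff_imp, and_imp]
  rintro - hmx rfl
  exact x.2 (hmx ▸ toOrbit_out_mem_range_iff.2 ⟨_, rfl⟩)

lemma mem_span_range_of_sum_fiber_eq_zero [Fintype M] [DecidableEq A] {N : Type*} [AddCommGroup N]
    (hfs : ∀ a, f (s a) = a) {t : M → N} (ht : ∀ (h : H) m, t (h • m) = t m)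
    (hsum : ∀ a, ∑ m with f m = a, t m = 0) (m : M) :
    t m ∈ Submodule.span ℤ (Set.range fun x : OrbitsOff s => t x.1.out) := by
  classical
  have off {m : M} (hm : m ∉ Set.range s) :
      t m ∈ Submodule.span ℤ (Set.range fun x : OrbitsOff s => t x.1.out) := by
    refine Submodule.subset_span ⟨⟨toOrbit H m, mt toOrbit_out_mem_range_iff.1 hm⟩, ?_⟩
    obtain ⟨h, hh⟩ := exists_smul_out_eq (H := H) m
    calc t (toOrbit H m).out = t (h • (toOrbit H m).out) := (ht h _).symm
      _ = t m := by rw [hh]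
  by_cases hm : m ∈ Set.range s
  · obtain ⟨a, rfl⟩ := hm
    have hsa : s a ∈ Finset.univ.filter fun m => f m = a := by simp [hfs]
    rw [eq_neg_of_add_eq_zero_left ((Finset.add_sum_erase _ t hsa).trans (hsum a))]
    refine neg_mem (sum_mem fun m hm => off (notMem_range_of_ne_section hfs ?_))
    obtain ⟨hne, hm⟩ := Finset.mem_erase.1 hm
    rwa [(Finset.mem_filter.1 hm).2]
  · exact off hm

end FreeOffZero

section ZModPrimePow

variable {p r : ℕ}

/-- The ideal of multiples of `p` in `ℤ/p^r`, defined as a range so that multiplication by `p` maps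
onto it. -/
abbrev primeMultiples (p r : ℕ) : Submodule (ZMod (p ^ r)) (ZMod (p ^ r)) :=
  LinearMap.range (LinearMap.mulLeft (ZMod (p ^ r)) (p : ZMod (p ^ r)))

/-- Multiplication by `p` on `ℤ/p^r`, as a map commuting with a group `H` of units. -/
def mulPrime (p r : ℕ) (H : Subgroup (ZMod (p ^ r))ˣ) : ZMod (p ^ r) →+[H] primeMultiples p r where
  toFun i := ⟨p * i, i, rfl⟩
  map_smul' h i := Subtype.ext (mul_left_comm _ (((h : (ZMod (p ^ r))ˣ) : ZMod (p ^ r))) i)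
  map_zero' := Subtype.ext (mul_zero _)
  map_add' i j := Subtype.ext (mul_add _ i j)

lemma mulPrime_surjective (H : Subgroup (ZMod (p ^ r))ˣ) : Function.Surjective (mulPrime p r H) :=
  fun ⟨_, i, hi⟩ => ⟨i, Subtype.ext hi⟩

lemma mulPrime_eq_iff {H : Subgroup (ZMod (p ^ r))ˣ} {i j : ZMod (p ^ r)} :
    mulPrime p r H i = mulPrime p r H j ↔ (p : ZMod (p ^ r)) * (i - j) = 0 := by
  rw [mul_sub, sub_eq_zero]
  exact Subtype.ext_iff

lemma not_isUnit_iff_mem_primeMultiples (hp : p.Prime) (hr : 1 ≤ r) {x : ZMod (p ^ r)} :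
    ¬ IsUnit x ↔ x ∈ primeMultiples p r := by
  have : NeZero (p ^ r) := ⟨pow_ne_zero r hp.ne_zero⟩
  constructor
  · intro h
    rw [← ZMod.natCast_zmod_val x, ZMod.isUnit_iff_coprime,
      Nat.coprime_pow_right_iff (by omega), Nat.coprime_comm, hp.coprime_iff_not_dvd, not_not] at h
    obtain ⟨y, hy⟩ := h
    exact ⟨y, by rw [LinearMap.mulLeft_apply, ← Nat.cast_mul, ← hy, ZMod.natCast_zmod_val]⟩
  · rintro ⟨y, rfl⟩ h
    have hunit := isUnit_of_mul_isUnit_left h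
    rw [ZMod.isUnit_iff_coprime, Nat.coprime_pow_right_iff (by omega), Nat.coprime_self] at hunit
    exact hp.one_lt.ne' hunit

lemma card_primeMultiples (hp : p.Prime) (hr : 1 ≤ r) :
    Nat.card (primeMultiples p r) = p ^ (r - 1) := by
  have : NeZero (p ^ r) := ⟨pow_ne_zero r hp.ne_zero⟩
  have hrange : (primeMultiples p r).toAddSubgroup =
      (nsmulAddMonoidHom p : ZMod (p ^ r) →+ _).range := by
    ext x
    simp [nsmul_eq_mul]
  calc Nat.card (primeMultiples p r)
      = Nat.card (nsmulAddMonoidHom p : ZMod (p ^ r) →+ _).range := by rw [← hrange]; rfl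
    _ = p ^ r / p := by
      rw [IsAddCyclic.card_nsmulAddMonoidHom_range, Nat.card_zmod,
        Nat.gcd_eq_right (dvd_pow_self p (by omega))]
    _ = p ^ (r - 1) := by rw [← Nat.pow_div hr hp.pos, pow_one]

lemma card_fiber_mulPrime (hp : p.Prime) (hr : 1 ≤ r) [NeZero (p ^ r)]
    (H : Subgroup (ZMod (p ^ r))ˣ) (a : primeMultiples p r) :
    (Finset.univ.filter fun i => mulPrime p r H i = a).card = p := by
  have hcard := Finset.card_eq_sum_card_fiberwise (f := mulPrime p r H)
    (s := Finset.univ) (t := Finset.univ) (by simp)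
  rw [Finset.sum_const_nat fun b _ => AddMonoidHom.card_fiber_eq_of_mem_range (mulPrime p r H)
      (mulPrime_surjective H b) (mulPrime_surjective H a), Finset.card_univ, Finset.card_univ,
    ZMod.card, ← Nat.card_eq_fintype_card, card_primeMultiples hp hr] at hcard
  refine Nat.eq_of_mul_eq_mul_left (pow_pos hp.pos (r - 1)) (hcard.symm.trans ?_)
  rw [← pow_succ, Nat.sub_add_cancel hr]

lemma isUnit_sub_one_of_coprime_orderOf (hp : p.Prime) (hr : 1 ≤ r) {u : (ZMod (p ^ r))ˣ}
    (hcop : p.Coprime (orderOf u)) (hu : u ≠ 1) : IsUnit ((u : ZMod (p ^ r)) - 1) := by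
  by_contra h
  obtain ⟨y, hy⟩ := (not_isUnit_iff_mem_primeMultiples hp hr).1 h
  have hdvd := dvd_sub_pow_of_dvd_sub (Dvd.intro y hy) (r - 1)
  have hpow : (p : ZMod (p ^ r)) ^ (r - 1 + 1) = 0 := by
    rw [Nat.sub_add_cancel hr, ← Nat.cast_pow, ZMod.natCast_self]
  rw [hpow, zero_dvd_iff, one_pow, sub_eq_zero] at hdvd
  have horder : orderOf u ∣ p ^ (r - 1) :=
    orderOf_dvd_of_pow_eq_one (Units.ext (by simpa using hdvd))
  exact hu <| orderOf_eq_one_iff.1 <|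
    Nat.eq_one_of_dvd_coprimes (hcop.pow_left (r - 1)) horder dvd_rfl

lemma isFreeOffZero_of_coprime_card (hp : p.Prime) (hr : 1 ≤ r) {H : Subgroup (ZMod (p ^ r))ˣ}
    (hcop : p.Coprime (Nat.card H)) (M : Type*) [AddCommGroup M] [Module (ZMod (p ^ r)) M] :
    IsFreeOffZero H M := by
  intro h a ha hfix
  by_contra hne
  have hcop' := hcop.coprime_dvd_right (Subgroup.orderOf_dvd_natCard H h.2)
  have hunit := isUnit_sub_one_of_coprime_orderOf hp hr hcop' (mt OneMemClass.coe_eq_one.1 hne)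
  refine ha (hunit.smul_eq_zero.1 ?_)
  rw [sub_smul, one_smul, sub_eq_zero]
  exact hfix

end ZModPrimePow

section RamanujanSum

lemma sum_fiber_addChar_eq_zero {G G' F R : Type*} [AddCommGroup G] [Fintype G] [AddCommGroup G']
    [DecidableEq G'] [FunLike F G G'] [AddMonoidHomClass F G G'] [CommRing R] [IsDomain R]
    {f : F} {ψ : AddChar G R} {g : G} (hf : f g = 0) (hψ : ψ g ≠ 1) (a : G') :
    ∑ x with f x = a, ψ x = 0 := by
  have hshift : ψ g * ∑ x with f x = a, ψ x = ∑ x with f x = a, ψ x := by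
    rw [Finset.mul_sum]
    refine Finset.sum_equiv (Equiv.addLeft g) (fun x => ?_) fun x _ => ?_
    · simp [hf]
    · rw [Equiv.coe_addLeft, AddChar.map_add_eq_mul]
  by_contra hne
  exact hψ ((mul_eq_right₀ hne).1 hshift)

variable {p r : ℕ} [NeZero (p ^ r)] {R : Type*} [CommRing R] [IsDomain R]
  {ψ : AddChar (ZMod (p ^ r)) R}

lemma sum_fiber_mulPrime_eq_zero (hp : p.Prime) (hr : 1 ≤ r) (hψ : ψ.IsPrimitive)
    (H : Subgroup (ZMod (p ^ r))ˣ) (a : primeMultiples p r) :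
    ∑ i with mulPrime p r H i = a, ψ i = 0 := by
  have hne : (p : ZMod (p ^ r)) ^ (r - 1) ≠ 0 := by
    rw [← Nat.cast_pow, Ne, ZMod.natCast_eq_zero_iff, Nat.pow_dvd_pow_iff_le_right hp.one_lt]
    omega
  obtain ⟨x, hx⟩ := DFunLike.ne_iff.1 (hψ hne)
  refine sum_fiber_addChar_eq_zero (g := (p : ZMod (p ^ r)) ^ (r - 1) * x) ?_ hx a
  rw [← map_zero (mulPrime p r H), mulPrime_eq_iff, sub_zero, ← mul_assoc, ← pow_succ',
    Nat.sub_add_cancel hr, ← Nat.cast_pow, ZMod.natCast_self, zero_mul]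

lemma sum_primeMultiples (hp : p.Prime) (hr : 1 ≤ r) (hψ : ψ.IsPrimitive) (i : ZMod (p ^ r)) :
    ∑ a : primeMultiples p r, ψ (a * i) =
      if (p : ZMod (p ^ r)) * i = 0 then (p : R) ^ (r - 1) else 0 := by
  classical
  let χ : AddChar (primeMultiples p r) R := ψ.compAddMonoidHom
    ((AddMonoidHom.mulRight i).comp (primeMultiples p r).subtype.toAddMonoidHom)
  have hχ : χ = 0 ↔ (p : ZMod (p ^ r)) * i = 0 := by
    constructor
    · intro h
      by_contra hi
      refine hψ hi (DFunLike.ext _ _ fun y => ?_)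
      rw [AddChar.mulShift_apply, mul_right_comm]
      exact DFunLike.congr_fun h ⟨p * y, y, rfl⟩
    · refine fun h => DFunLike.ext _ _ ?_
      rintro ⟨_, y, rfl⟩
      change ψ (p * y * i) = 1
      rw [mul_right_comm, h, zero_mul, AddChar.map_zero_eq_one]
  calc ∑ a : primeMultiples p r, ψ (a * i) = ∑ a, χ a := rfl
    _ = _ := by
      rw [AddChar.sum_eq_ite, ← Nat.card_eq_fintype_card, card_primeMultiples hp hr, Nat.cast_pow]
      exact if_congr hχ rfl rfl

lemma sum_units_eq (hp : p.Prime) (hr : 1 ≤ r) (hψ : ψ.IsPrimitive) (i : ZMod (p ^ r)) :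
    ∑ u : (ZMod (p ^ r))ˣ, ψ (u * i) = (if i = 0 then (p : R) ^ r else 0) -
      if (p : ZMod (p ^ r)) * i = 0 then (p : R) ^ (r - 1) else 0 := by
  classical
  have hunits : ∑ u : (ZMod (p ^ r))ˣ, ψ (u * i) = ∑ x with IsUnit x, ψ (x * i) := by
    refine Finset.sum_bij (fun u _ => (u : ZMod (p ^ r))) ?_ ?_ ?_ ?_
    · simp
    · exact fun u _ v _ h => Units.ext h
    · exact fun x hx => (Finset.mem_filter.1 hx).2.imp fun u hu => ⟨Finset.mem_univ u, hu⟩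
    · exact fun u _ => rfl
  have hmem (x : ZMod (p ^ r)) : x ∈ Finset.univ.filter (¬ IsUnit ·) ↔ x ∈ primeMultiples p r := by
    rw [Finset.mem_filter_univ, not_isUnit_iff_mem_primeMultiples hp hr]
  have hnonunits : ∑ a : primeMultiples p r, ψ (a * i) = ∑ x with ¬ IsUnit x, ψ (x * i) :=
    (Finset.sum_subtype _ hmem fun x => ψ (x * i)).symm
  rw [← sum_primeMultiples hp hr hψ, hunits, hnonunits, eq_sub_iff_add_eq,
    Finset.sum_filter_add_sum_filter_not, AddChar.sum_mulShift i hψ]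
  simp [ZMod.card]

end RamanujanSum

section TraceForm

variable {K : Type*} [Field K] [NumberField K]

/-- The form `Tr_{K/ℚ} (x · σ(y))` on the ring of integers, with integral values. -/
noncomputable def integralTraceForm (σ : K ≃ₐ[ℚ] K) : LinearMap.BilinForm ℤ (𝓞 K) :=
  (Algebra.traceForm ℤ (𝓞 K)).compl₂
    (RingOfIntegers.mapRingEquiv σ.toRingEquiv).toRingHom.toIntAlgHom.toLinearMap

lemma coe_integralTraceForm (σ : K ≃ₐ[ℚ] K) (x y : 𝓞 K) :
    (integralTraceForm σ x y : ℚ) = Algebra.trace ℚ K (x * σ y) :=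
  Algebra.coe_trace_int _

end TraceForm

section GaussPeriod

lemma isGalois_of_isCyclotomicExtension (N : ℕ) [NeZero N] (K L : Type*) [Field K] [CharZero K]
    [Field L] [CharZero L] [Algebra K L] [IsCyclotomicExtension {N} ℚ L] : IsGalois K L :=
  have : IsGalois ℚ L := IsCyclotomicExtension.isGalois {N} ℚ L
  IsGalois.tower_top_of_isGalois ℚ K L

variable {N : ℕ} [NeZero N] {L : Type*} [Field L] {ζ : L} (hζ : IsPrimitiveRoot ζ N)

/-- The additive character `i ↦ ζ ^ i` of `ℤ/N`. -/
noncomputable abbrev rootChar : AddChar (ZMod N) L :=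
  AddChar.zmodChar N hζ.pow_eq_one

lemma isIntegral_rootChar (i : ZMod N) : IsIntegral ℤ (rootChar hζ i) :=
  (hζ.isIntegral (NeZero.pos N)).pow i.val

lemma map_rootChar {F : Type*} [CommRing F] [Algebra F L] (g : L ≃ₐ[F] L) (i : ZMod N) :
    g (rootChar hζ i) = rootChar hζ ((hζ.autToPow F g : ZMod N) * i) := by
  have hi : (hζ.autToPow F g : ZMod N) * i =
      (((hζ.autToPow F g : ZMod N).val * i.val : ℕ) : ZMod N) := by
    rw [Nat.cast_mul, ZMod.natCast_zmod_val, ZMod.natCast_zmod_val]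
  rw [hi, AddChar.zmodChar_apply', pow_mul, hζ.autToPow_spec F, AddChar.zmodChar_apply, map_pow]

variable [NumberField L]

lemma algebraMap_trace_rootChar [IsCyclotomicExtension {N} ℚ L] (i : ZMod N) :
    algebraMap ℚ L (Algebra.trace ℚ L (rootChar hζ i)) =
      ∑ u : (ZMod N)ˣ, rootChar hζ (u * i) := by
  have : IsGalois ℚ L := IsCyclotomicExtension.isGalois {N} ℚ L
  have hbij : Function.Bijective (hζ.autToPow ℚ) :=
    (Fintype.bijective_iff_injective_and_card _).2 ⟨hζ.autToPow_injective (K := ℚ),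
      Fintype.card_congr (IsCyclotomicExtension.Rat.galEquivZMod N L).toEquiv⟩
  rw [trace_eq_sum_automorphisms, ← hbij.sum_comp]
  exact Finset.sum_congr rfl fun g _ => map_rootChar hζ g i

variable (K : Type*) [Field K] [NumberField K] [Algebra K L]

/-- The group `Gal(L/K)` as a subgroup of `(ℤ/N)ˣ`, through its action on `ζ`. -/
noncomputable abbrev galoisExponents : Subgroup (ZMod N)ˣ :=
  ((hζ.autToPow ℚ).comp (AlgEquiv.restrictScalarsHom (S := K) (A := L) ℚ)).range

/-- The identification of `Gal(L/K)` with a subgroup of `(ℤ/N)ˣ`. -/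
noncomputable def galEquivGaloisExponents [IsCyclotomicExtension {N} ℚ L] :
    (L ≃ₐ[K] L) ≃* galoisExponents hζ K :=
  MonoidHom.ofInjective fun _ _ h =>
    AlgEquiv.restrictScalars_injective ℚ (hζ.autToPow_injective (K := ℚ) h)

lemma map_rootChar_eq_smul [IsCyclotomicExtension {N} ℚ L] (g : L ≃ₐ[K] L) (i : ZMod N) :
    g (rootChar hζ i) = rootChar hζ (galEquivGaloisExponents hζ K g • i) :=
  map_rootChar hζ (g.restrictScalars ℚ) i

lemma card_galoisExponents [IsCyclotomicExtension {N} ℚ L] :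
    Nat.card (galoisExponents hζ K) = Module.finrank K L := by
  have : FiniteDimensional K L := Module.Finite.of_restrictScalars_finite ℚ K L
  have := isGalois_of_isCyclotomicExtension N K L
  rw [← IsGalois.card_aut_eq_finrank, Nat.card_congr (galEquivGaloisExponents hζ K).toEquiv]

/-- The Gauss period `Tr_{L/K} (ζ ^ i)`. -/
noncomputable def gaussPeriod (i : ZMod N) : 𝓞 K :=
  ⟨Algebra.trace K L (rootChar hζ i),
    have : FiniteDimensional K L := Module.Finite.of_restrictScalars_finite ℚ K L
    Algebra.isIntegral_trace (isIntegral_rootChar hζ i)⟩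

lemma coe_gaussPeriod (i : ZMod N) :
    (gaussPeriod hζ K i : K) = Algebra.trace K L (rootChar hζ i) := rfl

variable [IsCyclotomicExtension {N} ℚ L]

lemma gaussPeriod_smul (h : galoisExponents hζ K) (i : ZMod N) :
    gaussPeriod hζ K (h • i) = gaussPeriod hζ K i := by
  obtain ⟨g, rfl⟩ := (galEquivGaloisExponents hζ K).surjective h
  ext
  rw [coe_gaussPeriod, ← map_rootChar_eq_smul, Algebra.trace_eq_of_algEquiv, coe_gaussPeriod]

lemma finrank_nsmul_mem_span_range_gaussPeriod (x : 𝓞 K) :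
    Module.finrank K L • x ∈ Submodule.span ℤ (Set.range (gaussPeriod hζ K)) := by
  let b := hζ.integralPowerBasis
  let c := b.basis.repr (algebraMap (𝓞 K) (𝓞 L) x)
  have hx : algebraMap K L x = ∑ k, c k • rootChar hζ ((k : ℕ) : ZMod N) := by
    have := congrArg (algebraMap (𝓞 L) L) (b.basis.sum_repr (algebraMap (𝓞 K) (𝓞 L) x))
    simp only [map_sum, map_zsmul, map_pow, b, hζ.integralPowerBasis_gen,
      PowerBasis.basis_eq_pow] at this
    simp only [AddChar.zmodChar_apply']
    exact this.symm
  have hsum : Module.finrank K L • x = ∑ k, c k • gaussPeriod hζ K ((k : ℕ) : ZMod N) := by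
    apply RingOfIntegers.coe_injective
    rw [map_nsmul, ← Algebra.trace_algebraMap (S := L), hx, map_sum, map_sum]
    simp only [map_zsmul, coe_gaussPeriod]
  rw [hsum]
  exact sum_mem fun k _ => Submodule.smul_mem _ _ (Submodule.subset_span ⟨_, rfl⟩)

lemma algebraMap_gaussPeriod [Fintype (galoisExponents hζ K)] (i : ZMod N) :
    algebraMap K L (gaussPeriod hζ K i) = ∑ h : galoisExponents hζ K, rootChar hζ (h • i) := by
  have : FiniteDimensional K L := Module.Finite.of_restrictScalars_finite ℚ K L
  have := isGalois_of_isCyclotomicExtension N K L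
  rw [coe_gaussPeriod, trace_eq_sum_automorphisms, ← (galEquivGaloisExponents hζ K).sum_comp]
  exact Finset.sum_congr rfl fun g _ => map_rootChar_eq_smul hζ K g i

variable {K} {σ : K ≃ₐ[ℚ] K} (hσ : ∀ φ : K →+* ℂ, ∀ x : K, φ (σ x) = starRingEnd ℂ (φ x))
include hσ

lemma conj_gaussPeriod (i : ZMod N) :
    σ (gaussPeriod hζ K i) = gaussPeriod hζ K (-i) := by
  classical
  have := Fintype.ofFinite (galoisExponents hζ K)
  obtain ⟨τ⟩ : Nonempty (L →+* ℂ) := inferInstance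
  apply (τ.comp (algebraMap K L)).injective
  rw [hσ]
  simp only [RingHom.comp_apply, algebraMap_gaussPeriod, map_sum, smul_neg]
  refine Finset.sum_congr rfl fun h _ => ?_
  have hpow : τ (rootChar hζ (h • i)) ^ N = 1 := by
    rw [← map_pow, ← AddChar.map_nsmul_eq_pow, nsmul_eq_mul, ZMod.natCast_self, zero_mul,
      AddChar.map_zero_eq_one, map_one]
  rw [AddChar.map_neg_eq_inv, map_inv₀,
    Complex.inv_eq_conj (Complex.norm_eq_one_of_pow_eq_one hpow (NeZero.ne N))]

lemma trace_gaussPeriod_mul_conj [Fintype (galoisExponents hζ K)] (i j : ZMod N) :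
    Algebra.trace ℚ K (gaussPeriod hζ K i * σ (gaussPeriod hζ K j)) =
      ∑ h : galoisExponents hζ K, Algebra.trace ℚ L (rootChar hζ (i - h • j)) := by
  have : FiniteDimensional K L := Module.Finite.of_restrictScalars_finite ℚ K L
  rw [conj_gaussPeriod hζ hσ, mul_comm, ← smul_eq_mul, coe_gaussPeriod hζ K i, ← map_smul,
    Algebra.trace_trace, Algebra.smul_def, algebraMap_gaussPeriod, Finset.sum_mul, map_sum]
  refine Finset.sum_congr rfl fun h _ => ?_
  rw [← AddChar.map_add_eq_mul, smul_neg, neg_add_eq_sub]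

end GaussPeriod

section PrimePowGaussPeriod

variable {p r : ℕ} [NeZero (p ^ r)] {L : Type*} [Field L] [NumberField L] {ζ : L}
  (hζ : IsPrimitiveRoot ζ (p ^ r))

lemma trace_rootChar [IsCyclotomicExtension {p ^ r} ℚ L] (hp : p.Prime) (hr : 1 ≤ r)
    (i : ZMod (p ^ r)) :
    Algebra.trace ℚ L (rootChar hζ i) = (if i = 0 then (p : ℚ) ^ r else 0) -
      if (p : ZMod (p ^ r)) * i = 0 then (p : ℚ) ^ (r - 1) else 0 := by
  apply (algebraMap ℚ L).injective
  rw [algebraMap_trace_rootChar,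
    sum_units_eq hp hr (AddChar.zmodChar_primitive_of_primitive_root _ hζ)]
  simp only [map_sub, apply_ite (algebraMap ℚ L), map_pow, map_natCast, map_zero]

variable (K : Type*) [Field K] [NumberField K] [Algebra K L]

lemma sum_fiber_gaussPeriod_eq_zero (hp : p.Prime) (hr : 1 ≤ r) (H : Subgroup (ZMod (p ^ r))ˣ)
    (a : primeMultiples p r) : ∑ i with mulPrime p r H i = a, gaussPeriod hζ K i = 0 := by
  apply RingOfIntegers.coe_injective
  rw [map_sum, map_zero, ← map_zero (Algebra.trace K L), ← sum_fiber_mulPrime_eq_zero hp hr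
    (AddChar.zmodChar_primitive_of_primitive_root _ hζ) H a, map_sum]
  rfl

variable {K}

lemma integralTraceForm_gaussPeriod [IsCyclotomicExtension {p ^ r} ℚ L]
    [Fintype (galoisExponents hζ K)] (hp : p.Prime) (hr : 1 ≤ r)
    {σ : K ≃ₐ[ℚ] K} (hσ : ∀ φ : K →+* ℂ, ∀ x : K, φ (σ x) = starRingEnd ℂ (φ x))
    (i j : ZMod (p ^ r)) :
    integralTraceForm σ (gaussPeriod hζ K i) (gaussPeriod hζ K j) =
      (p : ℤ) ^ r * (Finset.univ.filter fun h : galoisExponents hζ K => i = h • j).card -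
      (p : ℤ) ^ (r - 1) * (Finset.univ.filter fun h : galoisExponents hζ K =>
        mulPrime p r (galoisExponents hζ K) i =
          h • mulPrime p r (galoisExponents hζ K) j).card := by
  apply Int.cast_injective (α := ℚ)
  rw [coe_integralTraceForm, trace_gaussPeriod_mul_conj hζ hσ]
  simp only [trace_rootChar hζ hp hr, sub_eq_zero, ← map_smul, mulPrime_eq_iff,
    Finset.sum_sub_distrib, Finset.sum_ite, Finset.sum_const, nsmul_eq_mul]
  push_cast
  ring

end PrimePowGaussPeriod

section GramMatrix

open Matrix

variable {R Λ ι : Type*} [CommRing R] [AddCommGroup Λ] [Module R Λ] [Fintype ι]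
  {B : LinearMap.BilinForm R Λ} {t : ι → Λ}

lemma bilin_sum_smul (B : LinearMap.BilinForm R Λ) (t : ι → Λ) (g : ι → R) :
    (fun j => B (∑ i, g i • t i) (t j)) = g ᵥ* of fun i j => B (t i) (t j) := by
  funext j
  simp only [map_sum, map_smul, LinearMap.sum_apply, LinearMap.smul_apply, smul_eq_mul, vecMul,
    dotProduct, of_apply]

variable [DecidableEq ι] {D : Matrix ι ι R} {c : R}

lemma smul_eq_bilin_vecMul (hD : (of fun i j => B (t i) (t j)) * D = c • 1) (g : ι → R) :
    c • g = (fun j => B (∑ i, g i • t i) (t j)) ᵥ* D := by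
  rw [bilin_sum_smul, vecMul_vecMul, hD, vecMul_smul, vecMul_one]

variable [IsDomain R]

lemma linearIndependent_of_gram_mul_eq_smul_one (hc : c ≠ 0)
    (hD : (of fun i j => B (t i) (t j)) * D = c • 1) : LinearIndependent R t := by
  rw [Fintype.linearIndependent_iff]
  intro g hg i
  have hcg := smul_eq_bilin_vecMul hD g
  rw [hg] at hcg
  have : c • g = 0 := by
    rw [hcg]
    simp only [map_zero, LinearMap.zero_apply]
    exact zero_vecMul D
  exact congrFun ((smul_eq_zero_iff_right hc).1 this) i

-- A multiple of `x` by `e` is an integral combination of `t`, one by `c` follows by pairing with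
-- `t`; coprimality of `c` and `e` then removes the denominator.
lemma mem_span_of_gram_mul_eq_smul_one [Module.IsTorsionFree R Λ] {e : R} (he : e ≠ 0)
    (hce : IsCoprime e c) (hD : (of fun i j => B (t i) (t j)) * D = c • 1) {x : Λ}
    (hx : e • x ∈ Submodule.span R (Set.range t)) : x ∈ Submodule.span R (Set.range t) := by
  obtain ⟨g, hg⟩ := (Submodule.mem_span_range_iff_exists_fun R).1 hx
  have hcg := smul_eq_bilin_vecMul hD g
  have hdvd : ∀ i, e ∣ g i := fun i => by
    have hpair : (fun j => B (e • x) (t j)) = e • fun j => B x (t j) := by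
      funext j
      rw [map_smul, LinearMap.smul_apply, Pi.smul_apply]
    refine hce.dvd_of_dvd_mul_left ⟨((fun j => B x (t j)) ᵥ* D) i, ?_⟩
    rw [hg, hpair, smul_vecMul] at hcg
    exact congrFun hcg i
  choose g' hg' using hdvd
  refine (Submodule.mem_span_range_iff_exists_fun R).2 ⟨g', smul_right_injective Λ he ?_⟩
  simp only [← hg, hg', Finset.smul_sum, mul_smul]

end GramMatrix

section IntegralBasis

lemma det_toMatrix_eq_det_toMatrix {Λ ι κ : Type*} [AddCommGroup Λ] [Fintype ι] [DecidableEq ι]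
    [Fintype κ] [DecidableEq κ] (B : LinearMap.BilinForm ℤ Λ) (b : Module.Basis ι ℤ Λ)
    (b' : Module.Basis κ ℤ Λ) :
    (LinearMap.BilinForm.toMatrix b B).det = (LinearMap.BilinForm.toMatrix b' B).det := by
  let b₁ := b.reindex (b.indexEquiv b')
  have hreindex : (LinearMap.BilinForm.toMatrix b B).det =
      (LinearMap.BilinForm.toMatrix b₁ B).det := by
    rw [← Matrix.det_reindex_self (b.indexEquiv b')]
    congr 1
    ext i j
    simp only [Matrix.reindex_apply, Matrix.submatrix_apply, LinearMap.BilinForm.toMatrix_apply,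
      b₁, Module.Basis.reindex_apply]
  have hunit : IsUnit (b₁.toMatrix b').det := by
    have := b₁.invertibleToMatrix b'
    exact Matrix.isUnit_det_of_invertible _
  rw [hreindex, ← LinearMap.BilinForm.toMatrix_mul_basis_toMatrix b₁ b' B, Matrix.det_mul,
    Matrix.det_mul, Matrix.det_transpose, mul_right_comm, ← sq, Int.isUnit_sq hunit, one_mul]

variable {K ι : Type*} [Field K] [NumberField K]

lemma gramDet_eq_det [Fintype ι] [DecidableEq ι] {q : K →ₗ[ℚ] K →ₗ[ℚ] ℚ}
    {B : LinearMap.BilinForm ℤ (𝓞 K)} (hB : ∀ x y : 𝓞 K, q x y = B x y)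
    (b : Module.Basis ι ℤ (𝓞 K)) :
    gramDet K q = (Matrix.of fun i j => B (b i) (b j)).det := by
  classical
  have : Matrix.of (fun i j => B (b i) (b j)) = LinearMap.BilinForm.toMatrix b B := by
    ext i j
    rw [LinearMap.BilinForm.toMatrix_apply, Matrix.of_apply]
  rw [this, det_toMatrix_eq_det_toMatrix B b (RingOfIntegers.basis K), gramDet, Int.cast_det]
  congr 1
  ext i j
  simp [LinearMap.BilinForm.toMatrix_apply, hB]

/-- The basis of `ℝ ⊗ K` induced by an integral basis of `K`. -/
noncomputable def realBasis (b : Module.Basis ι ℤ (𝓞 K)) : Module.Basis ι ℝ (ℝ ⊗[ℚ] K) :=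
  Algebra.TensorProduct.basis ℝ (b.localizationLocalization ℚ (nonZeroDivisors ℤ) K)

lemma realBasis_apply (b : Module.Basis ι ℤ (𝓞 K)) (i : ι) :
    realBasis b i = (1 : ℝ) ⊗ₜ[ℚ] (b i : K) := by
  rw [realBasis, Algebra.TensorProduct.basis_apply, Module.Basis.localizationLocalization_apply]

lemma realBasis_repr_one_tmul (b : Module.Basis ι ℤ (𝓞 K)) (c : 𝓞 K) (i : ι) :
    (realBasis b).repr ((1 : ℝ) ⊗ₜ[ℚ] (c : K)) i = b.repr c i := by
  rw [realBasis, Algebra.TensorProduct.basis_repr_tmul, one_smul, Finsupp.mapRange_apply,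
    RingOfIntegers.coe_eq_algebraMap, Module.Basis.localizationLocalization_repr_algebraMap]
  simp

end IntegralBasis

section FiberLattice

open Matrix

variable {K ι α : Type*} [Field K] [NumberField K] [Fintype ι] [DecidableEq ι] [Fintype α]
  [DecidableEq α] {q : K →ₗ[ℚ] K →ₗ[ℚ] ℚ} {B : LinearMap.BilinForm ℤ (𝓞 K)}
  {b : Module.Basis ι ℤ (𝓞 K)} {cl : ι → α} {w : α → ℤ} {p c : ℤ}

lemma baseChange_self_eq_sum_blockForm (hB : ∀ x y : 𝓞 K, q x y = B x y)
    (hG : (of fun i j => B (b i) (b j)) = c • (p • 1 - fiberMatrix cl w)) (x : ℝ ⊗[ℚ] K) :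
    LinearMap.BilinForm.baseChange ℝ q x x =
      c * ∑ a, blockForm (Finset.univ.filter (cl · = a)) p (w a) ((realBasis b).repr x) := by
  have hmatrix : LinearMap.BilinForm.toMatrix (realBasis b) (LinearMap.BilinForm.baseChange ℝ q) =
      (c : ℝ) • ((p : ℝ) • 1 - fiberMatrix cl fun a => (w a : ℝ)) := by
    ext i j
    have hij := congrArg (Int.cast : ℤ → ℝ) (congrFun (congrFun hG i) j)
    rw [LinearMap.BilinForm.toMatrix_apply, realBasis_apply, realBasis_apply,
      LinearMap.BilinForm.baseChange_tmul, hB]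
    simp only [of_apply, Matrix.smul_apply, Matrix.sub_apply, one_apply, fiberMatrix_apply] at hij ⊢
    simpa using hij
  rw [LinearMap.BilinForm.apply_eq_dotProduct_toMatrix_mulVec (realBasis b), hmatrix, smul_mulVec,
    dotProduct_smul, dotProduct_smul_one_sub_fiberMatrix_mulVec, smul_eq_mul]

variable (hB : ∀ x y : 𝓞 K, q x y = B x y)
  (hG : (of fun i j => B (b i) (b j)) = c • (p • 1 - fiberMatrix cl w)) (hc : 0 ≤ c)
  (hw : ∀ a, 0 ≤ w a) (hp : ∀ a, p = w a * (Finset.univ.filter (cl · = a)).card + 1)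
include hB hG hc hw hp

lemma baseChange_self_nonneg (x : ℝ ⊗[ℚ] K) : 0 ≤ LinearMap.BilinForm.baseChange ℝ q x x := by
  rw [baseChange_self_eq_sum_blockForm hB hG]
  refine mul_nonneg (by exact_mod_cast hc) (Finset.sum_nonneg fun a _ => ?_)
  exact blockForm_nonneg (by exact_mod_cast hw a) (by exact_mod_cast (by linarith [hp a])) _

lemma exists_baseChange_sub_tmul_le (x : ℝ ⊗[ℚ] K) : ∃ d : 𝓞 K,
    LinearMap.BilinForm.baseChange ℝ q (x - (1 : ℝ) ⊗ₜ[ℚ] (d : K)) (x - (1 : ℝ) ⊗ₜ[ℚ] (d : K)) ≤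
      c * ∑ a, ((Finset.univ.filter (cl · = a)).card *
        ((p : ℝ) ^ 2 + p + 1 - (w a : ℝ) ^ 2) / (12 * p)) := by
  choose d hd using fun a => exists_int_blockForm_sub_le (s := Finset.univ.filter (cl · = a))
    (p := p) (e := w a) (by exact_mod_cast hw a) (by exact_mod_cast hp a) ((realBasis b).repr x)
  refine ⟨b.equivFun.symm fun i => d (cl i) i, ?_⟩
  rw [baseChange_self_eq_sum_blockForm hB hG]
  refine mul_le_mul_of_nonneg_left (Finset.sum_le_sum fun a _ => ?_) (by exact_mod_cast hc)
  refine le_of_eq_of_le (blockForm_congr fun i hi => ?_) (hd a)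
  rw [map_sub, Finsupp.sub_apply, realBasis_repr_one_tmul, ← b.equivFun_apply,
    LinearEquiv.apply_symm_apply, (Finset.mem_filter.1 hi).2]

lemma iSup_iInf_baseChange_le :
    (⨆ x : ℝ ⊗[ℚ] K, ⨅ d : 𝓞 K, LinearMap.BilinForm.baseChange ℝ q
        (x - (1 : ℝ) ⊗ₜ[ℚ] (d : K)) (x - (1 : ℝ) ⊗ₜ[ℚ] (d : K))) ≤
      c * ∑ a, ((Finset.univ.filter (cl · = a)).card *
        ((p : ℝ) ^ 2 + p + 1 - (w a : ℝ) ^ 2) / (12 * p)) := by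
  refine ciSup_le fun x => ?_
  obtain ⟨d, hd⟩ := exists_baseChange_sub_tmul_le hB hG hc hw hp x
  exact (ciInf_le ⟨0, Set.forall_mem_range.2 fun d =>
    baseChange_self_nonneg hB hG hc hw hp _⟩ d).trans hd

end FiberLattice

section GaussPeriodLattice

open MulAction

lemma finrank_mul_finrank_eq {p r : ℕ} (hp : p.Prime) (hr : 1 ≤ r) (K L : Type*) [Field K]
    [NumberField K] [Field L] [NumberField L] [Algebra K L]
    [IsCyclotomicExtension {p ^ r} ℚ L] :
    Module.finrank K L * Module.finrank ℚ K = (p - 1) * p ^ (r - 1) := by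
  have : NeZero (p ^ r) := ⟨pow_ne_zero r hp.ne_zero⟩
  rw [mul_comm, Module.finrank_mul_finrank, IsCyclotomicExtension.finrank L
    (Polynomial.cyclotomic.irreducible_rat (NeZero.pos (p ^ r))), Nat.totient_prime_pow hp hr,
    mul_comm]

section PrimeMultiplesOrbits

variable {p r : ℕ} [NeZero (p ^ r)] (hp : p.Prime) (hr : 1 ≤ r) {H : Subgroup (ZMod (p ^ r))ˣ}
  (hcop : p.Coprime (Nat.card H)) {s : primeMultiples p r →[H] ZMod (p ^ r)}
  [Fintype (OrbitsOff s)] [DecidableEq (orbitRel.Quotient H (primeMultiples p r))] (hs0 : s 0 = 0)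
  (hfs : ∀ a, mulPrime p r H (s a) = a)
include hp hr hcop hs0 hfs

lemma eq_orbitWeight_mul_card_add_one (ω : orbitRel.Quotient H (primeMultiples p r)) :
    (p : ℤ) = (orbitWeight ω : ℤ) * (Finset.univ.filter fun x : OrbitsOff s =>
      orbitImage (mulPrime p r H) x = ω).card + 1 := by
  rw [← Nat.cast_mul, ← Nat.cast_add_one, Nat.cast_inj,
    ← card_fiber_eq_orbitWeight_mul_add_one (isFreeOffZero_of_coprime_card hp hr hcop _)
      (isFreeOffZero_of_coprime_card hp hr hcop _) hs0 hfs, card_fiber_mulPrime hp hr]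

lemma sum_card_fiber_mul_eq [Fintype (orbitRel.Quotient H (primeMultiples p r))] :
    (∑ ω, (Finset.univ.filter fun x : OrbitsOff s => orbitImage (mulPrime p r H) x = ω).card *
        ((p : ℝ) ^ 2 + p + 1 - (orbitWeight ω : ℝ) ^ 2) / (12 * p)) * Nat.card H =
      (p - 1) * ((p ^ (r + 1) + p ^ r + 1 - (Nat.card H : ℝ) ^ 2) / (12 * p)) := by
  let F (w : ℕ) : ℝ := (p - 1) / w * ((p : ℝ) ^ 2 + p + 1 - (w : ℝ) ^ 2) / (12 * p)
  have hterm (ω) : (Finset.univ.filter (orbitImage (s := s) (mulPrime p r H) · = ω)).card *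
      ((p : ℝ) ^ 2 + p + 1 - (orbitWeight ω : ℝ) ^ 2) / (12 * p) = F (orbitWeight ω) := by
    have hfiber := congrArg (Int.cast : ℤ → ℝ)
      (eq_orbitWeight_mul_card_add_one hp hr hcop hs0 hfs ω)
    push_cast at hfiber
    have hw : (orbitWeight ω : ℝ) ≠ 0 := by exact_mod_cast orbitWeight_ne_zero ω
    simp only [F, hfiber, add_sub_cancel_right, mul_div_cancel_left₀ _ hw]
  have hsum := sum_orbitWeight_add (H := H) (A := primeMultiples p r) F
  have hcard := congrArg (Nat.cast : ℕ → ℝ)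
    (isFreeOffZero_of_coprime_card hp hr hcop (primeMultiples p r)).card_add_card
  have hH : (Nat.card H : ℝ) ≠ 0 := by exact_mod_cast Nat.card_pos.ne'
  have hprime : (p : ℝ) ≠ 0 := by exact_mod_cast hp.ne_zero
  obtain ⟨t, rfl⟩ : ∃ t, r = t + 1 := ⟨r - 1, by omega⟩
  rw [card_primeMultiples hp hr] at hcard
  push_cast [add_tsub_cancel_right] at hcard
  rw [Finset.sum_congr rfl fun ω _ => hterm ω, eq_sub_of_add_eq hsum]
  simp only [F]
  field_simp
  push_cast
  linear_combination (-(p * (p - 1) * (p + 1)) : ℝ) * hcard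

end PrimeMultiplesOrbits

variable {p r : ℕ} [NeZero (p ^ r)] {L : Type*} [Field L] [NumberField L]
  [IsCyclotomicExtension {p ^ r} ℚ L] {ζ : L} {hζ : IsPrimitiveRoot ζ (p ^ r)} {K : Type*}
  [Field K] [NumberField K] [Algebra K L]
  {s : primeMultiples p r →[galoisExponents hζ K] ZMod (p ^ r)}
  {σ : K ≃ₐ[ℚ] K} (hσ : ∀ φ : K →+* ℂ, ∀ x : K, φ (σ x) = starRingEnd ℂ (φ x))
  (hp : p.Prime) (hr : 1 ≤ r) (hcop : p.Coprime (Nat.card (galoisExponents hζ K)))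
  (hs0 : s 0 = 0) (hfs : ∀ a, mulPrime p r (galoisExponents hζ K) (s a) = a)

include hp hr hcop hs0 hσ in
lemma gram_gaussPeriod [DecidableEq (OrbitsOff s)]
    [Fintype (orbitRel.Quotient (galoisExponents hζ K) (primeMultiples p r))]
    [DecidableEq (orbitRel.Quotient (galoisExponents hζ K) (primeMultiples p r))] :
    (Matrix.of fun x y : OrbitsOff s => integralTraceForm σ (gaussPeriod hζ K x.1.out)
      (gaussPeriod hζ K y.1.out)) =
      (p : ℤ) ^ (r - 1) • ((p : ℤ) • 1 -
        fiberMatrix (orbitImage (mulPrime p r _)) fun ω => (orbitWeight ω : ℤ)) := by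
  have := Fintype.ofFinite (galoisExponents hζ K)
  have hpow : (p : ℤ) ^ r = p ^ (r - 1) * p := by rw [← pow_succ, Nat.sub_add_cancel hr]
  ext x y
  rw [Matrix.of_apply, integralTraceForm_gaussPeriod hζ hp hr hσ,
    OrbitsOff.card_smul_eq (isFreeOffZero_of_coprime_card hp hr hcop _) hs0,
    (isFreeOffZero_of_coprime_card hp hr hcop _).card_smul_eq, hpow]
  simp only [Matrix.smul_apply, Matrix.sub_apply, Matrix.one_apply, fiberMatrix_apply, orbitImage,
    smul_eq_mul, Nat.cast_ite, Nat.cast_one, Nat.cast_zero, mul_sub, mul_assoc]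
  congr!

include hσ hp hr hcop hs0 hfs

lemma exists_basis_eq_gaussPeriod :
    ∃ b : Module.Basis (OrbitsOff s) ℤ (𝓞 K), ∀ x, b x = gaussPeriod hζ K x.1.out := by
  classical
  have : FiniteDimensional K L := Module.Finite.of_restrictScalars_finite ℚ K L
  have := Fintype.ofFinite (OrbitsOff s)
  have := Fintype.ofFinite (orbitRel.Quotient (galoisExponents hζ K) (primeMultiples p r))
  have hdual := gram_gaussPeriod hσ hp hr hcop hs0
  apply_fun (· * (1 + fiberMatrix (orbitImage (mulPrime p r _)) fun ω => (orbitWeight ω : ℤ)))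
    at hdual
  rw [smul_mul_assoc, smul_one_sub_fiberMatrix_mul
    (eq_orbitWeight_mul_card_add_one hp hr hcop hs0 hfs), smul_smul] at hdual
  have hprime : (p : ℤ) ≠ 0 := by exact_mod_cast hp.ne_zero
  have hc : (p : ℤ) ^ (r - 1) * p ≠ 0 := mul_ne_zero (pow_ne_zero _ hprime) hprime
  have hcop' : IsCoprime (Module.finrank K L : ℤ) ((p : ℤ) ^ (r - 1) * p) := by
    have := (Nat.isCoprime_iff_coprime.2 (card_galoisExponents hζ K ▸ hcop)).symm
    exact this.pow_right.mul_right this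
  refine ⟨Module.Basis.mk (linearIndependent_of_gram_mul_eq_smul_one hc hdual) fun x _ => ?_,
    fun x => Module.Basis.mk_apply ..⟩
  refine mem_span_of_gram_mul_eq_smul_one
    (by exact_mod_cast Module.finrank_pos.ne') hcop' hdual ?_
  refine Submodule.span_le.2 (Set.range_subset_iff.2 fun i => ?_)
    (Nat.cast_smul_eq_nsmul ℤ _ x ▸ finrank_nsmul_mem_span_range_gaussPeriod hζ K x)
  exact mem_span_range_of_sum_fiber_eq_zero hfs (gaussPeriod_smul hζ K)
    (sum_fiber_gaussPeriod_eq_zero hζ K hp hr _) i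

lemma pow_card_orbits_mul_gramDet :
    (p : ℚ) ^ Nat.card (orbitRel.Quotient (galoisExponents hζ K) (primeMultiples p r)) *
      gramDet K ((Algebra.traceForm ℚ K).compl₂ σ.toLinearMap) =
        p ^ (r * Module.finrank ℚ K) := by
  classical
  have := Fintype.ofFinite (OrbitsOff s)
  have := Fintype.ofFinite (orbitRel.Quotient (galoisExponents hζ K) (primeMultiples p r))
  obtain ⟨b, hb⟩ := exists_basis_eq_gaussPeriod hσ hp hr hcop hs0 hfs
  have hdet := pow_mul_det_smul_one_sub_fiberMatrix
    (eq_orbitWeight_mul_card_add_one hp hr hcop hs0 hfs)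
  rw [gramDet_eq_det (coe_integralTraceForm σ · · |>.symm) b]
  simp only [hb, gram_gaussPeriod hσ hp hr hcop hs0, Matrix.det_smul]
  rw [← RingOfIntegers.rank, Module.finrank_eq_card_basis b, Nat.card_eq_fintype_card,
    ← Int.cast_natCast p, ← Int.cast_pow, ← Int.cast_mul, mul_left_comm, hdet, ← pow_mul,
    ← pow_add, ← Nat.add_one_mul, Nat.sub_add_cancel hr, Int.cast_pow]

lemma gramDet_traceForm_eq_pow {k υ : ℕ} (hk : k * Module.finrank K L = p ^ (r - 1) - 1)
    (hυ : υ + k + 1 = r * Module.finrank ℚ K) :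
    gramDet K ((Algebra.traceForm ℚ K).compl₂ σ.toLinearMap) = p ^ υ := by
  have : FiniteDimensional K L := Module.Finite.of_restrictScalars_finite ℚ K L
  have horbits : Nat.card (orbitRel.Quotient (galoisExponents hζ K) (primeMultiples p r)) =
      k + 1 := by
    have hcard := (isFreeOffZero_of_coprime_card hp hr hcop (primeMultiples p r)).card_add_card
    rw [card_primeMultiples hp hr, card_galoisExponents] at hcard
    refine Nat.eq_of_mul_eq_mul_right (Module.finrank_pos (R := K) (M := L)) ?_
    have := Nat.pow_pos (n := r - 1) hp.pos
    rw [add_one_mul, hk]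
    omega
  have hprime : (p : ℚ) ≠ 0 := by exact_mod_cast hp.ne_zero
  refine mul_left_cancel₀ (pow_ne_zero (k + 1) hprime) ?_
  rw [← horbits, pow_card_orbits_mul_gramDet hσ hp hr hcop hs0 hfs, horbits, ← pow_add, ← hυ]
  ring

lemma iSup_iInf_traceForm_le :
    (⨆ x : ℝ ⊗[ℚ] K, ⨅ d : 𝓞 K, LinearMap.BilinForm.baseChange ℝ
        ((Algebra.traceForm ℚ K).compl₂ σ.toLinearMap)
        (x - (1 : ℝ) ⊗ₜ[ℚ] (d : K)) (x - (1 : ℝ) ⊗ₜ[ℚ] (d : K))) ≤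
      Module.finrank ℚ K *
        (((p : ℝ) ^ (r + 1) + p ^ r + 1 - (Module.finrank K L : ℝ) ^ 2) / (12 * p)) := by
  classical
  have : FiniteDimensional K L := Module.Finite.of_restrictScalars_finite ℚ K L
  have := Fintype.ofFinite (OrbitsOff s)
  have := Fintype.ofFinite (orbitRel.Quotient (galoisExponents hζ K) (primeMultiples p r))
  obtain ⟨b, hb⟩ := exists_basis_eq_gaussPeriod hσ hp hr hcop hs0 hfs
  have hgram := gram_gaussPeriod hσ hp hr hcop hs0
  simp only [← hb] at hgram
  refine (iSup_iInf_baseChange_le (coe_integralTraceForm σ · · |>.symm) hgram (by positivity)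
    (fun ω => by positivity) (eq_orbitWeight_mul_card_add_one hp hr hcop hs0 hfs)).trans_eq ?_
  have hsum := sum_card_fiber_mul_eq hp hr hcop hs0 hfs
  rw [card_galoisExponents] at hsum
  have hrank := congrArg (Nat.cast : ℕ → ℝ) (finrank_mul_finrank_eq hp hr K L)
  push_cast [hp.one_le] at hrank ⊢
  have hfinrank : (Module.finrank K L : ℝ) ≠ 0 := by exact_mod_cast Module.finrank_pos.ne'
  refine mul_right_cancel₀ hfinrank ?_
  rw [mul_assoc, hsum]
  linear_combination
    (-((p ^ (r + 1) + p ^ r + 1 - (Module.finrank K L : ℝ) ^ 2) / (12 * p)) : ℝ) * hrank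

end GaussPeriodLattice

lemma coprime_of_mul_eq {p r e n k : ℕ} (hp : p.Prime) (hr : 1 ≤ r)
    (he : e * n = (p - 1) * p ^ (r - 1)) (hk : k * e = p ^ (r - 1) - 1) : p.Coprime e := by
  rw [hp.coprime_iff_not_dvd]
  intro hpe
  rcases hr.eq_or_lt with rfl | hr
  · rw [Nat.sub_self, pow_zero, mul_one] at he
    exact Nat.not_dvd_of_pos_of_lt (Nat.sub_pos_of_lt hp.one_lt) (Nat.sub_lt hp.pos one_pos)
      (hpe.trans (Dvd.intro n he))
  · refine hp.not_dvd_one ((Nat.dvd_sub_iff_right (Nat.one_le_pow _ _ hp.pos)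
      (dvd_pow_self p (Nat.sub_ne_zero_of_lt hr))).1 ?_)
    exact hpe.trans (Dvd.intro_left k hk)

lemma pow_eq_rpow_sub_div_mul_rpow {x : ℝ} (hx : 0 < x) (r υ : ℕ) (n : ℝ) :
    x ^ r = x ^ ((r : ℝ) - υ / n) * (x ^ υ) ^ (1 / n) := by
  rw [← Real.rpow_natCast x υ, ← Real.rpow_mul hx.le, ← Real.rpow_add hx, mul_one_div,
    sub_add_cancel, Real.rpow_natCast]

lemma gramDet_eq_and_iSup_iInf_le {p r : ℕ} (hp : p.Prime) (hr : 1 ≤ r) {K : Type*} [Field K]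
    [NumberField K] (L : Type*) [Field L] [NumberField L] [Algebra K L]
    [IsCyclotomicExtension {p ^ r} ℚ L] (hcop : p.Coprime (Module.finrank K L)) {k υ : ℕ}
    (hk : k * Module.finrank K L = p ^ (r - 1) - 1) (hυ : υ + k + 1 = r * Module.finrank ℚ K)
    {σ : K ≃ₐ[ℚ] K} (hσ : ∀ φ : K →+* ℂ, ∀ x : K, φ (σ x) = starRingEnd ℂ (φ x)) :
    gramDet K ((Algebra.traceForm ℚ K).compl₂ σ.toLinearMap) = p ^ υ ∧
    (⨆ x : ℝ ⊗[ℚ] K, ⨅ d : 𝓞 K, LinearMap.BilinForm.baseChange ℝ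
        ((Algebra.traceForm ℚ K).compl₂ σ.toLinearMap)
        (x - (1 : ℝ) ⊗ₜ[ℚ] (d : K)) (x - (1 : ℝ) ⊗ₜ[ℚ] (d : K))) ≤
      Module.finrank ℚ K *
        (((p : ℝ) ^ (r + 1) + p ^ r + 1 - (Module.finrank K L : ℝ) ^ 2) / (12 * p)) := by
  have : NeZero (p ^ r) := ⟨pow_ne_zero r hp.ne_zero⟩
  have hζ := IsCyclotomicExtension.zeta_spec (p ^ r) ℚ L
  have hcop : p.Coprime (Nat.card (galoisExponents hζ K)) := by rwa [card_galoisExponents]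
  obtain ⟨s, hs0, hfs⟩ := exists_equivariant_section
    (isFreeOffZero_of_coprime_card hp hr hcop (primeMultiples p r)) (mulPrime_surjective _)
  exact ⟨gramDet_traceForm_eq_pow hσ hp hr hcop hs0 hfs hk hυ,
    iSup_iInf_traceForm_le hσ hp hr hcop hs0 hfs⟩

theorem hermiteLikeThickness_le_of_oddPrimePower_conductor_general
    (p r : ℕ) (hp : p.Prime) (hr : 1 ≤ r)
    (K : Type*) [Field K] [NumberField K]
    (hK : Nonempty (K →ₐ[ℚ] CyclotomicField (p ^ r) ℚ))
    (e k υ : ℕ)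
    (he : e * Module.finrank ℚ K = (p - 1) * p ^ (r - 1))
    (hk : k * e = p ^ (r - 1) - 1)
    (hυ : υ + k + 1 = r * Module.finrank ℚ K)
    (σ : K ≃ₐ[ℚ] K)
    (hσ : ∀ φ : K →+* ℂ, ∀ x : K, φ (σ x) = starRingEnd ℂ (φ x)) :
    letI q : K →ₗ[ℚ] K →ₗ[ℚ] ℚ := (Algebra.traceForm ℚ K).compl₂ σ.toLinearMap
    letI qR := LinearMap.BilinForm.baseChange ℝ q
    letI n := Module.finrank ℚ K
    (⨆ x : ℝ ⊗[ℚ] K, ⨅ c : 𝓞 K,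
        qR (x - (1 : ℝ) ⊗ₜ[ℚ] (c : K)) (x - (1 : ℝ) ⊗ₜ[ℚ] (c : K))) ≤
      (n : ℝ) * (p : ℝ) ^ ((r : ℝ) - (υ : ℝ) / (n : ℝ)) *
        (((p : ℝ) ^ (r + 1) + (p : ℝ) ^ r + 1 - (e : ℝ) ^ 2) / (12 * (p : ℝ) ^ (r + 1))) *
        ((gramDet K q : ℝ) ^ ((1 : ℝ) / (n : ℝ))) := by
  obtain ⟨φ⟩ := hK
  let L := CyclotomicField (p ^ r) ℚ
  let : Algebra K L := φ.toRingHom.toAlgebra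
  have : NeZero (p ^ r) := ⟨pow_ne_zero r hp.ne_zero⟩
  have : IsCyclotomicExtension {p ^ r} ℚ L := by
    convert CyclotomicField.isCyclotomicExtension (p ^ r) ℚ
    exacts [rfl, Subsingleton.elim _ _]
  obtain rfl : Module.finrank K L = e := Nat.eq_of_mul_eq_mul_right Module.finrank_pos
    ((finrank_mul_finrank_eq hp hr K L).trans he.symm)
  obtain ⟨hdet, hthickness⟩ :=
    gramDet_eq_and_iSup_iInf_le hp hr L (coprime_of_mul_eq hp hr he hk) hk hυ hσ
  refine hthickness.trans_eq ?_
  have hprime : (0 : ℝ) < p := by exact_mod_cast hp.pos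
  have hpow := pow_eq_rpow_sub_div_mul_rpow hprime r υ (Module.finrank ℚ K)
  rw [hdet, Rat.cast_pow, Rat.cast_natCast, mul_right_comm, mul_assoc (Module.finrank ℚ K : ℝ),
    ← hpow]
  rw [pow_succ _ r]
  field_simp

theorem hermiteLikeThickness_le_of_oddPrimePower_conductor
    (p r : ℕ) (hp : p.Prime) (hodd : Odd p) (hr : 1 ≤ r)
    (K : Type*) [Field K] [NumberField K]
    (hcond : HasConductor K ⟨p ^ r, pow_pos hp.pos r⟩)
    (e k υ : ℕ)
    -- `e = [ℚ(ζ_{p^r}) : K]`, i.e. `e · [K : ℚ] = φ(p^r)`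
    (he : e * Module.finrank ℚ K = (p - 1) * p ^ (r - 1))
    -- `k = (p^{r-1} - 1)/e`
    (hk : k * e = p ^ (r - 1) - 1)
    -- `υ = r·n - (p^{r-1} - 1)/e - 1`
    (hυ : υ + k + 1 = r * Module.finrank ℚ K)
    -- `σ` is complex conjugation on `K` (the identity if `K` is totally real)
    (σ : K ≃ₐ[ℚ] K)
    (hσ : ∀ φ : K →+* ℂ, ∀ x : K, φ (σ x) = starRingEnd ℂ (φ x)) :
    -- `q(x, y) = Tr_{K/ℚ}(x · σ(y))`, extended ℝ-bilinearly to `ℝ ⊗ K`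
    letI q : K →ₗ[ℚ] K →ₗ[ℚ] ℚ := (Algebra.traceForm ℚ K).compl₂ σ.toLinearMap
    letI qR := LinearMap.BilinForm.baseChange ℝ q
    letI n := Module.finrank ℚ K
    (⨆ x : ℝ ⊗[ℚ] K, ⨅ c : 𝓞 K,
        qR (x - (1 : ℝ) ⊗ₜ[ℚ] (c : K)) (x - (1 : ℝ) ⊗ₜ[ℚ] (c : K))) ≤
      (n : ℝ) * (p : ℝ) ^ ((r : ℝ) - (υ : ℝ) / (n : ℝ)) *
        (((p : ℝ) ^ (r + 1) + (p : ℝ) ^ r + 1 - (e : ℝ) ^ 2) / (12 * (p : ℝ) ^ (r + 1))) *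
        ((gramDet K q : ℝ) ^ ((1 : ℝ) / (n : ℝ))) :=
  hermiteLikeThickness_le_of_oddPrimePower_conductor_general p r hp hr K hcond.1 e k υ he hk
    hυ σ hσ
end

section
/- Let r ≥ 3 be an integer, ζ a primitive 2^r-th root of unity, and K an abelian number field of conductor 2^r, i.e., K ⊆ ℚ(ζ) but K ⊄ ℚ(ζ²). Then K = ℚ(ζ), or K = ℚ(ζ + ζ^{-1}), or K = ℚ(ζ − ζ^{-1}). -/
open IntermediateField

/-! `Gal(F(ζ)/F)` embeds into `(ℤ/2^r)ˣ`, so it is a 2-group. Let `H` be the subgroup fixing `K`.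
Since `K` is not contained in `F(ζ²)`, no nontrivial element of `H` fixes `ζ²`. If `σ ζ = ζ ^ a`
with `σ ^ 4 = 1`, then `2 ^ r` divides `(a² - 1)(a² + 1)`, whose second factor is twice an odd
number, so `σ²` fixes `ζ²`; for `σ ∈ H` this forces `σ² = 1`, and as `H` is a 2-group it has
exponent 2. The same divisibility applied to `(a - 1)(a + 1)` shows that an involution sends `ζ²`
to `ζ²` or `ζ⁻²`. Hence `H` is trivial or generated by one involution `ζ ↦ ±ζ⁻¹`, whose fixed
field is `F(ζ ± ζ⁻¹)`. -/

theorem pow_eq_one_of_isPGroup {G : Type*} [Group G] {p : ℕ} (hG : IsPGroup p G)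
    (h : ∀ g : G, (g ^ p) ^ p = 1 → g ^ p = 1) (g : G) : g ^ p = 1 := by
  obtain ⟨n, hn⟩ := hG g
  replace hn : g ^ p ^ (n + 1) = 1 := by rw [pow_succ, pow_mul, hn, one_pow]
  induction n with
  | zero => simpa using hn
  | succ n ih =>
    refine ih ?_
    rw [pow_succ, pow_mul] at hn ⊢
    rw [pow_succ, pow_mul] at hn
    exact h _ hn

theorem two_pow_dvd_two_mul {r : ℕ} {x m : ℤ} (hm : Odd m) (h : 2 ^ r ∣ x * (2 * m)) :
    2 ^ r ∣ 2 * x := by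
  have hcop : IsCoprime (2 ^ r) m := (Int.isCoprime_two_left.mpr hm).pow_left
  exact hcop.dvd_of_dvd_mul_right (by rwa [mul_left_comm, ← mul_assoc] at h)

theorem two_pow_dvd_two_mul_sub_one_or_add_one {r : ℕ} {a : ℤ} (ha : Odd a)
    (h : 2 ^ r ∣ a ^ 2 - 1) : 2 ^ r ∣ 2 * (a - 1) ∨ 2 ^ r ∣ 2 * (a + 1) := by
  obtain ⟨k, rfl⟩ := ha
  rcases Int.even_or_odd k with hk | hk
  · exact .inl (two_pow_dvd_two_mul hk.add_one (by convert h using 1; ring))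
  · exact .inr (two_pow_dvd_two_mul hk (by convert h using 1; ring))

theorem two_pow_dvd_two_mul_sq_sub_one {r : ℕ} {a : ℤ} (ha : Odd a) (h : 2 ^ r ∣ a ^ 4 - 1) :
    2 ^ r ∣ 2 * (a ^ 2 - 1) := by
  obtain ⟨k, rfl⟩ := ha
  have hodd : Odd (2 * (k ^ 2 + k) + 1) := odd_two_mul_add_one _
  exact two_pow_dvd_two_mul hodd (by convert h using 1; ring)

theorem isPGroup_two_units_zmod_two_pow (r : ℕ) : IsPGroup 2 (ZMod (2 ^ r))ˣ := by
  cases r with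
  | zero => exact IsPGroup.of_card (n := 0) (by simp)
  | succ r =>
    refine IsPGroup.of_card (n := r) ?_
    rw [Nat.card_eq_fintype_card, ZMod.card_units_eq_totient,
      Nat.totient_prime_pow_succ Nat.prime_two]
    exact mul_one _

theorem add_mul_inv_eq_add_mul_inv_iff {L : Type*} [Field L] {x y c : L} (hx : x ≠ 0)
    (hy : y ≠ 0) : y + c * y⁻¹ = x + c * x⁻¹ ↔ y = x ∨ y = c * x⁻¹ := by
  have hfactor : y * (y + c * y⁻¹ - (x + c * x⁻¹)) = (y - x) * (y - c * x⁻¹) := by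
    field_simp
    ring
  rw [← sub_eq_zero, ← mul_right_inj' hy, mul_zero, hfactor, mul_eq_zero, sub_eq_zero, sub_eq_zero]

theorem exists_odd_zpow_eq {L : Type*} [Field L] {r : ℕ} {ζ ξ : L}
    (hζ : IsPrimitiveRoot ζ (2 ^ r)) (hξ : IsPrimitiveRoot ξ (2 ^ r)) :
    ∃ a : ℤ, Odd a ∧ ζ ^ a = ξ := by
  cases r with
  | zero => exact ⟨1, odd_one, by simp_all⟩
  | succ r =>
    obtain ⟨a, -, ha, rfl⟩ := hζ.isPrimitiveRoot_iff.mp hξ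
    rw [Nat.coprime_pow_right_iff r.succ_pos, Nat.coprime_two_right] at ha
    exact ⟨a, ha.natCast, zpow_natCast ζ a⟩

section Galois

variable {F L : Type*} [Field F] [Field L] [Algebra F L]

theorem mem_fixingSubgroup_adjoin_simple_iff {x : L} {σ : Gal(L/F)} :
    σ ∈ F⟮x⟯.fixingSubgroup ↔ σ x = x := by
  simpa using forall_mem_adjoin_smul_eq_self_iff F (S := {x}) σ

theorem algEquiv_ext_of_adjoin_simple_eq_top {x : L} (hx : F⟮x⟯ = ⊤) {σ τ : Gal(L/F)}
    (h : σ x = τ x) : σ = τ := by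
  have hfix : τ⁻¹ * σ ∈ F⟮x⟯.fixingSubgroup := by
    rw [mem_fixingSubgroup_adjoin_simple_iff, AlgEquiv.mul_apply, h]
    exact τ.symm_apply_apply x
  rw [hx, fixingSubgroup_top, Subgroup.mem_bot] at hfix
  exact (inv_mul_eq_one.mp hfix).symm

variable [FiniteDimensional F L] [IsGalois F L] {K : IntermediateField F L}

theorem fixingSubgroup_le_fixingSubgroup_iff {K₁ K₂ : IntermediateField F L} :
    K₁.fixingSubgroup ≤ K₂.fixingSubgroup ↔ K₂ ≤ K₁ := by
  rw [← le_iff_le, IsGalois.fixedField_fixingSubgroup]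

theorem eq_one_of_map_sq_eq {x : L} (hx : F⟮x⟯ = ⊤) (hK : ¬ K ≤ F⟮x ^ 2⟯) {σ : Gal(L/F)}
    (hσ : σ ∈ K.fixingSubgroup) (h : σ (x ^ 2) = x ^ 2) : σ = 1 := by
  by_contra hne
  have eq_or_eq_neg {τ : Gal(L/F)} (hτ : τ (x ^ 2) = x ^ 2) : τ = 1 ∨ τ x = -x := by
    rw [map_pow, sq_eq_sq_iff_eq_or_eq_neg] at hτ
    exact hτ.imp_left fun hτ ↦ algEquiv_ext_of_adjoin_simple_eq_top hx hτ
  have hσx : σ x = -x := (eq_or_eq_neg h).resolve_left hne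
  refine hK (fixingSubgroup_le_fixingSubgroup_iff.mp fun τ hτ ↦ ?_)
  rcases eq_or_eq_neg (mem_fixingSubgroup_adjoin_simple_iff.mp hτ) with rfl | hτx
  · exact one_mem _
  · rwa [algEquiv_ext_of_adjoin_simple_eq_top hx (hτx.trans hσx.symm)]

theorem eq_adjoin_add_smul_inv {x : L} (hx : F⟮x⟯ = ⊤) (hx0 : x ≠ 0) {σ : Gal(L/F)} {c : F}
    (hσ : σ x = c • x⁻¹) (hK : ∀ τ, τ ∈ K.fixingSubgroup ↔ τ = 1 ∨ τ = σ) :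
    K = F⟮x + c • x⁻¹⟯ := by
  suffices h : K.fixingSubgroup = F⟮x + c • x⁻¹⟯.fixingSubgroup from
    IsGalois.intermediateFieldEquivSubgroup.injective h
  ext τ
  have hτx : τ x ≠ 0 := by simpa using hx0
  have hone : τ = 1 ↔ τ x = x :=
    ⟨by rintro rfl; rfl, fun h ↦ algEquiv_ext_of_adjoin_simple_eq_top hx h⟩
  have heq : τ = σ ↔ τ x = c • x⁻¹ :=
    ⟨by rintro rfl; exact hσ, fun h ↦ algEquiv_ext_of_adjoin_simple_eq_top hx (h.trans hσ.symm)⟩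
  rw [hK, hone, heq, mem_fixingSubgroup_adjoin_simple_iff, map_add, map_smul, map_inv₀]
  simp only [Algebra.smul_def]
  exact (add_mul_inv_eq_add_mul_inv_iff hx0 hτx).symm

end Galois

section TwoPowerRoot

variable {F L : Type*} [Field F] [Field L] [Algebra F L] {r : ℕ} {ζ : L}

theorem pow_apply_eq_zpow {σ : Gal(L/F)} {a : ℤ} (h : σ ζ = ζ ^ a) (n : ℕ) :
    (σ ^ n) ζ = ζ ^ a ^ n := by
  induction n with
  | zero => simp
  | succ n ih => rw [pow_succ, AlgEquiv.mul_apply, h, map_zpow₀, ih, ← zpow_mul, ← pow_succ]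

theorem zpow_eq_zpow_iff_two_pow_dvd (hζ : IsPrimitiveRoot ζ (2 ^ r)) {a b : ℤ} :
    ζ ^ a = ζ ^ b ↔ 2 ^ r ∣ a - b := by
  have hζ0 : ζ ≠ 0 := hζ.ne_zero (by positivity)
  rw [← div_eq_one_iff_eq (zpow_ne_zero b hζ0), ← zpow_sub₀ hζ0, hζ.zpow_eq_one_iff_dvd]
  norm_cast

theorem two_pow_dvd_of_pow_eq_one (hζ : IsPrimitiveRoot ζ (2 ^ r)) {σ : Gal(L/F)} {a : ℤ}
    (ha : σ ζ = ζ ^ a) {n : ℕ} (hσ : σ ^ n = 1) : 2 ^ r ∣ a ^ n - 1 := by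
  rw [← zpow_eq_zpow_iff_two_pow_dvd hζ, zpow_one, ← pow_apply_eq_zpow ha, hσ, AlgEquiv.one_apply]

theorem map_sq_eq_or_eq_inv_of_sq_eq_one (hζ : IsPrimitiveRoot ζ (2 ^ r)) {σ : Gal(L/F)}
    (hσ : σ ^ 2 = 1) : σ (ζ ^ 2) = ζ ^ 2 ∨ σ (ζ ^ 2) = (ζ ^ 2)⁻¹ := by
  obtain ⟨a, ha, hσζ⟩ := exists_odd_zpow_eq hζ (hζ.map_of_injective σ.injective)
  have hσ_sq : σ (ζ ^ 2) = ζ ^ (2 * a) := by rw [map_pow, ← hσζ, mul_comm, zpow_mul, zpow_ofNat]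
  have hdvd := two_pow_dvd_two_mul_sub_one_or_add_one ha (two_pow_dvd_of_pow_eq_one hζ hσζ.symm hσ)
  rw [hσ_sq, ← zpow_natCast, ← zpow_neg, zpow_eq_zpow_iff_two_pow_dvd hζ,
    zpow_eq_zpow_iff_two_pow_dvd hζ]
  simpa [mul_sub, mul_add] using hdvd

theorem sq_map_sq_eq_of_pow_four_eq_one (hζ : IsPrimitiveRoot ζ (2 ^ r)) {σ : Gal(L/F)}
    (hσ : σ ^ 4 = 1) : (σ ^ 2) (ζ ^ 2) = ζ ^ 2 := by
  obtain ⟨a, ha, hσζ⟩ := exists_odd_zpow_eq hζ (hζ.map_of_injective σ.injective)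
  have hdvd := two_pow_dvd_two_mul_sq_sub_one ha (two_pow_dvd_of_pow_eq_one hζ hσζ.symm hσ)
  rw [map_pow, pow_apply_eq_zpow hσζ.symm, ← zpow_natCast, ← zpow_natCast, ← zpow_mul,
    zpow_eq_zpow_iff_two_pow_dvd hζ]
  convert hdvd using 1
  push_cast
  ring

theorem map_eq_inv_or_neg_inv_of_sq_eq_one (hζ : IsPrimitiveRoot ζ (2 ^ r)) {σ : Gal(L/F)}
    (hσ : σ ^ 2 = 1) (hσζ : σ (ζ ^ 2) ≠ ζ ^ 2) : σ ζ = ζ⁻¹ ∨ σ ζ = -ζ⁻¹ := by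
  rw [← sq_eq_sq_iff_eq_or_eq_neg, ← map_pow, inv_pow]
  exact (map_sq_eq_or_eq_inv_of_sq_eq_one hζ hσ).resolve_left hσζ

theorem isPGroup_two_gal (hζ : IsPrimitiveRoot ζ (2 ^ r)) (hgen : F⟮ζ⟯ = ⊤) :
    IsPGroup 2 Gal(L/F) := by
  refine (isPGroup_two_units_zmod_two_pow r).of_injective (hζ.autToPow F) fun σ τ h ↦ ?_
  refine algEquiv_ext_of_adjoin_simple_eq_top hgen ?_
  rw [← hζ.autToPow_spec F σ, h, hζ.autToPow_spec F τ]

variable {H : Subgroup Gal(L/F)}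

theorem sq_eq_one_of_mem (hζ : IsPrimitiveRoot ζ (2 ^ r)) (hH : IsPGroup 2 H)
    (hfaithful : ∀ σ ∈ H, σ (ζ ^ 2) = ζ ^ 2 → σ = 1) {σ : Gal(L/F)} (hσ : σ ∈ H) : σ ^ 2 = 1 := by
  have hsq : (⟨σ, hσ⟩ : H) ^ 2 = 1 := by
    refine pow_eq_one_of_isPGroup hH (fun τ hτ ↦ ?_) _
    have hτ4 : (τ : Gal(L/F)) ^ 4 = 1 := by
      rw [← pow_mul] at hτ
      exact congrArg Subtype.val hτ
    exact Subtype.ext (hfaithful _ (τ ^ 2).2 (sq_map_sq_eq_of_pow_four_eq_one hζ hτ4))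
  exact congrArg Subtype.val hsq

theorem mem_iff_eq_one_or_eq (hζ : IsPrimitiveRoot ζ (2 ^ r))
    (hfaithful : ∀ σ ∈ H, σ (ζ ^ 2) = ζ ^ 2 → σ = 1) (hsq : ∀ σ ∈ H, σ ^ 2 = 1)
    {σ : Gal(L/F)} (hσ : σ ∈ H) (hσ1 : σ ≠ 1) (τ : Gal(L/F)) : τ ∈ H ↔ τ = 1 ∨ τ = σ := by
  have map_sq {ρ : Gal(L/F)} (hρ : ρ ∈ H) (hρ1 : ρ ≠ 1) : ρ (ζ ^ 2) = (ζ ^ 2)⁻¹ :=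
    (map_sq_eq_or_eq_inv_of_sq_eq_one hζ (hsq ρ hρ)).resolve_left (mt (hfaithful ρ hρ) hρ1)
  refine ⟨fun hτ ↦ or_iff_not_imp_left.mpr fun hτ1 ↦ ?_, ?_⟩
  · have hτσ : τ * σ = 1 := by
      refine hfaithful _ (mul_mem hτ hσ) ?_
      rw [AlgEquiv.mul_apply, map_sq hσ hσ1, map_inv₀, map_sq hτ hτ1, inv_inv]
    have hσσ : σ * σ = 1 := by rw [← sq, hsq σ hσ]
    exact mul_right_cancel (hτσ.trans hσσ.symm)
  · rintro (rfl | rfl)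
    exacts [one_mem H, hσ]

theorem eq_top_or_eq_adjoin_of_not_le [IsCyclotomicExtension {2 ^ r} F L]
    (hζ : IsPrimitiveRoot ζ (2 ^ r)) {K : IntermediateField F L} (hK : ¬ K ≤ F⟮ζ ^ 2⟯) :
    K = ⊤ ∨ K = F⟮ζ + ζ⁻¹⟯ ∨ K = F⟮ζ - ζ⁻¹⟯ := by
  have : FiniteDimensional F L := IsCyclotomicExtension.finiteDimensional {2 ^ r} F L
  have : IsGalois F L := IsCyclotomicExtension.isGalois {2 ^ r} F L
  have hζ0 : ζ ≠ 0 := hζ.ne_zero (by positivity)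
  have hgen : F⟮ζ⟯ = ⊤ :=
    adjoin_eq_top_of_algebra F {ζ} (IsCyclotomicExtension.adjoin_primitive_root_eq_top hζ)
  have hfaithful : ∀ σ ∈ K.fixingSubgroup, σ (ζ ^ 2) = ζ ^ 2 → σ = 1 :=
    fun _ ↦ eq_one_of_map_sq_eq hgen hK
  have hsq : ∀ σ ∈ K.fixingSubgroup, σ ^ 2 = 1 :=
    fun _ ↦ sq_eq_one_of_mem hζ ((isPGroup_two_gal hζ hgen).to_subgroup _) hfaithful
  rcases K.fixingSubgroup.bot_or_exists_ne_one with hbot | ⟨σ, hσ, hσ1⟩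
  · left
    rw [← IsGalois.fixedField_fixingSubgroup K, hbot, fixedField_bot]
  right
  have hmem := mem_iff_eq_one_or_eq hζ hfaithful hsq hσ hσ1
  rcases map_eq_inv_or_neg_inv_of_sq_eq_one hζ (hsq σ hσ) (mt (hfaithful σ hσ) hσ1) with h | h
  · left
    simpa using eq_adjoin_add_smul_inv (c := 1) hgen hζ0 (by simpa using h) hmem
  · right
    simpa [sub_eq_add_neg] using eq_adjoin_add_smul_inv (c := -1) hgen hζ0 (by simpa using h) hmem

end TwoPowerRoot

theorem subfields_of_conductor_two_pow_general {F E : Type*} [Field F] [Field E] [Algebra F E]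
    {r : ℕ} {ζ : E} (hζ : IsPrimitiveRoot ζ (2 ^ r)) {K : IntermediateField F E} (hle : K ≤ F⟮ζ⟯)
    (hK : ¬ K ≤ F⟮ζ ^ 2⟯) : K = F⟮ζ⟯ ∨ K = F⟮ζ + ζ⁻¹⟯ ∨ K = F⟮ζ - ζ⁻¹⟯ := by
  have : IsCyclotomicExtension {2 ^ r} F F⟮ζ⟯ :=
    (isCyclotomicExtension_singleton_iff_eq_adjoin _ _ _ _ hζ).mpr rfl
  let z : F⟮ζ⟯ := AdjoinSimple.gen F ζ
  have hz : IsPrimitiveRoot z (2 ^ r) := .of_map_of_injective hζ (algebraMap F⟮ζ⟯ E).injective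
  obtain ⟨K, rfl⟩ : ∃ K' : IntermediateField F F⟮ζ⟯, lift K' = K := ⟨_, lift_restrict hle⟩
  have lift_adjoin (x : F⟮ζ⟯) : lift F⟮x⟯ = F⟮(x : E)⟯ := lift_adjoin_simple _ _ _
  have hKz : ¬ K ≤ F⟮z ^ 2⟯ := fun h ↦ hK <| by
    have hlift : lift K ≤ lift F⟮z ^ 2⟯ := map_mono _ h
    rwa [lift_adjoin] at hlift
  have := eq_top_or_eq_adjoin_of_not_le hz hKz
  simpa [← lift_inj, lift_adjoin, z] using this

theorem subfields_of_conductor_two_pow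
    (r : ℕ) (hr : 3 ≤ r) (ζ : ℂ) (hζ : IsPrimitiveRoot ζ (2 ^ r))
    (K : IntermediateField ℚ ℂ) (h1 : K ≤ ℚ⟮ζ⟯) (h2 : ¬ K ≤ ℚ⟮ζ ^ 2⟯) :
    K = ℚ⟮ζ⟯ ∨ K = ℚ⟮ζ + ζ⁻¹⟯ ∨ K = ℚ⟮ζ - ζ⁻¹⟯ :=
  subfields_of_conductor_two_pow_general hζ h1 h2
end

section
/- Let r ≥ 3, let ζ be a primitive 2^r-th root of unity, and let K = ℚ(ζ − ζ^{-1}), a field of degree n = 2^{r−2} over ℚ with D_K the absolute value of its discriminant. Then M(K) ≤ 2^{-n} · (2n − 1)^{n/2}. -/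
open NumberField IntermediateField

/-!
Let `n = 2 ^ (r - 2)` and `η = ζ - ζ⁻¹`, an element of `K ⊆ ℚ(ζ)`. The numbers `w₀ = 1` and
`wⱼ = ζ ^ j + (-ζ⁻¹) ^ j` for `j > 0` are, up to a factor `2` at `j = 0`, values at `η` of Dickson
polynomials with parameter `-1`. Since `ζ ^ (2 * n) = -1`, the one with `j = n` vanishes, so the
Dickson recurrence shows that `w₀, …, wₙ₋₁` span `K`. Rounding the coordinates of `x ∈ K` gives
`c ∈ 𝓞 K` for which `x - c` is a Laurent sum `∑ bᵢ ζ ^ i` over `-n < i < n` with `|bᵢ| ≤ 1 / 2`. Its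
exponents are pairwise incongruent modulo `2 * n = 2 ^ (r - 1)`, so that the cross terms vanish when
`|σ (x - c)| ^ 2` is averaged over the embeddings `σ` of `ℚ(ζ)`: the average is
`∑ bᵢ ^ 2 ≤ (2 * n - 1) / 4`. The inequality of arithmetic and geometric means then gives
`N(x - c) ^ 2 ≤ ((2 * n - 1) / 4) ^ n`.
-/

section PrimitiveRoots

variable {p s : ℕ}

lemma isPrimitiveRoot_prime_pow_succ_iff {M : Type*} [CommMonoid M] (hp : p.Prime) {z : M} :
    IsPrimitiveRoot z (p ^ (s + 1)) ↔ z ^ p ^ s ≠ 1 ∧ z ^ p ^ (s + 1) = 1 := by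
  have : Fact p.Prime := ⟨hp⟩
  refine ⟨fun h ↦ ⟨h.pow_ne_one_of_pos_of_lt (pow_pos hp.pos s).ne'
    (Nat.pow_lt_pow_succ hp.one_lt), h.pow_eq_one⟩, fun h ↦ ?_⟩
  exact IsPrimitiveRoot.iff_orderOf.mpr (orderOf_eq_prime_pow h.1 h.2)

-- Multiplication by `ζ ^ p` permutes the primitive roots and scales the sum by `(ζ ^ p) ^ k ≠ 1`.
lemma sum_primitiveRoots_zpow_eq_zero {F : Type*} [Field F] (hp : p.Prime) {k : ℤ}
    (hk : ¬ (p ^ s : ℤ) ∣ k) : ∑ z ∈ primitiveRoots (p ^ (s + 1)) F, z ^ k = 0 := by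
  obtain hempty | ⟨ζ, hζ⟩ := (primitiveRoots (p ^ (s + 1)) F).eq_empty_or_nonempty
  · rw [hempty, Finset.sum_empty]
  have hpos : 0 < p ^ (s + 1) := pow_pos hp.pos _
  replace hζ := isPrimitiveRoot_of_mem_primitiveRoots hζ
  have hroot : IsPrimitiveRoot (ζ ^ p) (p ^ s) := hζ.pow hpos (pow_succ' p s)
  have hshift : ∑ z ∈ primitiveRoots (p ^ (s + 1)) F, z ^ k
      = ∑ z ∈ primitiveRoots (p ^ (s + 1)) F, (ζ ^ p * z) ^ k := by
    refine (Finset.sum_equiv (Equiv.mulLeft₀ (ζ ^ p) (hroot.ne_zero (pow_pos hp.pos s).ne'))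
      (fun z ↦ ?_) fun z _ ↦ rfl).symm
    have hpow : (ζ ^ p) ^ p ^ (s + 1) = 1 := by rw [pow_succ, pow_mul, hroot.pow_eq_one, one_pow]
    simp [mem_primitiveRoots hpos, isPrimitiveRoot_prime_pow_succ_iff hp, mul_pow,
      hroot.pow_eq_one, hpow]
  have hne : (ζ ^ p) ^ k ≠ 1 := by
    rwa [Ne, hroot.zpow_eq_one_iff_dvd, Nat.cast_pow]
  simp_rw [mul_zpow] at hshift
  rw [← Finset.mul_sum] at hshift
  by_contra hsum
  exact hne (right_eq_mul₀ hsum |>.mp hshift)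

lemma sum_primitiveRoots_norm_sum_zpow_sq (hp : p.Prime) {S : Finset ℤ}
    (hS : (S : Set ℤ).Pairwise fun i j ↦ ¬ (p ^ s : ℤ) ∣ i - j) (b : ℤ → ℂ) :
    ∑ z ∈ primitiveRoots (p ^ (s + 1)) ℂ, ‖∑ i ∈ S, b i * z ^ i‖ ^ 2
      = (p ^ (s + 1)).totient * ∑ i ∈ S, ‖b i‖ ^ 2 := by
  have hpos : p ^ (s + 1) ≠ 0 := pow_ne_zero _ hp.ne_zero
  have hexpand : ∀ z ∈ primitiveRoots (p ^ (s + 1)) ℂ,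
      (‖∑ i ∈ S, b i * z ^ i‖ ^ 2 : ℂ)
        = ∑ i ∈ S, ∑ j ∈ S, b i * starRingEnd ℂ (b j) * z ^ (i - j) := by
    intro z hz
    have hz := isPrimitiveRoot_of_mem_primitiveRoots hz
    have hconj : starRingEnd ℂ z = z⁻¹ := (Complex.inv_eq_conj (hz.norm'_eq_one hpos)).symm
    rw [← Complex.mul_conj', map_sum, Finset.sum_mul_sum]
    refine Finset.sum_congr rfl fun i _ ↦ Finset.sum_congr rfl fun j _ ↦ ?_
    rw [map_mul, map_zpow₀, hconj, zpow_sub₀ (hz.ne_zero hpos), inv_zpow]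
    ring
  have horth : ∀ i ∈ S, ∑ j ∈ S, ∑ z ∈ primitiveRoots (p ^ (s + 1)) ℂ,
      b i * starRingEnd ℂ (b j) * z ^ (i - j) = (p ^ (s + 1)).totient * (‖b i‖ : ℂ) ^ 2 := by
    intro i hi
    rw [Finset.sum_eq_single_of_mem i hi]
    · simp [Complex.mul_conj', Complex.card_primitiveRoots]
    · intro j hj hji
      rw [← Finset.mul_sum, sum_primitiveRoots_zpow_eq_zero hp (hS hi hj hji.symm), mul_zero]
  rw [← Complex.ofReal_inj]
  push_cast
  rw [Finset.sum_congr rfl hexpand, Finset.sum_comm, Finset.mul_sum]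
  refine Finset.sum_congr rfl fun i hi ↦ ?_
  rw [Finset.sum_comm, horth i hi]

end PrimitiveRoots

lemma prod_le_average_pow_card {ι : Type*} (s : Finset ι) (f : ι → ℝ) (hf : ∀ i ∈ s, 0 ≤ f i) :
    ∏ i ∈ s, f i ≤ ((∑ i ∈ s, f i) / s.card) ^ s.card := by
  obtain rfl | hs := s.eq_empty_or_nonempty
  · simp
  have hprod : 0 ≤ ∏ i ∈ s, f i := Finset.prod_nonneg hf
  have hamgm := Real.geom_mean_le_arith_mean s (fun _ ↦ 1) f (by simp) (by simpa) hf
  simp only [Real.rpow_one, Finset.sum_const, nsmul_eq_mul, mul_one, one_mul] at hamgm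
  calc ∏ i ∈ s, f i = ((∏ i ∈ s, f i) ^ (s.card : ℝ)⁻¹) ^ s.card :=
        (Real.rpow_inv_natCast_pow hprod hs.card_ne_zero).symm
    _ ≤ _ := by gcongr

lemma sq_norm_le_average_pow_finrank {L : Type*} [Field L] [NumberField L] (y : L) :
    ((Algebra.norm ℚ y : ℚ) : ℝ) ^ 2
      ≤ ((∑ σ : L →ₐ[ℚ] ℂ, ‖σ y‖ ^ 2) / Module.finrank ℚ L) ^ Module.finrank ℚ L := by
  have hnorm : |((Algebra.norm ℚ y : ℚ) : ℝ)| = ∏ σ : L →ₐ[ℚ] ℂ, ‖σ y‖ := by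
    rw [← norm_prod, ← Algebra.norm_eq_prod_embeddings]
    simp
  have hcard : (Finset.univ : Finset (L →ₐ[ℚ] ℂ)).card = Module.finrank ℚ L :=
    AlgHom.card ℚ L ℂ
  rw [← sq_abs, hnorm, ← Finset.prod_pow]
  simpa only [hcard] using
    prod_le_average_pow_card Finset.univ (fun σ : L →ₐ[ℚ] ℂ ↦ ‖σ y‖ ^ 2) fun _ _ ↦ sq_nonneg _

lemma sq_norm_le_average_pow_finrank_of_algebraMap {K L : Type*} [Field K] [NumberField K]
    [Field L] [NumberField L] [Algebra K L] (y : K) :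
    ((Algebra.norm ℚ y : ℚ) : ℝ) ^ 2
      ≤ ((∑ σ : L →ₐ[ℚ] ℂ, ‖σ (algebraMap K L y)‖ ^ 2) / Module.finrank ℚ L)
        ^ Module.finrank ℚ K := by
  have hdeg := Module.finrank_mul_finrank ℚ K L
  have hpos : Module.finrank K L ≠ 0 := by
    intro h0
    exact (Module.finrank_pos (R := ℚ) (M := L)).ne' (by rw [← hdeg, h0, mul_zero])
  have hL := sq_norm_le_average_pow_finrank (algebraMap K L y)
  rw [← Algebra.norm_norm (S := K), Algebra.norm_algebraMap, map_pow, Rat.cast_pow,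
    pow_right_comm, ← hdeg, pow_mul, hdeg] at hL
  exact (pow_le_pow_iff_left₀ (by positivity) (by positivity) hpos).mp hL

lemma eq_top_of_adjoin_eq_top {R A : Type*} [CommSemiring R] [Semiring A] [Algebra R A]
    {s : Set A} (hs : Algebra.adjoin R s = ⊤) {W : Submodule R A} (hone : 1 ∈ W)
    (hmul : ∀ a ∈ s, ∀ y ∈ W, a * y ∈ W) : W = ⊤ := by
  have hclosed : ∀ a : A, ∀ y ∈ W, a * y ∈ W := by
    intro a
    have ha : a ∈ Algebra.adjoin R s := hs ▸ Algebra.mem_top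
    induction ha using Algebra.adjoin_induction with
    | mem a ha => exact hmul a ha
    | algebraMap r => exact fun y hy ↦ Algebra.smul_def r y ▸ W.smul_mem r hy
    | add a b _ _ ha hb => exact fun y hy ↦ add_mul a b y ▸ W.add_mem (ha y hy) (hb y hy)
    | mul a b _ _ ha hb => exact fun y hy ↦ mul_assoc a b y ▸ ha _ (hb y hy)
  exact eq_top_iff.mpr fun a _ ↦ mul_one a ▸ hclosed a 1 hone

section Dickson

open Polynomial

lemma eval_dickson_one_mul_add {R : Type*} [CommRing R] (x y : R) :
    ∀ n, (dickson 1 (x * y) n).eval (x + y) = x ^ n + y ^ n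
  | 0 => by simp; norm_num
  | 1 => by simp
  | n + 2 => by
    simp only [dickson_add_two, eval_sub, eval_mul, eval_X, eval_C, eval_dickson_one_mul_add x y]
    ring

/-- The family `1, D₁(η), D₂(η), …` of values at `η` of the Dickson polynomials of the first kind
with parameter `a`, a spanning family in which coordinates are rounded. The entry at `0` is `1`
rather than `D₀(η) = 2`, so that the family also spans when `2` is not invertible. -/
noncomputable def dicksonFamily {A : Type*} [CommRing A] (a η : A) (j : ℕ) : A :=
  if j = 0 then 1 else (dickson 1 a j).eval η

lemma dicksonFamily_of_ne_zero {A : Type*} [CommRing A] (a η : A) {j : ℕ} (hj : j ≠ 0) :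
    dicksonFamily a η j = (dickson 1 a j).eval η :=
  if_neg hj

lemma map_dicksonFamily {A B : Type*} [CommRing A] [CommRing B] (f : A →+* B) (a η : A) (j : ℕ) :
    f (dicksonFamily a η j) = dicksonFamily (f a) (f η) j := by
  unfold dicksonFamily
  split_ifs <;> simp [← map_dickson, eval_map]

lemma span_dicksonFamily_eq_top {R A : Type*} [CommRing R] [CommRing A] [Algebra R A] {a : R}
    {η : A} {n : ℕ} (hn : n ≠ 0) (hη : Algebra.adjoin R {η} = ⊤)
    (hzero : (dickson 1 (algebraMap R A a) n).eval η = 0) :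
    Submodule.span R (dicksonFamily (algebraMap R A a) η '' Finset.range n) = ⊤ := by
  set W := Submodule.span R (dicksonFamily (algebraMap R A a) η '' Finset.range n)
  have hfam : ∀ j < n, dicksonFamily (algebraMap R A a) η j ∈ W := fun j hj ↦
    Submodule.subset_span ⟨j, by simpa using hj, rfl⟩
  have hone : 1 ∈ W := by simpa [dicksonFamily] using hfam 0 (Nat.pos_of_ne_zero hn)
  have heval : ∀ j ≤ n, (dickson 1 (algebraMap R A a) j).eval η ∈ W := by
    intro j hj
    obtain rfl | hj := hj.eq_or_lt
    · exact hzero ▸ W.zero_mem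
    · obtain rfl | hj0 := eq_or_ne j 0
      · have : (dickson 1 (algebraMap R A a) 0).eval η = (2 : R) • 1 := by
          norm_num [ofNat_smul_eq_nsmul]
        exact this ▸ W.smul_mem 2 hone
      · simpa [dicksonFamily, hj0] using hfam j hj
  refine eq_top_of_adjoin_eq_top hη hone ?_
  simp only [Set.mem_singleton_iff, forall_eq]
  intro y hy
  induction hy using Submodule.span_induction with
  | mem y hy =>
    obtain ⟨_ | j, hj, rfl⟩ := hy
    · simpa [dicksonFamily] using heval 1 (Nat.one_le_iff_ne_zero.mpr hn)
    · have hj : j + 1 < n := by simpa using hj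
      have hrec : η * dicksonFamily (algebraMap R A a) η (j + 1)
          = (dickson 1 (algebraMap R A a) (j + 2)).eval η
            + a • (dickson 1 (algebraMap R A a) j).eval η := by
        simp [dicksonFamily, Algebra.smul_def]
      exact hrec ▸ W.add_mem (heval _ hj) (W.smul_mem a (heval j (by omega)))
  | zero => simp
  | add y z _ _ hy hz => exact mul_add η y z ▸ W.add_mem hy hz
  | smul c y _ hy => exact mul_smul_comm c η y ▸ W.smul_mem c hy

end Dickson

lemma dicksonFamily_neg_one_sub_inv {F : Type*} [Field F] {ζ : F} (hζ : ζ ≠ 0) {j : ℕ}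
    (hj : j ≠ 0) : dicksonFamily (-1) (ζ - ζ⁻¹) j = ζ ^ j + (-ζ⁻¹) ^ j := by
  have h := eval_dickson_one_mul_add ζ (-ζ⁻¹) j
  rwa [mul_neg, mul_inv_cancel₀ hζ, ← sub_eq_add_neg, ← dicksonFamily_of_ne_zero _ _ hj] at h

lemma exists_sum_smul_dicksonFamily_eq_sum_zpow {R F : Type*} [CommRing R] [LinearOrder R]
    [IsStrictOrderedRing R] [Field F] [Algebra R F] {ζ : F} (hζ : ζ ≠ 0) (e : ℕ → R) (m : ℕ) :
    ∃ b : ℤ → R, (∀ i, |b i| = |e i.natAbs|) ∧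
      ∑ j ∈ Finset.range (m + 1), e j • dicksonFamily (-1) (ζ - ζ⁻¹) j
        = ∑ i ∈ Finset.Icc (-m : ℤ) m, b i • ζ ^ i := by
  let b : ℤ → R := fun i ↦ if 0 ≤ i then e i.natAbs else (-1) ^ i.natAbs * e i.natAbs
  refine ⟨b, fun i ↦ by simp only [b]; split_ifs <;> simp [abs_mul], ?_⟩
  induction m with
  | zero => simp [b, dicksonFamily]
  | succ m ih =>
    have hpos : b (m + 1 : ℤ) = e (m + 1) := by
      simp [b, show (0 : ℤ) ≤ m + 1 by positivity, show ((m : ℤ) + 1).natAbs = m + 1 by omega]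
    have hneg : b (-(m + 1) : ℤ) = (-1) ^ (m + 1) * e (m + 1) := by
      simp only [b, if_neg (show ¬ (0 : ℤ) ≤ -(m + 1) by omega),
        show (-((m : ℤ) + 1)).natAbs = m + 1 by omega]
    rw [Finset.sum_range_succ, ih, Nat.cast_add_one, Finset.sum_Icc_succ_eq_add_endpoints, hpos,
      hneg, dicksonFamily_neg_one_sub_inv hζ m.succ_ne_zero, neg_pow ζ⁻¹, zpow_neg,
      ← Nat.cast_add_one, zpow_natCast]
    simp only [Algebra.smul_def, map_mul, map_pow, map_neg, map_one, Nat.succ_eq_add_one]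
    ring

lemma exists_integer_sub_eq_sum_smul {K ι : Type*} [Field K] [CharZero K] {s : Finset ι}
    (w : ι → 𝓞 K) {x : K} (hx : x ∈ Submodule.span ℚ ((fun i ↦ (w i : K)) '' s)) :
    ∃ (c : 𝓞 K) (e : ι → ℚ), (∀ i, |e i| ≤ 1 / 2) ∧ x - c = ∑ i ∈ s, e i • (w i : K) := by
  obtain ⟨a, rfl⟩ := (Submodule.mem_span_image_finset_iff_exists_fun' ℚ).mp hx
  refine ⟨∑ i ∈ s, round (a i) • w i, fun i ↦ a i - round (a i), fun i ↦ abs_sub_round _, ?_⟩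
  simp [Algebra.smul_def, sub_mul]

lemma sum_embeddings_norm_sum_zpow_sq {L : Type*} [Field L] [NumberField L] {p s : ℕ}
    (hp : p.Prime) [IsCyclotomicExtension {p ^ (s + 1)} ℚ L] {ζ : L}
    (hζ : IsPrimitiveRoot ζ (p ^ (s + 1))) {S : Finset ℤ}
    (hS : (S : Set ℤ).Pairwise fun i j ↦ ¬ (p ^ s : ℤ) ∣ i - j) (b : ℤ → ℚ) :
    ∑ σ : L →ₐ[ℚ] ℂ, ‖σ (∑ i ∈ S, b i • ζ ^ i)‖ ^ 2
      = Module.finrank ℚ L * ∑ i ∈ S, (b i : ℝ) ^ 2 := by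
  have hpos : 0 < p ^ (s + 1) := pow_pos hp.pos _
  have : NeZero (p ^ (s + 1)) := ⟨hpos.ne'⟩
  have hsum : ∑ σ : L →ₐ[ℚ] ℂ, ‖σ (∑ i ∈ S, b i • ζ ^ i)‖ ^ 2
      = ∑ z ∈ primitiveRoots (p ^ (s + 1)) ℂ, ‖∑ i ∈ S, (b i : ℂ) * z ^ i‖ ^ 2 := by
    rw [← Finset.sum_coe_sort (primitiveRoots (p ^ (s + 1)) ℂ)]
    refine Fintype.sum_equiv (hζ.embeddingsEquivPrimitiveRoots ℂ
      (Polynomial.cyclotomic.irreducible_rat hpos)) _ _ fun σ ↦ ?_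
    simp [Algebra.smul_def]
  rw [hsum, sum_primitiveRoots_norm_sum_zpow_sq hp hS,
    IsCyclotomicExtension.Rat.finrank (p ^ (s + 1))]
  simp

lemma finrank_le_two_of_sq_mem_span {K L : Type*} [Field K] [Ring L] [Algebra K L] {ζ : L}
    (hgen : Algebra.adjoin K {ζ} = ⊤) (hsq : ζ ^ 2 ∈ Submodule.span K {1, ζ}) :
    Module.finrank K L ≤ 2 := by
  classical
  have hspan : Submodule.span K {1, ζ} = ⊤ := by
    refine eq_top_of_adjoin_eq_top hgen (Submodule.subset_span (by simp)) ?_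
    simp only [Set.mem_singleton_iff, forall_eq]
    intro y hy
    obtain ⟨c, d, rfl⟩ := Submodule.mem_span_pair.mp hy
    rw [mul_add, mul_smul_comm, mul_smul_comm, mul_one, ← sq]
    exact add_mem (Submodule.smul_mem _ c (Submodule.subset_span (by simp)))
      (Submodule.smul_mem _ d hsq)
  have hcard := finrank_span_finset_le_card (R := K) {1, ζ}
  rw [Set.finrank, Finset.coe_pair, hspan, finrank_top] at hcard
  exact hcard.trans Finset.card_le_two

lemma pairwise_not_dvd_sub_Icc {m : ℕ} {N : ℤ} (hN : 2 * m < N) :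
    (Finset.Icc (-m : ℤ) m : Set ℤ).Pairwise fun i j ↦ ¬ N ∣ i - j := by
  intro i hi j hj hij hdvd
  rw [Finset.mem_coe, Finset.mem_Icc] at hi hj
  refine hij (sub_eq_zero.mp (Int.eq_zero_of_abs_lt_dvd hdvd ?_))
  rw [abs_lt]
  omega

lemma sum_sq_le_card_div_four {F ι : Type*} [Field F] [LinearOrder F] [IsStrictOrderedRing F]
    {S : Finset ι} {b : ι → F} (hb : ∀ i ∈ S, |b i| ≤ 1 / 2) :
    ∑ i ∈ S, b i ^ 2 ≤ S.card / 4 := by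
  have hsq : ∀ i ∈ S, b i ^ 2 ≤ 1 / 4 := fun i hi ↦
    (sq_le_sq' (abs_le.mp (hb i hi)).1 (abs_le.mp (hb i hi)).2).trans_eq (by norm_num)
  simpa [div_eq_mul_inv] using Finset.sum_le_card_nsmul S _ _ hsq

lemma euclideanMinimum_le_s7 {K : Type*} [Field K] [NumberField K] {C : ℝ}
    (hC : ∀ x : K, ∃ c : 𝓞 K, |((Algebra.norm ℚ (x - c) : ℚ) : ℝ)| ≤ C) :
    euclideanMinimum K ≤ C :=
  ciSup_le fun x ↦ (hC x).elim fun c hc ↦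
    ciInf_le_of_le ⟨0, Set.forall_mem_range.mpr fun _ ↦ abs_nonneg _⟩ c hc

lemma two_inv_pow_mul_rpow_half_sq {B : ℝ} (hB : 0 ≤ B) (n : ℕ) :
    ((2 : ℝ)⁻¹ ^ n * B ^ ((n : ℝ) / 2)) ^ 2 = (B / 4) ^ n := by
  rw [mul_pow, ← Real.rpow_mul_natCast hB, Nat.cast_two, div_mul_cancel₀ _ two_ne_zero,
    Real.rpow_natCast, pow_right_comm, ← mul_pow]
  ring

section CyclotomicSubfield

variable {K L : Type*} [Field K] [Field L] [Algebra K L] {t : ℕ} {ζ : L}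

lemma span_dicksonFamily_neg_one_eq_top [CharZero K] {η : K} (hζ : IsPrimitiveRoot ζ (2 ^ (t + 3)))
    (hη : algebraMap K L η = ζ - ζ⁻¹) (hgen : Algebra.adjoin ℚ {η} = ⊤) :
    Submodule.span ℚ (dicksonFamily (-1) η '' Finset.range (2 ^ (t + 1))) = ⊤ := by
  have hζ0 : ζ ≠ 0 := hζ.ne_zero (by positivity)
  have hneg : ζ ^ 2 ^ (t + 2) = -1 :=
    (hζ.pow (by positivity) (pow_succ 2 (t + 2))).eq_neg_one_of_two_right
  have hzero : (Polynomial.dickson 1 (-1 : K) (2 ^ (t + 1))).eval η = 0 := by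
    have hn0 : 2 ^ (t + 1) ≠ 0 := by positivity
    rw [← dicksonFamily_of_ne_zero _ _ hn0]
    apply (algebraMap K L).injective
    rw [map_dicksonFamily, hη, map_neg, map_one, map_zero, dicksonFamily_neg_one_sub_inv hζ0 hn0,
      (even_two.pow_of_ne_zero t.succ_ne_zero).neg_pow, inv_pow]
    have hsq : ζ ^ 2 ^ (t + 1) * ζ ^ 2 ^ (t + 1) = -1 := by
      rw [← pow_add, ← two_mul, ← pow_succ', hneg]
    field_simp
    linear_combination hsq
  have hspan := span_dicksonFamily_eq_top (a := (-1 : ℚ)) (pow_ne_zero (t + 1) two_ne_zero) hgen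
    (by simpa using hzero)
  simpa using hspan

variable [NumberField L] [IsCyclotomicExtension {2 ^ (t + 3)} ℚ L]

lemma finrank_eq_of_algebraMap_eq_sub_inv [CharZero K] {η : K}
    (hζ : IsPrimitiveRoot ζ (2 ^ (t + 3))) (hη : algebraMap K L η = ζ - ζ⁻¹)
    (hgen : Algebra.adjoin ℚ {η} = ⊤) :
    Module.finrank ℚ K = 2 ^ (t + 1) := by
  classical
  have hle : Module.finrank ℚ K ≤ 2 ^ (t + 1) := by
    have hcard := finrank_span_finset_le_card (R := ℚ)
      ((Finset.range (2 ^ (t + 1))).image (dicksonFamily (-1) η))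
    rw [Set.finrank, Finset.coe_image, span_dicksonFamily_neg_one_eq_top hζ hη hgen,
      finrank_top] at hcard
    exact hcard.trans (Finset.card_image_le.trans_eq (Finset.card_range _))
  have htwo : Module.finrank K L ≤ 2 := by
    have hadjoin : Algebra.adjoin K {ζ} = ⊤ := by
      have htop := IsCyclotomicExtension.adjoin_primitive_root_eq_top (A := ℚ) hζ
      have hsub : Algebra.adjoin ℚ {ζ} ≤ (Algebra.adjoin K {ζ}).restrictScalars ℚ :=
        Algebra.adjoin_le Algebra.subset_adjoin
      exact eq_top_iff.mpr fun y _ ↦ hsub (htop ▸ Algebra.mem_top)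
    refine finrank_le_two_of_sq_mem_span hadjoin (Submodule.mem_span_pair.mpr ⟨1, η, ?_⟩)
    rw [one_smul, Algebra.smul_def, hη, sub_mul, inv_mul_cancel₀ (hζ.ne_zero (by positivity))]
    ring
  have hL : Module.finrank ℚ L = 2 ^ (t + 1) * 2 := by
    rw [IsCyclotomicExtension.Rat.finrank (2 ^ (t + 3)), Nat.totient_prime_pow_succ Nat.prime_two]
    ring
  have htower := Module.finrank_mul_finrank ℚ K L
  nlinarith

lemma exists_sq_norm_sub_le [NumberField K] {η : 𝓞 K} (hζ : IsPrimitiveRoot ζ (2 ^ (t + 3)))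
    (hη : algebraMap K L η = ζ - ζ⁻¹) (hgen : Algebra.adjoin ℚ {(η : K)} = ⊤) (x : K) :
    ∃ c : 𝓞 K, ((Algebra.norm ℚ (x - c) : ℚ) : ℝ) ^ 2
      ≤ ((2 * 2 ^ (t + 1) - 1) / 4) ^ 2 ^ (t + 1) := by
  obtain ⟨m, hm⟩ := Nat.exists_eq_add_one_of_ne_zero (pow_ne_zero (t + 1) two_ne_zero)
  have hcoe : ∀ j, ((dicksonFamily (-1) η j : 𝓞 K) : K) = dicksonFamily (-1) (η : K) j := by
    simp [map_dicksonFamily]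
  have hx : x ∈ Submodule.span ℚ
      ((fun j ↦ ((dicksonFamily (-1) η j : 𝓞 K) : K)) '' Finset.range (2 ^ (t + 1))) := by
    simp_rw [hcoe, span_dicksonFamily_neg_one_eq_top hζ hη hgen, Submodule.mem_top]
  obtain ⟨c, e, he, hxc⟩ := exists_integer_sub_eq_sum_smul _ hx
  obtain ⟨b, hb, hlaurent⟩ :=
    exists_sum_smul_dicksonFamily_eq_sum_zpow (hζ.ne_zero (by positivity)) e m
  have hmap : algebraMap K L (x - c) = ∑ i ∈ Finset.Icc (-m : ℤ) m, b i • ζ ^ i := by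
    rw [hxc, hm, ← hlaurent]
    simp [Algebra.smul_def, hcoe, map_dicksonFamily, hη]
  have hS : (Finset.Icc (-m : ℤ) m : Set ℤ).Pairwise
      fun i j ↦ ¬ ((2 : ℕ) : ℤ) ^ (t + 2) ∣ i - j :=
    pairwise_not_dvd_sub_Icc (by rw [pow_succ]; norm_cast; omega)
  have hsq : ∑ i ∈ Finset.Icc (-m : ℤ) m, (b i : ℝ) ^ 2 ≤ (2 * 2 ^ (t + 1) - 1) / 4 := by
    have hcard : ((Finset.Icc (-m : ℤ) m).card : ℚ) = 2 * 2 ^ (t + 1) - 1 := by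
      have : (2 : ℚ) ^ (t + 1) = m + 1 := by exact_mod_cast hm
      rw [Int.card_Icc, this, show ((m : ℤ) + 1 - -m).toNat = 2 * m + 1 by omega]
      push_cast
      ring
    have := sum_sq_le_card_div_four (S := Finset.Icc (-m : ℤ) m) fun i _ ↦ (hb i).trans_le (he _)
    rw [hcard] at this
    exact_mod_cast this
  refine ⟨c, (sq_norm_le_average_pow_finrank_of_algebraMap (L := L) (x - c)).trans ?_⟩
  rw [hmap, sum_embeddings_norm_sum_zpow_sq Nat.prime_two hζ hS,
    mul_div_cancel_left₀ _ (by exact_mod_cast Module.finrank_pos.ne'),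
    finrank_eq_of_algebraMap_eq_sub_inv hζ hη hgen]
  gcongr

lemma euclideanMinimum_le_of_algebraMap_eq_sub_inv [NumberField K] {η : 𝓞 K}
    (hζ : IsPrimitiveRoot ζ (2 ^ (t + 3))) (hη : algebraMap K L η = ζ - ζ⁻¹)
    (hgen : Algebra.adjoin ℚ {(η : K)} = ⊤) :
    euclideanMinimum K
      ≤ (2 : ℝ)⁻¹ ^ 2 ^ (t + 1) * (2 * 2 ^ (t + 1) - 1) ^ ((2 : ℝ) ^ (t + 1) / 2) := by
  have hB : (0 : ℝ) ≤ 2 * 2 ^ (t + 1) - 1 := by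
    linarith [one_le_pow₀ (M₀ := ℝ) one_le_two (n := t + 1)]
  refine euclideanMinimum_le_s7 fun x ↦ ?_
  obtain ⟨c, hc⟩ := exists_sq_norm_sub_le hζ hη hgen x
  refine ⟨c, abs_le_of_sq_le_sq (hc.trans_eq ?_) (by positivity)⟩
  exact_mod_cast (two_inv_pow_mul_rpow_half_sq hB (2 ^ (t + 1))).symm

end CyclotomicSubfield

lemma adjoin_gen_eq_top {F E : Type*} [Field F] [Field E] [Algebra F E] {x : E}
    (hx : IsIntegral F x) : Algebra.adjoin F {AdjoinSimple.gen F x} = ⊤ := by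
  simpa using (IntermediateField.adjoin.powerBasis hx).adjoin_gen_eq_top

lemma isCyclotomicExtension_adjoin_simple (F : Type*) {E : Type*} [Field F] [Field E] [Algebra F E]
    {n : ℕ} [NeZero n] {ζ : E} (hζ : IsPrimitiveRoot ζ n) :
    IsCyclotomicExtension {n} F F⟮ζ⟯ := by
  change IsCyclotomicExtension {n} F F⟮ζ⟯.toSubalgebra
  rw [adjoin_simple_toSubalgebra_of_isAlgebraic
    (hζ.isIntegral (NeZero.pos n)).tower_top.isAlgebraic]
  exact hζ.adjoin_isCyclotomicExtension F

theorem euclideanMinimum_adjoin_zeta_sub_zeta_inv_le_general {E : Type*} [Field E] [CharZero E]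
    (r : ℕ) (hr : 3 ≤ r) (ζ : E) (hζ : IsPrimitiveRoot ζ (2 ^ r)) [NumberField ℚ⟮ζ - ζ⁻¹⟯] :
    euclideanMinimum ℚ⟮ζ - ζ⁻¹⟯ ≤
      (2 : ℝ)⁻¹ ^ (2 ^ (r - 2)) *
        ((2 * (2 : ℝ) ^ (r - 2) - 1) ^ (((2 : ℝ) ^ (r - 2)) / 2)) := by
  obtain ⟨t, rfl⟩ := Nat.exists_eq_add_of_le' hr
  have hint : IsIntegral ℤ (ζ - ζ⁻¹) :=
    (hζ.isIntegral (by positivity)).sub (hζ.inv.isIntegral (by positivity))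
  have hcyc : IsCyclotomicExtension {2 ^ (t + 3)} ℚ ℚ⟮ζ⟯ :=
    isCyclotomicExtension_adjoin_simple ℚ hζ
  have : NumberField ℚ⟮ζ⟯ := IsCyclotomicExtension.numberField {2 ^ (t + 3)} ℚ ℚ⟮ζ⟯
  have hle : ℚ⟮ζ - ζ⁻¹⟯ ≤ ℚ⟮ζ⟯ := adjoin_simple_le_iff.mpr
    (sub_mem (mem_adjoin_simple_self ℚ ζ) (inv_mem (mem_adjoin_simple_self ℚ ζ)))
  let _ : Algebra ℚ⟮ζ - ζ⁻¹⟯ ℚ⟮ζ⟯ := (inclusion hle).toRingHom.toAlgebra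
  let η : 𝓞 ℚ⟮ζ - ζ⁻¹⟯ := ⟨AdjoinSimple.gen ℚ (ζ - ζ⁻¹),
    (isIntegral_algebraMap_iff (algebraMap ℚ⟮ζ - ζ⁻¹⟯ E).injective).mp hint⟩
  have hζ' : IsPrimitiveRoot (AdjoinSimple.gen ℚ ζ) (2 ^ (t + 3)) :=
    IsPrimitiveRoot.coe_submonoidClass_iff.mp hζ
  have hη : algebraMap ℚ⟮ζ - ζ⁻¹⟯ ℚ⟮ζ⟯ η = AdjoinSimple.gen ℚ ζ - (AdjoinSimple.gen ℚ ζ)⁻¹ := rfl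
  exact euclideanMinimum_le_of_algebraMap_eq_sub_inv hζ' hη (adjoin_gen_eq_top hint.tower_top)

theorem euclideanMinimum_adjoin_zeta_sub_zeta_inv_le
    (r : ℕ) (hr : 3 ≤ r) (ζ : ℂ) (hζ : IsPrimitiveRoot ζ (2 ^ r))
    [NumberField ℚ⟮ζ - ζ⁻¹⟯] :
    euclideanMinimum ℚ⟮ζ - ζ⁻¹⟯ ≤
      (2 : ℝ)⁻¹ ^ (2 ^ (r - 2)) *
        ((2 * (2 : ℝ) ^ (r - 2) - 1) ^ (((2 : ℝ) ^ (r - 2)) / 2)) :=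
  euclideanMinimum_adjoin_zeta_sub_zeta_inv_le_general r hr ζ hζ
end
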